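/- Let X_A ⊂ S^ℤ be a topologically mixing subshift of finite type and μ = μ_{(P_n : n ∈ ℤ)} a Markov measure on X_A satisfying the Doeblin condition. If the left shift T is nonsingular and conservative with respect to μ, and the limit lim_{|n|→∞} P_n does not exist (i.e., it is not the case that lim_{n→∞} P_n and lim_{n→−∞} P_n both exist and are equal, entrywise), then T is of Krieger type III₁, i.e., T is ergodic with respect to μ and its ratio set e(T) equals all of ℝ. -/

import Mathlib

/-!
A *swap* is a pair of admissible blocks `w`, `v` of equal length with the same end points (`Sw`).
Replacing `w` by `v` at a site `a` is a nonsingular partial transformation whose logarithmic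
Radon–Nikodym derivative is the constant `Rs a`, the *gain* of the swap at `a` (`MC.rep_measure`).
The proof studies how these replacements act on the Maharam extension
`(x, t) ↦ (T x, t - c₁(x))` of the shift, where `cₙ = log dμ∘Tⁿ/dμ`.

* Nonsingularity: far replacements hardly change the measurable function `c₁`, while replacing the
  block at site `a` changes it by `Rs (a - 1) - Rs a`. Hence gains vary slowly: this difference
  tends to `0` as `|a| → ∞` (`MC.slow`).
* Conservativity passes to the Maharam extension (`Coc.conservative`), so the cocycle is recurrent
  (`Coc.recurrent`).
* Let `F` be an invariant function on the extension, bounded and Lipschitz along the fibres. By a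
  ratio maximal inequality (`garsia_ratio`), along almost every orbit `F` is close in weighted
  average to functions of finitely many coordinates (`Obs.approx`). The orbits of a point and of
  its modification by a swap agree near the origin after a long time, and their fibre coordinates
  differ by `Rs a - Rs (a - n)` at time `n`. Choosing times at which `Rs (a - n)` is close to some
  `c₀` yields `F (swap x, t + c₀ - Rs a) = F (x, t)`, with `c₀` independent of `a` (`MC.star`).
* Ergodicity: for `F` the indicator of an invariant set, the set is invariant under all swaps, and
  such sets are trivial because of the mixing of the chain (`MC.trivial_of_rep_inv`).
* If the gains of one swap do not converge as `|a| → ∞`, then, varying slowly, they cluster along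
  a whole interval of values `r`. Since swaps at far sites hardly change `x`, each translation by
  `c₀ - r` preserves `F`, so `F` is constant on fibres (`MC.const_of_interval`). Applied to the best
  match between `t` and the cocycle values at returns to a set `E` (`bestMatch`), this shows that
  every real number is an essential value (`MC.essential`).
* Divergence of `P` produces such a swap (`MC.exists_interval`). If the gains of a swap have
  limits at `+∞` and `-∞`, these agree: otherwise the Hellinger affinity of `μ` and its `n`-th image
  decays exponentially, so `cₙ → -∞`, contradicting recurrence (`MC.limits_eq`). If all gains
  converge, then so do the laws of the first step of all Markov bridges, which are uniformly close
  to `P` when the bridge is long; hence `P` converges (`MC.tendsto_of_gains`).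
-/


open MeasureTheory Filter Topology

namespace MarkovSFT

/-- The space of two-sided sequences over `S`. -/
abbrev Seq (S : Type*) := ℤ → S

/-- The shift by `n`: `(T^n x)_k = x_{k+n}`. -/
def shiftZ {S : Type*} (n : ℤ) (x : Seq S) : Seq S := fun k => x (k + n)

/-- The left shift `T`. -/
def shiftMap {S : Type*} : Seq S → Seq S := shiftZ 1

/-- The subshift of finite type determined by the adjacency matrix `A`. -/
def SFT {S : Type*} (A : S → S → Bool) : Set (Seq S) :=
  {x | ∀ n : ℤ, A (x n) (x (n + 1)) = true}

/-- `A` is primitive: all entries of `A^M` are positive for some `M ≥ 1`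
(expressed via the existence of admissible paths of length `M`). -/
def IsPrimitive {S : Type*} (A : S → S → Bool) : Prop :=
  ∃ M : ℕ, 1 ≤ M ∧ ∀ s t : S, ∃ u : ℕ → S,
    u 0 = s ∧ u M = t ∧ ∀ i < M, A (u i) (u (i + 1)) = true

/-- A stochastic matrix over the finite state space `S`. -/
def IsStochastic {S : Type*} [Fintype S] (P : S → S → ℝ) : Prop :=
  (∀ s t, 0 ≤ P s t) ∧ ∀ s, ∑ t, P s t = 1

/-- The Doeblin condition for the family of transition matrices `P` relative to `A`. -/
def Doeblin {S : Type*} (A : S → S → Bool) (P : ℤ → S → S → ℝ) : Prop :=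
  ∃ δ : ℝ, 0 < δ ∧ ∀ (n : ℤ) (s t : S), δ ≤ P n s t ↔ A s t = true

/-- `μ` is the Markov measure on the SFT `X_A` determined by the transition
matrices `(P n)` and coordinate distributions `(π n)`. -/
structure IsMarkovMeasure {S : Type*} [Fintype S] [MeasurableSpace S]
    (μ : Measure (Seq S)) (A : S → S → Bool)
    (P : ℤ → S → S → ℝ) (π : ℤ → S → ℝ) : Prop where
  isProb : IsProbabilityMeasure μ
  stochastic : ∀ n, IsStochastic (P n)
  compat : ∀ (n : ℤ) (s t : S), A s t = false → P n s t = 0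
  dist_nonneg : ∀ (n : ℤ) (s : S), 0 ≤ π n s
  dist_sum : ∀ n : ℤ, ∑ s, π n s = 1
  consistent : ∀ (n : ℤ) (t : S), ∑ s, π n s * P n s t = π (n + 1) t
  supp : μ (SFT A) = 1
  cylinder : ∀ (k : ℤ) (m : ℕ) (w : Fin (m + 1) → S),
    μ {x | ∀ i : Fin (m + 1), x (k + 1 + ((i : ℕ) : ℤ)) = w i}
      = ENNReal.ofReal (π (k + 1) (w 0) *
          ∏ i : Fin m, P (k + 1 + ((i : ℕ) : ℤ)) (w i.castSucc) (w i.succ))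

/-- The left shift is nonsingular with respect to `μ`:
`μ` and `μ ∘ T⁻¹` are mutually absolutely continuous. -/
def ShiftNonsingular {S : Type*} [Fintype S] [MeasurableSpace S]
    (μ : Measure (Seq S)) : Prop :=
  Measure.map (shiftMap (S := S)) μ ≪ μ ∧ μ ≪ Measure.map (shiftMap (S := S)) μ

/-- The left shift is conservative with respect to `μ`. -/
def ShiftConservative {S : Type*} [Fintype S] [MeasurableSpace S]
    (μ : Measure (Seq S)) : Prop :=
  ∀ E : Set (Seq S), MeasurableSet E → 0 < μ E →
    ∃ n : ℕ, 1 ≤ n ∧ 0 < μ (E ∩ (shiftMap (S := S))^[n] ⁻¹' E)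

/-- An element of the pseudo full-group `[[T]]` of the shift, together with
(a version of) the logarithm of its Radon–Nikodym derivative `log dμ∘V/dμ`. -/
structure PFG {S : Type*} [Fintype S] [MeasurableSpace S] (μ : Measure (Seq S)) where
  dom : Set (Seq S)
  toFun : Seq S → Seq S
  logDeriv : Seq S → ℝ
  meas_dom : MeasurableSet dom
  meas_toFun : Measurable toFun
  meas_logDeriv : Measurable logDeriv
  injOn : Set.InjOn toFun dom
  orbit : ∀ᵐ x ∂μ.restrict dom, ∃ n : ℤ, toFun x = shiftZ n x
  deriv_spec : ∀ E : Set (Seq S), E ⊆ dom → MeasurableSet E →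
    μ (toFun '' E) = ∫⁻ x in E, ENNReal.ofReal (Real.exp (logDeriv x)) ∂μ

/-- `r` is an essential value of (the Radon–Nikodym cocycle of) the shift on `(X, μ)`. -/
def IsEssentialValue {S : Type*} [Fintype S] [MeasurableSpace S]
    (μ : Measure (Seq S)) (r : ℝ) : Prop :=
  ∀ E : Set (Seq S), MeasurableSet E → 0 < μ E → ∀ ε : ℝ, 0 < ε →
    ∃ g : PFG μ,
      0 < μ (E ∩ g.dom ∩ g.toFun ⁻¹' E ∩ {x | |g.logDeriv x - r| < ε})

end MarkovSFT

set_option linter.unusedVariables false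
set_option linter.unusedSectionVars false
set_option linter.deprecated false

namespace MarkovSFT

/-! ### Cylinder sets -/

section Cylinders

variable {S : Type*}

/-- The cylinder of all sequences agreeing with `x` on the integer interval `[a, b]`. -/
def cyl (a b : ℤ) (x : Seq S) : Set (Seq S) := {y | ∀ i, a ≤ i → i ≤ b → y i = x i}

/-- Membership in `Z` is determined by the coordinates in `[a, b]`. -/
def DepOn (a b : ℤ) (Z : Set (Seq S)) : Prop := ∀ x ∈ Z, cyl a b x ⊆ Z

/-- The word read off by `x` on the window `[a, b]`. -/
def res (a b : ℤ) (x : Seq S) : Set.Icc a b → S := fun i => x i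

lemma mem_cyl_self (a b : ℤ) (x : Seq S) : x ∈ cyl a b x := fun _ _ _ => rfl

lemma mem_cyl_comm {a b : ℤ} {x y : Seq S} : y ∈ cyl a b x ↔ x ∈ cyl a b y :=
  ⟨fun h i h1 h2 => (h i h1 h2).symm, fun h i h1 h2 => (h i h1 h2).symm⟩

lemma cyl_eq_of_mem {a b : ℤ} {x y : Seq S} (h : y ∈ cyl a b x) : cyl a b y = cyl a b x := by
  ext z
  exact ⟨fun hz i h1 h2 => (hz i h1 h2).trans (h i h1 h2),
    fun hz i h1 h2 => (hz i h1 h2).trans (h i h1 h2).symm⟩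

lemma cyl_anti {a b a' b' : ℤ} (ha : a' ≤ a) (hb : b ≤ b') (x : Seq S) :
    cyl a' b' x ⊆ cyl a b x :=
  fun _ hy i h1 h2 => hy i (ha.trans h1) (h2.trans hb)

lemma cyl_eq_res (a b : ℤ) (x : Seq S) : cyl a b x = res a b ⁻¹' {res a b x} := by
  ext y
  simp only [cyl, Set.mem_ofPred_eq, Set.mem_preimage, Set.mem_singleton_iff]
  constructor
  · intro h; funext i; exact h i i.2.1 i.2.2
  · intro h i h1 h2; exact congrFun h ⟨i, h1, h2⟩

lemma DepOn.mono {a b a' b' : ℤ} {Z : Set (Seq S)} (h : DepOn a b Z) (ha : a' ≤ a)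
    (hb : b ≤ b') : DepOn a' b' Z :=
  fun x hx => (cyl_anti ha hb x).trans (h x hx)

lemma DepOn.compl {a b : ℤ} {Z : Set (Seq S)} (h : DepOn a b Z) : DepOn a b Zᶜ :=
  fun x hx y hy hyZ => hx (h y hyZ (mem_cyl_comm.1 hy))

lemma DepOn.inter {a b : ℤ} {Z W : Set (Seq S)} (h : DepOn a b Z) (h' : DepOn a b W) :
    DepOn a b (Z ∩ W) :=
  fun x hx y hy => ⟨h x hx.1 hy, h' x hx.2 hy⟩

lemma depOn_cyl (a b : ℤ) (x : Seq S) : DepOn a b (cyl a b x) :=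
  fun y hy => (cyl_eq_of_mem hy).le

variable [Fintype S] [MeasurableSpace S] [MeasurableSingletonClass S]

lemma measurable_res (a b : ℤ) : Measurable (res a b : Seq S → _) :=
  measurable_pi_lambda _ fun i => measurable_pi_apply _

lemma measurableSet_cyl (a b : ℤ) (x : Seq S) : MeasurableSet (cyl a b x) := by
  rw [cyl_eq_res]
  exact measurable_res a b (measurableSet_singleton _)

lemma DepOn.eq_preimage {a b : ℤ} {Z : Set (Seq S)} (h : DepOn a b Z) :
    Z = res a b ⁻¹' (res a b '' Z) := by
  refine Set.Subset.antisymm (Set.subset_preimage_image _ _) ?_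
  rintro y ⟨x, hx, hxy⟩
  refine h x hx ?_
  rw [cyl_eq_res]; exact hxy.symm

lemma DepOn.measurableSet {a b : ℤ} {Z : Set (Seq S)} (h : DepOn a b Z) : MeasurableSet Z := by
  rw [h.eq_preimage]
  exact measurable_res a b (Set.toFinite _).measurableSet

lemma measure_eq_sum_res (ν : Measure (Seq S)) (a b : ℤ) (Z : Set (Seq S)) :
    ν Z = ∑ r : Set.Icc a b → S, ν (Z ∩ res a b ⁻¹' {r}) := by
  classical
  have hU : (⋃ r ∈ (Finset.univ : Finset (Set.Icc a b → S)), res a b ⁻¹' {r}) = Set.univ := by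
    ext x; simp
  have := measure_biUnion_finset (μ := ν.restrict Z)
    (s := (Finset.univ : Finset (Set.Icc a b → S))) (f := fun r => res a b ⁻¹' {r})
    (by
      intro r _ r' _ hrr'
      exact Disjoint.preimage _ (Set.disjoint_singleton.2 hrr'))
    (fun r _ => measurable_res a b (measurableSet_singleton _))
  rw [hU, Measure.restrict_apply_univ] at this
  rw [this]
  refine Finset.sum_congr rfl fun r _ => ?_
  rw [Measure.restrict_apply (measurable_res a b (measurableSet_singleton _)), Set.inter_comm]

/-- An inequality between measures on the cylinders of a window passes to all sets depending
on that window. -/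
lemma DepOn.measure_le {a b : ℤ} {Z : Set (Seq S)} (h : DepOn a b Z) {ν₁ ν₂ : Measure (Seq S)}
    (hle : ∀ x ∈ Z, ν₁ (cyl a b x) ≤ ν₂ (cyl a b x)) : ν₁ Z ≤ ν₂ Z := by
  rw [measure_eq_sum_res ν₁ a b, measure_eq_sum_res ν₂ a b]
  refine Finset.sum_le_sum fun r _ => ?_
  by_cases hr : ∃ x ∈ Z, res a b x = r
  · obtain ⟨x, hx, rfl⟩ := hr
    have : Z ∩ res a b ⁻¹' {res a b x} = cyl a b x := by
      rw [← cyl_eq_res]; exact Set.inter_eq_right.2 (h x hx)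
    rw [this]; exact hle x hx
  · have : Z ∩ res a b ⁻¹' {r} = ∅ := by
      ext x; simp only [Set.mem_inter_iff, Set.mem_preimage, Set.mem_singleton_iff,
        Set.mem_empty_iff_false, iff_false, not_and]
      exact fun hx hxr => hr ⟨x, hx, hxr⟩
    simp [this]

lemma exists_depOn_of_mem_measurableCylinders {Z : Set (Seq S)}
    (hZ : Z ∈ measurableCylinders (fun _ : ℤ => S)) (K₀ : ℕ) :
    ∃ K : ℕ, K₀ ≤ K ∧ DepOn (-(K : ℤ)) K Z := by
  obtain ⟨s, B, -, rfl⟩ := (mem_measurableCylinders _).1 hZ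
  refine ⟨K₀ + ∑ i ∈ s, i.natAbs, by omega, ?_⟩
  intro x hx y hy
  rw [mem_cylinder] at hx ⊢
  have : s.restrict y = s.restrict x := by
    funext i
    have h1 : (i : ℤ).natAbs ≤ ∑ i ∈ s, i.natAbs :=
      Finset.single_le_sum (f := fun i : ℤ => i.natAbs) (fun _ _ => Nat.zero_le _) i.2
    refine hy i ?_ ?_ <;> omega
  rwa [this]

/-- Finite measures agreeing on all large centred cylinders coincide. -/
lemma measure_ext_cyl {ν₁ ν₂ : Measure (Seq S)} [IsFiniteMeasure ν₁] (K₀ : ℕ)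
    (h : ∀ (K : ℕ) (x : Seq S), K₀ ≤ K → ν₁ (cyl (-(K : ℤ)) K x) = ν₂ (cyl (-(K : ℤ)) K x)) :
    ν₁ = ν₂ := by
  have key : ∀ Z ∈ measurableCylinders (fun _ : ℤ => S), ν₁ Z = ν₂ Z := by
    intro Z hZ
    obtain ⟨K, hK, hdep⟩ := exists_depOn_of_mem_measurableCylinders hZ K₀
    exact le_antisymm (hdep.measure_le fun x _ => (h K x hK).le)
      (hdep.measure_le fun x _ => (h K x hK).ge)
  exact ext_of_generate_finite _ generateFrom_measurableCylinders.symm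
    isPiSystem_measurableCylinders key (key _ (univ_mem_measurableCylinders _))

/-- Measurable sets are approximated by sets depending on finitely many coordinates. -/
lemma exists_depOn_approx (ν : Measure (Seq S)) [IsFiniteMeasure ν] {Z : Set (Seq S)}
    (hZ : MeasurableSet Z) {η : ℝ} (hη : 0 < η) :
    ∃ (K : ℕ) (C : Set (Seq S)), DepOn (-(K : ℤ)) K C ∧ ν (symmDiff Z C) < ENNReal.ofReal η := by
  obtain ⟨C, hC, h⟩ := (Measure.MeasureDense.of_generateFrom_isSetAlgebra_finite ν
    (isSetAlgebra_measurableCylinders (α := fun _ : ℤ => S))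
    generateFrom_measurableCylinders.symm).approx Z hZ (measure_ne_top _ _) η hη
  obtain ⟨K, -, hK⟩ := exists_depOn_of_mem_measurableCylinders hC 0
  exact ⟨K, C, hK, h⟩

end Cylinders

/-! ### Markov measures and block replacement -/

section Markov

variable {S : Type*}

/-- The transition weight of `x` along the window `[a, b]`. -/
noncomputable def pr (P : ℤ → S → S → ℝ) (a b : ℤ) (x : Seq S) : ℝ :=
  ∏ i ∈ Finset.Ico a b, P i (x i) (x (i + 1))

lemma pr_split (P : ℤ → S → S → ℝ) {a b c : ℤ} (hab : a ≤ b) (hbc : b ≤ c) (x : Seq S) :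
    pr P a c x = pr P a b x * pr P b c x := by
  unfold pr
  rw [← Finset.prod_union (Finset.Ico_disjoint_Ico_consecutive a b c),
    Finset.Ico_union_Ico_eq_Ico hab hbc]

lemma pr_congr (P : ℤ → S → S → ℝ) {a b : ℤ} {x y : Seq S} (h : y ∈ cyl a b x) :
    pr P a b y = pr P a b x := by
  unfold pr
  refine Finset.prod_congr rfl fun i hi => ?_
  rw [Finset.mem_Ico] at hi
  rw [h i hi.1 (by omega), h (i + 1) (by omega) (by omega)]

lemma pr_self (P : ℤ → S → S → ℝ) (a : ℤ) (x : Seq S) : pr P a a x = 1 := by simp [pr]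

lemma pr_shift (P : ℤ → S → S → ℝ) (a b n : ℤ) (x : Seq S) :
    pr (fun k => P (k - n)) a b x = pr P (a - n) (b - n) (shiftZ n x) := by
  unfold pr shiftZ
  refine Finset.prod_bij (fun i _ => i - n) ?_ ?_ ?_ ?_
  · intro i hi; rw [Finset.mem_Ico] at hi ⊢; omega
  · intro i _ j _ hij; simpa using hij
  · intro j hj; rw [Finset.mem_Ico] at hj; exact ⟨j + n, by rw [Finset.mem_Ico]; omega, by ring⟩
  · intro i _
    rw [show i - n + n = i by ring, show i - n + 1 + n = i + 1 by ring]

/-- All transitions of `x` in the window `[a, b]` are allowed by `A`. -/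
def Adm (A : S → S → Bool) (a b : ℤ) (x : Seq S) : Prop :=
  ∀ i, a ≤ i → i < b → A (x i) (x (i + 1)) = true

open Classical in
/-- The sequence obtained from `x` by writing the coordinates of `v` on the window `[a, b]`. -/
noncomputable def rep (a b : ℤ) (v x : Seq S) : Seq S :=
  fun i => if a ≤ i ∧ i ≤ b then v i else x i

lemma rep_of_mem {a b i : ℤ} (h1 : a ≤ i) (h2 : i ≤ b) (v x : Seq S) : rep a b v x i = v i :=
  if_pos ⟨h1, h2⟩

lemma rep_of_lt {a b i : ℤ} (h1 : i < a) (v x : Seq S) : rep a b v x i = x i :=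
  if_neg (by omega)

lemma rep_of_gt {a b i : ℤ} (h1 : b < i) (v x : Seq S) : rep a b v x i = x i :=
  if_neg (by omega)

lemma rep_mem_cyl (a b : ℤ) (v x : Seq S) : rep a b v x ∈ cyl a b v :=
  fun _ h1 h2 => rep_of_mem h1 h2 v x

/-- A Markov measure with a uniform lower bound `δ` on allowed transitions, all of whose states
are connected by allowed paths of length `M`. Cylinders are indexed by integer windows. -/
structure MC [Fintype S] [MeasurableSpace S] (μ : Measure (Seq S)) (A : S → S → Bool)
    (P : ℤ → S → S → ℝ) (π : ℤ → S → ℝ) (δ : ℝ) (M : ℕ) : Prop where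
  prob : IsProbabilityMeasure μ
  nonneg : ∀ n s t, 0 ≤ P n s t
  sum_one : ∀ n s, ∑ t, P n s t = 1
  zero : ∀ n s t, A s t = false → P n s t = 0
  ge : ∀ n s t, A s t = true → δ ≤ P n s t
  δpos : 0 < δ
  path : ∀ s t, ∃ u : ℕ → S, u 0 = s ∧ u M = t ∧ ∀ i < M, A (u i) (u (i + 1)) = true
  Mpos : 1 ≤ M
  π_nonneg : ∀ n s, 0 ≤ π n s
  π_sum : ∀ n, ∑ s, π n s = 1
  cyl : ∀ (a b : ℤ) (x : Seq S), a ≤ b →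
    μ (cyl a b x) = ENNReal.ofReal (π a (x a) * pr P a b x)

variable [Fintype S] [MeasurableSpace S] [MeasurableSingletonClass S]
  {μ : Measure (Seq S)} {A : S → S → Bool} {P : ℤ → S → S → ℝ} {π : ℤ → S → ℝ} {δ : ℝ} {M : ℕ}

lemma measurable_shiftZ (n : ℤ) : Measurable (shiftZ n : Seq S → Seq S) :=
  measurable_pi_lambda _ fun i => measurable_pi_apply _

lemma shiftZ_add (m n : ℤ) (x : Seq S) : shiftZ m (shiftZ n x) = shiftZ (m + n) x := by
  funext k; simp only [shiftZ]; congr 1; ring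

lemma shiftZ_zero (x : Seq S) : shiftZ 0 x = x := by
  funext k; simp [shiftZ]

lemma measurable_rep (a b : ℤ) (v : Seq S) : Measurable (rep a b v) := by
  refine measurable_pi_lambda _ fun i => ?_
  by_cases h : a ≤ i ∧ i ≤ b
  · simp only [rep, if_pos h]; exact measurable_const
  · simp only [rep, if_neg h]; exact measurable_pi_apply i

lemma MC.le_one (h : MC μ A P π δ M) (n : ℤ) (s t : S) : P n s t ≤ 1 := by
  rw [← h.sum_one n s]
  exact Finset.single_le_sum (fun t _ => h.nonneg n s t) (Finset.mem_univ t)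

lemma MC.π_le_one (h : MC μ A P π δ M) (n : ℤ) (s : S) : π n s ≤ 1 := by
  rw [← h.π_sum n]
  exact Finset.single_le_sum (fun t _ => h.π_nonneg n t) (Finset.mem_univ s)

lemma MC.pr_nonneg (h : MC μ A P π δ M) (a b : ℤ) (x : Seq S) : 0 ≤ pr P a b x :=
  Finset.prod_nonneg fun i _ => h.nonneg _ _ _

lemma MC.pr_le_one (h : MC μ A P π δ M) (a b : ℤ) (x : Seq S) : pr P a b x ≤ 1 :=
  Finset.prod_le_one (fun i _ => h.nonneg _ _ _) fun i _ => h.le_one _ _ _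

lemma MC.pr_ge (h : MC μ A P π δ M) {a b : ℤ} {x : Seq S} (hx : Adm A a b x) :
    δ ^ (b - a).toNat ≤ pr P a b x := by
  unfold pr
  rw [← Int.card_Ico, ← Finset.prod_const]
  refine Finset.prod_le_prod (fun i _ => h.δpos.le) fun i hi => ?_
  rw [Finset.mem_Ico] at hi
  exact h.ge _ _ _ (hx i hi.1 hi.2)

lemma MC.pr_pos (h : MC μ A P π δ M) {a b : ℤ} {x : Seq S} (hx : Adm A a b x) :
    0 < pr P a b x :=
  lt_of_lt_of_le (pow_pos h.δpos _) (h.pr_ge hx)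

lemma MC.pr_eq_zero (h : MC μ A P π δ M) {a b : ℤ} {x : Seq S} (hx : ¬ Adm A a b x) :
    pr P a b x = 0 := by
  unfold Adm at hx; push Not at hx
  obtain ⟨i, h1, h2, h3⟩ := hx
  exact Finset.prod_eq_zero (Finset.mem_Ico.2 ⟨h1, h2⟩) (h.zero _ _ _ (by simpa using h3))

lemma MC.nonempty (h : MC μ A P π δ M) : Nonempty S := by
  by_contra hS
  rw [not_nonempty_iff] at hS
  have := h.π_sum 0
  simp at this

/-- A lower bound for the one-dimensional marginals. -/
noncomputable def kap0 (S : Type*) [Fintype S] (δ : ℝ) (M : ℕ) : ℝ := δ ^ M / Fintype.card S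

lemma MC.kap0_pos (h : MC μ A P π δ M) : 0 < kap0 S δ M := by
  have := h.nonempty
  exact div_pos (pow_pos h.δpos _) (by exact_mod_cast Fintype.card_pos)

lemma MC.π_ge (h : MC μ A P π δ M) (n : ℤ) (t : S) : kap0 S δ M ≤ π n t := by
  have := h.nonempty
  have hc : (0 : ℝ) < Fintype.card S := by exact_mod_cast Fintype.card_pos
  obtain ⟨s, hs⟩ : ∃ s, (1 : ℝ) / Fintype.card S ≤ π (n - M) s := by
    by_contra hcon
    push Not at hcon
    have := Finset.sum_lt_sum_of_nonempty (s := (Finset.univ : Finset S))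
      Finset.univ_nonempty (fun s _ => hcon s)
    rw [h.π_sum] at this
    simp [hc.ne'] at this
  obtain ⟨u, hu0, huM, hu⟩ := h.path s t
  let x : Seq S := fun i => u (i - (n - M)).toNat
  have hx : Adm A (n - M) n x := by
    intro i h1 h2
    have e : (i + 1 - (n - M)).toNat = (i - (n - M)).toNat + 1 := by omega
    simp only [x, e]
    exact hu _ (by omega)
  have h1 := h.cyl (n - M) n x (by omega)
  have h2 := h.cyl n n x le_rfl
  have hxn : x n = t := by simp [x, huM]
  have hx0 : x (n - M) = s := by simp [x, hu0]
  have h3 : μ (MarkovSFT.cyl (n - M) n x) ≤ μ (MarkovSFT.cyl n n x) :=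
    measure_mono (cyl_anti (by omega) le_rfl x)
  rw [h1, h2, pr_self, mul_one, hxn, hx0, ENNReal.ofReal_le_ofReal_iff (h.π_nonneg _ _)] at h3
  refine le_trans ?_ h3
  have h4 := h.pr_ge hx
  have e : (n - (n - (M : ℤ))).toNat = M := by omega
  rw [e] at h4
  calc kap0 S δ M = (1 / Fintype.card S) * δ ^ M := by unfold kap0; ring
    _ ≤ _ := mul_le_mul hs h4 (pow_nonneg h.δpos.le _) (h.π_nonneg _ _)

lemma MC.measure_cyl_eq_zero (h : MC μ A P π δ M) {a b : ℤ} {x : Seq S} (hab : a ≤ b)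
    (hx : ¬ Adm A a b x) : μ (MarkovSFT.cyl a b x) = 0 := by
  rw [h.cyl a b x hab, h.pr_eq_zero hx]; simp

lemma MC.of_isMarkov {A : S → S → Bool} (hA : IsPrimitive A) (hμ : IsMarkovMeasure μ A P π)
    (hD : Doeblin A P) : ∃ δ M, MC μ A P π δ M := by
  obtain ⟨M, hM, hpath⟩ := hA
  obtain ⟨δ, hδ, hge⟩ := hD
  refine ⟨δ, M, hμ.isProb, fun n => (hμ.stochastic n).1, fun n => (hμ.stochastic n).2,
    fun n s t => hμ.compat n s t, fun n s t hst => (hge n s t).2 hst, hδ, hpath, hM,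
    hμ.dist_nonneg, hμ.dist_sum, ?_⟩
  intro a b x hab
  obtain ⟨m, rfl⟩ : ∃ m : ℕ, b = a + m := ⟨(b - a).toNat, by omega⟩
  have h := hμ.cylinder (a - 1) m (fun i => x (a + (i : ℕ)))
  have e : a - 1 + 1 = a := by ring
  rw [e] at h
  have e1 : {y : Seq S | ∀ i : Fin (m + 1), y (a + ((i : ℕ) : ℤ)) = x (a + (i : ℕ))}
      = MarkovSFT.cyl a (a + m) x := by
    ext y
    simp only [Set.mem_ofPred_eq, MarkovSFT.cyl]
    constructor
    · intro hy i h1 h2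
      have := hy ⟨(i - a).toNat, by omega⟩
      have e2 : a + (((i - a).toNat : ℕ) : ℤ) = i := by omega
      simpa only [e2] using this
    · intro hy i
      exact hy _ (by omega) (by omega)
  rw [e1] at h
  rw [h]
  congr 2
  · simp
  · unfold pr
    simp only [Fin.val_castSucc, Fin.val_succ]
    rw [Fin.prod_univ_eq_prod_range
      (fun i : ℕ => P (a + (i : ℤ)) (x (a + (i : ℤ))) (x (a + ((i + 1 : ℕ) : ℤ)))) m]
    refine Finset.prod_bij (fun i _ => a + (i : ℤ)) ?_ ?_ ?_ ?_
    · intro i hi; simp at hi ⊢; omega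
    · intro i _ j _ hij; omega
    · intro j hj; simp at hj; exact ⟨(j - a).toNat, by simp; omega, by omega⟩
    · intro i _; congr 2; push_cast; ring

lemma MC.shift (h : MC μ A P π δ M) (n : ℤ) :
    MC (μ.map (shiftZ (-n))) A (fun k => P (k - n)) (fun k => π (k - n)) δ M := by
  have := h.prob
  refine ⟨Measure.isProbabilityMeasure_map (measurable_shiftZ _).aemeasurable,
    fun k => h.nonneg _, fun k => h.sum_one _, fun k => h.zero _, fun k => h.ge _, h.δpos, h.path,
    h.Mpos, fun k => h.π_nonneg _, fun k => h.π_sum _, ?_⟩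
  intro a b x hab
  rw [Measure.map_apply (measurable_shiftZ _) (measurableSet_cyl a b x), pr_shift]
  have e : shiftZ (-n) ⁻¹' (MarkovSFT.cyl a b x)
      = MarkovSFT.cyl (a - n) (b - n) (shiftZ n x) := by
    ext y
    simp only [Set.mem_preimage, MarkovSFT.cyl, Set.mem_ofPred_eq, shiftZ]
    constructor
    · intro hy i h1 h2
      have := hy (i + n) (by omega) (by omega)
      rwa [show i + n + -n = i by ring] at this
    · intro hy i h1 h2
      have := hy (i + -n) (by omega) (by omega)
      rwa [show i + -n + n = i by ring] at this
  rw [e, h.cyl _ _ _ (by omega)]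
  simp [shiftZ]

end Markov

/-! ### Swaps of admissible blocks -/

section Swaps

variable {S : Type*}

/-- A swap: two admissible blocks on the window `[a, b]` with the same end points, so that one can be
replaced by the other inside an admissible sequence. -/
structure Sw (A : S → S → Bool) (a b : ℤ) (w v : Seq S) : Prop where
  le : a ≤ b
  adm_w : Adm A a b w
  adm_v : Adm A a b v
  left : w a = v a
  right : w b = v b

lemma Sw.symm {A : S → S → Bool} {a b : ℤ} {w v : Seq S} (h : Sw A a b w v) : Sw A a b v w :=
  ⟨h.le, h.adm_v, h.adm_w, h.left.symm, h.right.symm⟩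

lemma Sw.shift {A : S → S → Bool} {a b : ℤ} {w v : Seq S} (h : Sw A a b w v) (n : ℤ) :
    Sw A (a + n) (b + n) (shiftZ (-n) w) (shiftZ (-n) v) := by
  have key : ∀ u : Seq S, Adm A a b u → Adm A (a + n) (b + n) (shiftZ (-n) u) := by
    intro u hu i h1 h2
    have := hu (i + -n) (by omega) (by omega)
    simp only [shiftZ]
    rwa [show i + 1 + -n = i + -n + 1 by ring]
  refine ⟨by linarith [h.le], key _ h.adm_w, key _ h.adm_v, ?_, ?_⟩
  · simp [shiftZ, h.left]
  · simp [shiftZ, h.right]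

lemma rep_of_le {A : S → S → Bool} {a b i : ℤ} {w v x : Seq S} (h : Sw A a b w v)
    (hx : x ∈ cyl a b w) (hi : i ≤ a) : rep a b v x i = x i := by
  rcases lt_or_eq_of_le hi with h1 | rfl
  · exact rep_of_lt h1 v x
  · rw [rep_of_mem le_rfl h.le, hx i le_rfl h.le, h.left]

lemma rep_of_ge {A : S → S → Bool} {a b i : ℤ} {w v x : Seq S} (h : Sw A a b w v)
    (hx : x ∈ cyl a b w) (hi : b ≤ i) : rep a b v x i = x i := by
  rcases lt_or_eq_of_le hi with h1 | rfl
  · exact rep_of_gt h1 v x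
  · rw [rep_of_mem h.le le_rfl, hx b h.le le_rfl, h.right]

lemma rep_rep {a b : ℤ} {w x : Seq S} (v : Seq S) (hx : x ∈ cyl a b w) :
    rep a b w (rep a b v x) = x := by
  funext i
  by_cases hi : a ≤ i ∧ i ≤ b
  · rw [rep_of_mem hi.1 hi.2, hx i hi.1 hi.2]
  · simp only [rep, if_neg hi]

/-- The logarithmic weight gained when the block `w` on `[a, b]` is replaced by `v`. -/
noncomputable def RR (P : ℤ → S → S → ℝ) (a b : ℤ) (w v : Seq S) : ℝ :=
  Real.log (pr P a b v) - Real.log (pr P a b w)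

variable [Fintype S] [MeasurableSpace S] [MeasurableSingletonClass S]
  {μ : Measure (Seq S)} {A : S → S → Bool} {P : ℤ → S → S → ℝ} {π : ℤ → S → ℝ} {δ : ℝ} {M : ℕ}

/-- Replacing the block `w` by `v` multiplies the measure by the ratio of the weights. -/
lemma MC.rep_measure (h : MC μ A P π δ M) {a b : ℤ} {w v : Seq S} (hs : Sw A a b w v)
    {E : Set (Seq S)} (hE : MeasurableSet E) :
    ENNReal.ofReal (pr P a b v) * μ (MarkovSFT.cyl a b w ∩ rep a b v ⁻¹' E)
      = ENNReal.ofReal (pr P a b w) * μ (MarkovSFT.cyl a b v ∩ E) := by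
  have := h.prob
  have main : ENNReal.ofReal (pr P a b v) • (μ.restrict (MarkovSFT.cyl a b w)).map (rep a b v)
      = ENNReal.ofReal (pr P a b w) • μ.restrict (MarkovSFT.cyl a b v) := by
    have : IsFiniteMeasure (ENNReal.ofReal (pr P a b v) •
      (μ.restrict (MarkovSFT.cyl a b w)).map (rep a b v)) :=
      Measure.smul_finite _ ENNReal.ofReal_ne_top
    refine measure_ext_cyl (a.natAbs + b.natAbs) fun K x hK => ?_
    have hKa : -(K : ℤ) ≤ a := by omega
    have hKb : b ≤ (K : ℤ) := by omega
    have hab := hs.le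
    rw [Measure.smul_apply, Measure.smul_apply,
      Measure.map_apply (measurable_rep a b v) (measurableSet_cyl _ _ _),
      Measure.restrict_apply (measurable_rep a b v (measurableSet_cyl _ _ _)),
      Measure.restrict_apply (measurableSet_cyl _ _ _), smul_eq_mul, smul_eq_mul]
    by_cases hx : x ∈ MarkovSFT.cyl a b v
    · have e1 : MarkovSFT.cyl (-(K : ℤ)) K x ∩ MarkovSFT.cyl a b v = MarkovSFT.cyl (-(K : ℤ)) K x := by
        refine Set.inter_eq_left.2 ?_
        rw [← cyl_eq_of_mem hx]
        exact cyl_anti hKa hKb x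
      have e2 : rep a b v ⁻¹' (MarkovSFT.cyl (-(K : ℤ)) K x) ∩ MarkovSFT.cyl a b w
          = MarkovSFT.cyl (-(K : ℤ)) K (rep a b w x) := by
        ext y
        constructor
        · rintro ⟨hy1, hy2⟩ i h1 h2
          have := hy1 i h1 h2
          by_cases hi : a ≤ i ∧ i ≤ b
          · rw [rep_of_mem hi.1 hi.2]; exact hy2 i hi.1 hi.2
          · simpa only [rep, if_neg hi] using this
        · intro hy
          refine ⟨fun i h1 h2 => ?_, fun i h1 h2 => ?_⟩
          · have := hy i h1 h2
            by_cases hi : a ≤ i ∧ i ≤ b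
            · rw [rep_of_mem hi.1 hi.2, hx i hi.1 hi.2]
            · simpa only [rep, if_neg hi] using this
          · rw [hy i (by omega) (by omega), rep_of_mem h1 h2]
      rw [e1, e2, h.cyl _ _ _ (by omega), h.cyl _ _ _ (by omega),
        ← ENNReal.ofReal_mul (h.pr_nonneg _ _ _), ← ENNReal.ofReal_mul (h.pr_nonneg _ _ _)]
      congr 1
      have split : ∀ y : Seq S, pr P (-(K : ℤ)) K y = pr P (-(K : ℤ)) a y * pr P a b y * pr P b K y := by
        intro y
        rw [pr_split P hKa (hab.trans hKb), pr_split P hab hKb, mul_assoc]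
      rw [split, split, rep_of_le hs.symm hx hKa, pr_congr P hx,
        pr_congr P (rep_mem_cyl a b w x),
        pr_congr P (y := rep a b w x) (x := x) (a := -(K : ℤ)) (b := a)
          (fun i h1 h2 => rep_of_le hs.symm hx h2),
        pr_congr P (y := rep a b w x) (x := x) (a := b) (b := K)
          (fun i h1 h2 => rep_of_ge hs.symm hx h1)]
      ring
    · have e1 : MarkovSFT.cyl (-(K : ℤ)) K x ∩ MarkovSFT.cyl a b v = ∅ := by
        ext y; simp only [Set.mem_inter_iff, Set.mem_empty_iff_false, iff_false, not_and]
        intro h1 h2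
        refine hx fun i hi1 hi2 => ?_
        rw [← h2 i hi1 hi2, h1 i (by omega) (by omega)]
      have e2 : rep a b v ⁻¹' (MarkovSFT.cyl (-(K : ℤ)) K x) ∩ MarkovSFT.cyl a b w = ∅ := by
        ext y; simp only [Set.mem_inter_iff, Set.mem_empty_iff_false, iff_false, not_and]
        intro h1 h2
        refine hx fun i hi1 hi2 => ?_
        rw [← h1 i (by omega) (by omega), rep_of_mem hi1 hi2]
      rw [e1, e2]; simp
  have := congrArg (fun ν => ν E) main
  simp only [Measure.smul_apply, Measure.map_apply (measurable_rep a b v) hE,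
      Measure.restrict_apply (measurable_rep a b v hE), Measure.restrict_apply hE, smul_eq_mul] at this
  rwa [Set.inter_comm (MarkovSFT.cyl a b w), Set.inter_comm (MarkovSFT.cyl a b v)]

/-- Block replacement is nonsingular: it carries almost-everywhere properties back. -/
lemma MC.ae_rep (h : MC μ A P π δ M) {a b : ℤ} {w v : Seq S} (hs : Sw A a b w v)
    {p : Seq S → Prop} (hp : ∀ᵐ x ∂μ, p x) :
    ∀ᵐ x ∂μ, x ∈ MarkovSFT.cyl a b w → p (rep a b v x) := by
  obtain ⟨E, hE1, hE2, hE3⟩ := exists_measurable_superset_of_null (ae_iff.1 hp)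
  have h1 := h.rep_measure hs hE2
  have h2 : μ (MarkovSFT.cyl a b v ∩ E) = 0 := measure_mono_null Set.inter_subset_right hE3
  rw [h2, mul_zero, mul_eq_zero] at h1
  rcases h1 with h1 | h1
  · exact absurd (ENNReal.ofReal_eq_zero.1 h1) (not_le.2 (h.pr_pos hs.adm_v))
  · rw [ae_iff]
    refine measure_mono_null (fun x hx => ?_) h1
    simp only [Set.mem_ofPred_eq, Classical.not_imp] at hx
    exact ⟨hx.1, hE1 hx.2⟩

/-- The constant in the mixing estimates below. -/
noncomputable def kap (S : Type*) [Fintype S] (δ : ℝ) (M : ℕ) (ℓ : ℕ) : ℝ :=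
  kap0 S δ M * δ ^ (M + ℓ)

lemma MC.kap_pos (h : MC μ A P π δ M) (ℓ : ℕ) : 0 < kap S δ M ℓ :=
  mul_pos h.kap0_pos (pow_pos h.δpos _)

lemma MC.kap0_le_one (h : MC μ A P π δ M) : kap0 S δ M ≤ 1 :=
  have := h.nonempty
  (h.π_ge 0 (Classical.arbitrary S)).trans (h.π_le_one _ _)

/-- A set depending on coordinates up to `c` meets every admissible block placed at least `M`
steps to the right of `c` in a fixed proportion. -/
lemma MC.mix_right (h : MC μ A P π δ M) {a b c d : ℤ} {w : Seq S} {C : Set (Seq S)}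
    (hC : DepOn d c C) (hdc : d ≤ c) (hab : a ≤ b) (hw : Adm A a b w) (hca : c + M ≤ a) :
    ENNReal.ofReal (kap S δ M (b - a).toNat) * μ C ≤ μ (C ∩ MarkovSFT.cyl a b w) := by
  have hC' : DepOn d (a - M) C := hC.mono le_rfl (by omega)
  have h1 := hC'.measure_le (ν₁ := ENNReal.ofReal (kap S δ M (b - a).toNat) • μ)
    (ν₂ := μ.restrict (MarkovSFT.cyl a b w)) ?_
  · rwa [Measure.smul_apply, smul_eq_mul, Measure.restrict_apply hC.measurableSet] at h1
  intro x hx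
  rw [Measure.smul_apply, smul_eq_mul, Measure.restrict_apply (measurableSet_cyl _ _ _)]
  obtain ⟨u, hu0, huM, hu⟩ := h.path (x (a - M)) (w a)
  let y : Seq S := fun i => if i ≤ a - M then x i else if i ≤ a then u (i - (a - M)).toNat else w i
  have hy1 : ∀ i, i ≤ a - M → y i = x i := fun i hi => if_pos hi
  have hy2 : ∀ i, a - M ≤ i → i ≤ a → y i = u (i - (a - M)).toNat := by
    intro i h1 h2
    by_cases h3 : i ≤ a - M
    · have : i = a - M := le_antisymm h3 h1
      rw [hy1 i h3, this]; simp [hu0]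
    · simp only [y, if_neg h3, if_pos h2]
  have hy3 : ∀ i, a ≤ i → y i = w i := by
    intro i h1
    rcases h1.eq_or_lt with rfl | h1
    · rw [hy2 a (by omega) le_rfl]
      rw [show (a - (a - (M : ℤ))).toNat = M by omega, huM]
    · simp only [y]; rw [if_neg (by omega), if_neg (by omega)]
  have hsub : MarkovSFT.cyl d b y ⊆ MarkovSFT.cyl d (a - M) x ∩ MarkovSFT.cyl a b w := by
    intro z hz
    refine ⟨fun i h1 h2 => ?_, fun i h1 h2 => ?_⟩
    · rw [hz i h1 (by omega), hy1 i h2]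
    · rw [hz i (by omega) h2, hy3 i h1]
  refine le_trans ?_ (measure_mono hsub)
  rw [h.cyl _ _ _ (by omega), h.cyl _ _ _ (by omega), ← ENNReal.ofReal_mul (h.kap_pos _).le]
  refine ENNReal.ofReal_le_ofReal ?_
  rw [hy1 d (by omega), pr_split P (show d ≤ a - M by omega) (show a - M ≤ b by omega) y,
    pr_split P (show a - M ≤ a by omega) hab y,
    pr_congr P (y := y) (x := x) (fun i h1 h2 => hy1 i h2),
    pr_congr P (y := y) (x := w) (a := a) (b := b) (fun i h1 h2 => hy3 i h1)]
  have hadm : Adm A (a - M) a y := by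
    intro i h1 h2
    rw [hy2 i h1 (by omega), hy2 (i + 1) (by omega) (by omega),
      show (i + 1 - (a - (M : ℤ))).toNat = (i - (a - (M : ℤ))).toNat + 1 by omega]
    exact hu _ (by omega)
  have b1 := h.pr_ge hadm
  have b2 := h.pr_ge hw
  rw [show (a - (a - (M : ℤ))).toNat = M by omega] at b1
  have b3 : kap S δ M (b - a).toNat ≤ pr P (a - M) a y * pr P a b w := by
    calc kap S δ M (b - a).toNat ≤ 1 * δ ^ (M + (b - a).toNat) :=
          mul_le_mul_of_nonneg_right h.kap0_le_one (pow_nonneg h.δpos.le _)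
      _ = δ ^ M * δ ^ (b - a).toNat := by rw [one_mul, pow_add]
      _ ≤ _ := mul_le_mul b1 b2 (pow_nonneg h.δpos.le _) (h.pr_nonneg _ _ _)
  have b4 : 0 ≤ π d (x d) * pr P d (a - M) x := mul_nonneg (h.π_nonneg _ _) (h.pr_nonneg _ _ _)
  calc _ ≤ (pr P (a - M) a y * pr P a b w) * (π d (x d) * pr P d (a - M) x) :=
        mul_le_mul_of_nonneg_right b3 b4
    _ = _ := by ring

/-- The mirror image of `MC.mix_right`. -/
lemma MC.mix_left (h : MC μ A P π δ M) {a b c d : ℤ} {w : Seq S} {C : Set (Seq S)}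
    (hC : DepOn d c C) (hdc : d ≤ c) (hab : a ≤ b) (hw : Adm A a b w) (hca : b + M ≤ d) :
    ENNReal.ofReal (kap S δ M (b - a).toNat) * μ C ≤ μ (C ∩ MarkovSFT.cyl a b w) := by
  have hC' : DepOn (b + M) c C := hC.mono hca le_rfl
  have h1 := hC'.measure_le (ν₁ := ENNReal.ofReal (kap S δ M (b - a).toNat) • μ)
    (ν₂ := μ.restrict (MarkovSFT.cyl a b w)) ?_
  · rwa [Measure.smul_apply, smul_eq_mul, Measure.restrict_apply hC.measurableSet] at h1
  intro x hx
  rw [Measure.smul_apply, smul_eq_mul, Measure.restrict_apply (measurableSet_cyl _ _ _)]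
  obtain ⟨u, hu0, huM, hu⟩ := h.path (w b) (x (b + M))
  let y : Seq S := fun i => if i ≤ b then w i else if i ≤ b + M then u (i - b).toNat else x i
  have hy1 : ∀ i, i ≤ b → y i = w i := fun i hi => if_pos hi
  have hy2 : ∀ i, b ≤ i → i ≤ b + M → y i = u (i - b).toNat := by
    intro i h1 h2
    by_cases h3 : i ≤ b
    · have : i = b := le_antisymm h3 h1
      rw [hy1 i h3, this]; simp [hu0]
    · simp only [y, if_neg h3, if_pos h2]
  have hy3 : ∀ i, b + M ≤ i → y i = x i := by
    intro i h1
    rcases h1.eq_or_lt with rfl | h1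
    · rw [hy2 _ (by omega) le_rfl]
      rw [show (b + (M : ℤ) - b).toNat = M by omega, huM]
    · simp only [y]; rw [if_neg (by omega), if_neg (by omega)]
  have hsub : MarkovSFT.cyl a c y ⊆ MarkovSFT.cyl (b + M) c x ∩ MarkovSFT.cyl a b w := by
    intro z hz
    refine ⟨fun i h1 h2 => ?_, fun i h1 h2 => ?_⟩
    · rw [hz i (by omega) h2, hy3 i h1]
    · rw [hz i h1 (by omega), hy1 i h2]
  refine le_trans ?_ (measure_mono hsub)
  rw [h.cyl _ _ _ (by omega), h.cyl _ _ _ (by omega), ← ENNReal.ofReal_mul (h.kap_pos _).le]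
  refine ENNReal.ofReal_le_ofReal ?_
  rw [pr_split P (show a ≤ b + M by omega) (show b + M ≤ c by omega) y,
    pr_split P hab (show b ≤ b + M by omega) y,
    pr_congr P (y := y) (x := x) (a := b + M) (b := c) (fun i h1 h2 => hy3 i h1),
    pr_congr P (y := y) (x := w) (a := a) (b := b) (fun i h1 h2 => hy1 i h2)]
  have hadm : Adm A b (b + M) y := by
    intro i h1 h2
    rw [hy2 i h1 (by omega), hy2 (i + 1) (by omega) (by omega),
      show (i + 1 - b).toNat = (i - b).toNat + 1 by omega]
    exact hu _ (by omega)
  have b1 := h.pr_ge hadm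
  have b2 := h.pr_ge hw
  rw [show (b + M - b).toNat = M by omega] at b1
  have b3 : kap S δ M (b - a).toNat ≤ π a (y a) * (pr P a b w * pr P b (b + M) y) := by
    unfold kap
    refine mul_le_mul (h.π_ge _ _) ?_ (pow_nonneg h.δpos.le _) (h.π_nonneg _ _)
    calc δ ^ (M + (b - a).toNat) = δ ^ (b - a).toNat * δ ^ M := by rw [pow_add, mul_comm]
      _ ≤ _ := mul_le_mul b2 b1 (pow_nonneg h.δpos.le _) (h.pr_nonneg _ _ _)
  have b4 : π (b + M) (x (b + M)) * pr P (b + M) c x ≤ 1 * pr P (b + M) c x :=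
    mul_le_mul_of_nonneg_right (h.π_le_one _ _) (h.pr_nonneg _ _ _)
  calc _ ≤ (π a (y a) * (pr P a b w * pr P b (b + M) y)) * (1 * pr P (b + M) c x) :=
        mul_le_mul b3 b4 (mul_nonneg (h.π_nonneg _ _) (h.pr_nonneg _ _ _))
          (le_trans (h.kap_pos _).le b3)
    _ = _ := by ring

end Swaps

/-! ### Mixing, and triviality of replacement-invariant sets -/

section Mixing

variable {S : Type*} [Fintype S] [MeasurableSpace S] [MeasurableSingletonClass S]
  {μ : Measure (Seq S)} {A : S → S → Bool} {P : ℤ → S → S → ℝ} {π : ℤ → S → ℝ} {δ : ℝ} {M : ℕ}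

lemma MC.mix_real (h : MC μ A P π δ M) {a b c d : ℤ} {w : Seq S} {C : Set (Seq S)}
    (hC : DepOn d c C) (hdc : d ≤ c) (hab : a ≤ b) (hw : Adm A a b w)
    (hca : c + M ≤ a ∨ b + M ≤ d) :
    kap S δ M (b - a).toNat * μ.real C ≤ μ.real (C ∩ MarkovSFT.cyl a b w) := by
  have := h.prob
  have h1 : ENNReal.ofReal (kap S δ M (b - a).toNat) * μ C ≤ μ (C ∩ MarkovSFT.cyl a b w) := by
    rcases hca with hca | hca
    · exact h.mix_right hC hdc hab hw hca
    · exact h.mix_left hC hdc hab hw hca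
  have h2 := ENNReal.toReal_mono (measure_ne_top _ _) h1
  rwa [ENNReal.toReal_mul, ENNReal.toReal_ofReal (h.kap_pos _).le] at h2

lemma MC.δ_le_one (h : MC μ A P π δ M) : δ ≤ 1 := by
  have := h.nonempty
  obtain ⟨u, -, -, hu⟩ := h.path (Classical.arbitrary S) (Classical.arbitrary S)
  exact (h.ge 0 _ _ (hu 0 (by have := h.Mpos; omega))).trans (h.le_one _ _ _)

lemma MC.kap_le_one (h : MC μ A P π δ M) (ℓ : ℕ) : kap S δ M ℓ ≤ 1 :=
  mul_le_one₀ h.kap0_le_one (pow_nonneg h.δpos.le _) (pow_le_one₀ h.δpos.le h.δ_le_one)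

lemma real_sub_symmDiff_le [IsProbabilityMeasure μ] {Z C W : Set (Seq S)} {η : ℝ}
    (h : μ (symmDiff Z C) < ENNReal.ofReal η) (hη : 0 < η) :
    μ.real (Z ∩ W) ≤ μ.real (C ∩ W) + η ∧ μ.real (C ∩ W) ≤ μ.real (Z ∩ W) + η := by
  have h0 : μ.real (symmDiff Z C) ≤ η := by
    rw [Measure.real]
    exact ENNReal.toReal_le_of_le_ofReal hη.le h.le
  have key : ∀ Z' C' : Set (Seq S), Z' \ C' ⊆ symmDiff Z C →
      μ.real (Z' ∩ W) ≤ μ.real (C' ∩ W) + η := by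
    intro Z' C' hs
    have : Z' ∩ W ⊆ (C' ∩ W) ∪ symmDiff Z C := by
      intro x hx
      by_cases hxC : x ∈ C'
      · exact Or.inl ⟨hxC, hx.2⟩
      · exact Or.inr (hs ⟨hx.1, hxC⟩)
    calc μ.real (Z' ∩ W) ≤ μ.real ((C' ∩ W) ∪ symmDiff Z C) := measureReal_mono this
      _ ≤ μ.real (C' ∩ W) + μ.real (symmDiff Z C) := measureReal_union_le _ _
      _ ≤ _ := by linarith
  exact ⟨key Z C fun x hx => Or.inl hx, key C Z fun x hx => Or.inr hx⟩

lemma eventually_natAbs_ge (N : ℤ) : ∀ᶠ a : ℤ in cofinite, N ≤ |a| := by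
  rw [Int.cofinite_eq, eventually_sup]
  refine ⟨?_, ?_⟩
  · filter_upwards [eventually_le_atBot (-N)] with a ha
    have := neg_le_abs a; omega
  · filter_upwards [eventually_ge_atTop N] with a ha
    exact ha.trans (le_abs_self a)

/-- A set of positive measure meets all far translates of an admissible block in a set of measure
bounded below. -/
lemma MC.mix_pos (h : MC μ A P π δ M) {b : ℤ} {w : Seq S} (hb : 0 ≤ b) (hw : Adm A 0 b w)
    {Z : Set (Seq S)} (hZ : MeasurableSet Z) (hpos : 0 < μ Z) :
    ∃ c : ℝ, 0 < c ∧ ∀ᶠ a : ℤ in cofinite,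
      c ≤ μ.real (Z ∩ MarkovSFT.cyl a (a + b) (shiftZ (-a) w)) := by
  have := h.prob
  have hpos' : 0 < μ.real Z := ENNReal.toReal_pos hpos.ne' (measure_ne_top _ _)
  set κ := kap S δ M b.toNat with hκ
  have hκ0 : 0 < κ := h.kap_pos _
  have hκ1 : κ ≤ 1 := h.kap_le_one _
  obtain ⟨K, C, hC, hZC⟩ := exists_depOn_approx μ hZ (η := κ * μ.real Z / 4) (by positivity)
  refine ⟨κ * μ.real Z / 4, by positivity, ?_⟩
  filter_upwards [eventually_natAbs_ge (K + M + b)] with a ha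
  have hw' : Adm A a (a + b) (shiftZ (-a) w) := by
    intro i h1 h2
    have := hw (i + -a) (by omega) (by omega)
    simp only [shiftZ]
    rwa [show i + 1 + -a = i + -a + 1 by ring]
  have h1 := h.mix_real hC (by omega) (show a ≤ a + b by omega) hw' (by
    rcases abs_cases a with ⟨h1, h2⟩ | ⟨h1, h2⟩
    · left; omega
    · right; omega)
  rw [show a + b - a = b by ring, ← hκ] at h1
  have h2 := (real_sub_symmDiff_le (μ := μ) (W := MarkovSFT.cyl a (a + b) (shiftZ (-a) w)) hZC
    (by positivity)).2
  have h3 := (real_sub_symmDiff_le (μ := μ) (W := Set.univ) hZC (by positivity)).1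
  simp only [Set.inter_univ] at h3
  have h4 : κ * (μ.real Z - κ * μ.real Z / 4) ≤ κ * μ.real C :=
    mul_le_mul_of_nonneg_left (by linarith) hκ0.le
  nlinarith [mul_pos hκ0 hpos', mul_nonneg (mul_pos hκ0 hpos').le (sub_nonneg.2 hκ1)]

lemma MC.rep_inv_le (h : MC μ A P π δ M) {Z : Set (Seq S)} (hZ : MeasurableSet Z)
    {a b : ℤ} {w v : Seq S} (hs : Sw A a b w v)
    (hinv : ∀ᵐ x ∂μ, x ∈ MarkovSFT.cyl a b w → x ∈ Z → rep a b v x ∈ Z) :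
    ENNReal.ofReal (pr P a b v) * μ (Z ∩ MarkovSFT.cyl a b w)
      ≤ ENNReal.ofReal (pr P a b w) * μ (Z ∩ MarkovSFT.cyl a b v) := by
  rw [Set.inter_comm Z (MarkovSFT.cyl a b v), ← h.rep_measure hs hZ]
  refine mul_le_mul_right ?_ _
  refine measure_mono_ae ?_
  filter_upwards [hinv] with x hx hxm
  exact ⟨hxm.2, hx hxm.2 hxm.1⟩

lemma MC.rep_inv_cyl_le (h : MC μ A P π δ M) {Z : Set (Seq S)} (hZ : MeasurableSet Z)
    (hinv : ∀ (a b : ℤ) (w v : Seq S), Sw A a b w v →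
      ∀ᵐ x ∂μ, x ∈ MarkovSFT.cyl a b w → x ∈ Z → rep a b v x ∈ Z)
    {a b : ℤ} (hab : a ≤ b) {y y' : Seq S} (ha : y a = y' a) (hb : y b = y' b) :
    μ (MarkovSFT.cyl a b y') * μ (Z ∩ MarkovSFT.cyl a b y)
      ≤ μ (MarkovSFT.cyl a b y) * μ (Z ∩ MarkovSFT.cyl a b y') := by
  by_cases hy : Adm A a b y
  · by_cases hy' : Adm A a b y'
    · have hs : Sw A a b y y' := ⟨hab, hy, hy', ha, hb⟩
      have := h.rep_inv_le hZ hs (hinv a b y y' hs)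
      rw [h.cyl a b y hab, h.cyl a b y' hab, ENNReal.ofReal_mul (h.π_nonneg _ _),
        ENNReal.ofReal_mul (h.π_nonneg _ _), ha, mul_assoc, mul_assoc]
      exact mul_le_mul_right this _
    · rw [h.measure_cyl_eq_zero hab hy', zero_mul]; exact zero_le
  · rw [measure_mono_null Set.inter_subset_right (h.measure_cyl_eq_zero hab hy), mul_zero]
    exact zero_le

/-- Replacement-invariant sets are trivial. -/
lemma MC.trivial_of_rep_inv (h : MC μ A P π δ M) {Z : Set (Seq S)} (hZ : MeasurableSet Z)
    (hinv : ∀ (a b : ℤ) (w v : Seq S), Sw A a b w v →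
      ∀ᵐ x ∂μ, x ∈ MarkovSFT.cyl a b w → x ∈ Z → rep a b v x ∈ Z) :
    μ Z = 0 ∨ μ Zᶜ = 0 := by
  have := h.prob
  have := h.nonempty
  let s₀ : Seq S := fun _ => Classical.arbitrary S
  set κ := kap S δ M 0 with hκ
  have hκ0 : 0 < κ := h.kap_pos _
  have hκ1 : κ ≤ 1 := h.kap_le_one _
  have main : ∀ η : ℝ, 0 < η → η ≤ 1 → κ ^ 4 * (μ.real Z * μ.real Zᶜ) ≤ 5 * η := by
    intro η hη hη1
    obtain ⟨K, C, hC, hZC⟩ := exists_depOn_approx μ hZ hη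
    set c : ℤ := K + M
    set d : ℤ := -K - M
    have hdc : d ≤ c := by omega
    set G : Set (Seq S) := MarkovSFT.cyl c c s₀ ∩ MarkovSFT.cyl d d s₀ with hG
    have dG : DepOn d c G :=
      ((depOn_cyl c c s₀).mono hdc le_rfl).inter ((depOn_cyl d d s₀).mono le_rfl hdc)
    have endp : ∀ y ∈ G, y d = s₀ d ∧ y c = s₀ c := fun y hy =>
      ⟨hy.2 d le_rfl le_rfl, hy.1 c le_rfl le_rfl⟩
    have adm : ∀ a : ℤ, Adm A a a s₀ := fun a i h1 h2 => by omega
    have low : ∀ D : Set (Seq S), DepOn (-(K : ℤ)) K D → κ ^ 2 * μ.real D ≤ μ.real (D ∩ G) := by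
      intro D hD
      have h1 := h.mix_real hD (by omega) (le_refl c) (adm c) (Or.inl (by omega))
      have h2 := h.mix_real (d := -(K : ℤ)) (c := c) (C := D ∩ MarkovSFT.cyl c c s₀)
        ((hD.mono le_rfl (by omega)).inter ((depOn_cyl c c s₀).mono (by omega) le_rfl))
        (by omega) (le_refl d) (adm d) (Or.inr (by omega))
      simp only [sub_self, Int.toNat_zero, ← hκ] at h1 h2
      rw [hG, ← Set.inter_assoc]
      nlinarith [mul_le_mul_of_nonneg_left h1 hκ0.le]
    have dC : DepOn d c C := hC.mono (by omega) (by omega)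
    have hCm := hC.measurableSet
    have hGm := dG.measurableSet
    have step1 : ∀ y' ∈ G, μ (MarkovSFT.cyl d c y') * μ (Z ∩ (C ∩ G))
        ≤ μ (Z ∩ MarkovSFT.cyl d c y') * μ (C ∩ G) := by
      intro y' hy'
      have := (dC.inter dG).measure_le (ν₁ := μ (MarkovSFT.cyl d c y') • μ.restrict Z)
        (ν₂ := μ (Z ∩ MarkovSFT.cyl d c y') • μ) (by
          intro y hy
          have e := h.rep_inv_cyl_le hZ hinv hdc (y := y) (y' := y')
            ((endp y hy.2).1.trans (endp y' hy').1.symm)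
            ((endp y hy.2).2.trans (endp y' hy').2.symm)
          rw [Measure.smul_apply, Measure.smul_apply,
            Measure.restrict_apply (measurableSet_cyl _ _ _), smul_eq_mul, smul_eq_mul,
            Set.inter_comm _ Z]
          rwa [mul_comm (μ (Z ∩ MarkovSFT.cyl d c y'))])
      rwa [Measure.smul_apply, Measure.smul_apply,
            Measure.restrict_apply (hCm.inter hGm), smul_eq_mul, smul_eq_mul,
            Set.inter_comm _ Z] at this
    have step2 : μ (Z ∩ (C ∩ G)) * μ (Cᶜ ∩ G) ≤ μ (C ∩ G) * μ (Z ∩ (Cᶜ ∩ G)) := by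
      have := (dC.compl.inter dG).measure_le (ν₁ := μ (Z ∩ (C ∩ G)) • μ)
        (ν₂ := μ (C ∩ G) • μ.restrict Z) (by
          intro y hy
          rw [Measure.smul_apply, Measure.smul_apply,
            Measure.restrict_apply (measurableSet_cyl _ _ _), smul_eq_mul, smul_eq_mul,
            Set.inter_comm _ Z, mul_comm, mul_comm (μ (C ∩ G))]
          exact step1 y hy.2)
      rwa [Measure.smul_apply, Measure.smul_apply,
            Measure.restrict_apply (hCm.compl.inter hGm), smul_eq_mul, smul_eq_mul,
            Set.inter_comm _ Z] at this
    have step3 : μ.real (Z ∩ (C ∩ G)) * μ.real (Cᶜ ∩ G)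
        ≤ μ.real (C ∩ G) * μ.real (Z ∩ (Cᶜ ∩ G)) := by
      have := ENNReal.toReal_mono
        (ENNReal.mul_ne_top (measure_ne_top _ _) (measure_ne_top _ _)) step2
      rwa [ENNReal.toReal_mul, ENNReal.toReal_mul] at this
    have l1 := (real_sub_symmDiff_le (μ := μ) (W := C ∩ G) hZC hη).2
    have l2 := (real_sub_symmDiff_le (μ := μ) (W := Cᶜ ∩ G) hZC hη).1
    rw [← Set.inter_assoc C C, Set.inter_self] at l1
    rw [← Set.inter_assoc C Cᶜ, Set.inter_compl_self, Set.empty_inter, measureReal_empty,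
      zero_add] at l2
    have l3 := low C hC
    have l4 := low Cᶜ hC.compl
    have l5 := (real_sub_symmDiff_le (μ := μ) (W := Set.univ) hZC hη).1
    have l6 : μ.real Zᶜ ≤ μ.real Cᶜ + η := by
      have : symmDiff Zᶜ Cᶜ = symmDiff Z C := by
        rw [compl_symmDiff_compl]
      rw [← this] at hZC
      simpa using (real_sub_symmDiff_le (μ := μ) (W := Set.univ) hZC hη).1
    simp only [Set.inter_univ] at l5
    have r1 : μ.real (C ∩ G) ≤ 1 := measureReal_le_one
    have r2 : μ.real (Cᶜ ∩ G) ≤ 1 := measureReal_le_one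
    have r3 : μ.real C ≤ 1 := measureReal_le_one
    have r4 : μ.real Cᶜ ≤ 1 := measureReal_le_one
    have p1 : 0 ≤ μ.real (C ∩ G) := measureReal_nonneg
    have p2 : 0 ≤ μ.real (Cᶜ ∩ G) := measureReal_nonneg
    have p3 : 0 ≤ μ.real C := measureReal_nonneg
    have p4 : 0 ≤ μ.real Cᶜ := measureReal_nonneg
    have p5 : 0 ≤ μ.real Z := measureReal_nonneg
    have p6 : 0 ≤ μ.real Zᶜ := measureReal_nonneg
    have q1 : μ.real (C ∩ G) * μ.real (Cᶜ ∩ G) ≤ 2 * η := by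
      nlinarith [mul_le_mul_of_nonneg_right l1 p2, mul_le_mul_of_nonneg_left l2 p1]
    have q2 : κ ^ 4 * (μ.real C * μ.real Cᶜ) ≤ 2 * η := by
      have := mul_le_mul l3 l4 (by positivity) p1
      nlinarith
    have q3 : μ.real Z * μ.real Zᶜ ≤ μ.real C * μ.real Cᶜ + 3 * η := by
      have := mul_le_mul l5 l6 p6 (by positivity)
      nlinarith
    have q4 : κ ^ 4 ≤ 1 := pow_le_one₀ hκ0.le hκ1
    have q5 : 0 < κ ^ 4 := by positivity
    nlinarith
  have fin : κ ^ 4 * (μ.real Z * μ.real Zᶜ) ≤ 0 := by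
    refine le_of_forall_pos_le_add fun ε hε => ?_
    have := main (min 1 (ε / 5)) (by positivity) (min_le_left _ _)
    have h2 : min 1 (ε / 5) ≤ ε / 5 := min_le_right _ _
    linarith
  have p5 : 0 ≤ μ.real Z := measureReal_nonneg
  have p6 : 0 ≤ μ.real Zᶜ := measureReal_nonneg
  have q5 : 0 < κ ^ 4 := by positivity
  have : μ.real Z * μ.real Zᶜ = 0 := by
    refine le_antisymm ?_ (by positivity)
    by_contra hcon
    push Not at hcon
    nlinarith [mul_pos q5 hcon]
  rcases mul_eq_zero.1 this with h0 | h0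
  · left; exact (measureReal_eq_zero_iff).1 h0
  · right; exact (measureReal_eq_zero_iff).1 h0

end Mixing

/-! ### Far replacements and local averages -/

section Far

variable {S : Type*} [Fintype S] [MeasurableSpace S] [MeasurableSingletonClass S]
  {μ : Measure (Seq S)} {A : S → S → Bool} {P : ℤ → S → S → ℝ} {π : ℤ → S → ℝ} {δ : ℝ} {M : ℕ}

lemma MC.rep_measure_le (h : MC μ A P π δ M) {a b : ℤ} {w v : Seq S} (hs : Sw A a b w v)
    {E : Set (Seq S)} (hE : MeasurableSet E) :
    δ ^ (b - a).toNat * μ.real (MarkovSFT.cyl a b w ∩ rep a b v ⁻¹' E) ≤ μ.real E := by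
  have := h.prob
  have h1 := congrArg ENNReal.toReal (h.rep_measure hs hE)
  rw [ENNReal.toReal_mul, ENNReal.toReal_mul, ENNReal.toReal_ofReal (h.pr_nonneg _ _ _),
    ENNReal.toReal_ofReal (h.pr_nonneg _ _ _)] at h1
  calc δ ^ (b - a).toNat * μ.real (MarkovSFT.cyl a b w ∩ rep a b v ⁻¹' E)
      ≤ pr P a b v * μ.real (MarkovSFT.cyl a b w ∩ rep a b v ⁻¹' E) :=
        mul_le_mul_of_nonneg_right (h.pr_ge hs.adm_v) measureReal_nonneg
    _ = pr P a b w * μ.real (MarkovSFT.cyl a b v ∩ E) := h1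
    _ ≤ 1 * μ.real (MarkovSFT.cyl a b v ∩ E) :=
        mul_le_mul_of_nonneg_right (h.pr_le_one _ _ _) measureReal_nonneg
    _ ≤ μ.real E := by rw [one_mul]; exact measureReal_mono Set.inter_subset_right

/-- A far replacement hardly changes membership in a measurable set. -/
lemma MC.far_set (h : MC μ A P π δ M) {b : ℤ} {w v : Seq S} (hs : Sw A 0 b w v)
    {Z : Set (Seq S)} (hZ : MeasurableSet Z) :
    Tendsto (fun a : ℤ => μ.real (MarkovSFT.cyl a (a + b) (shiftZ (-a) w) ∩
      (Z ∩ rep a (a + b) (shiftZ (-a) v) ⁻¹' Zᶜ))) cofinite (𝓝 0) := by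
  have := h.prob
  rw [Metric.tendsto_nhds]
  intro ε hε
  have hδ : 0 < δ ^ b.toNat := pow_pos h.δpos _
  have hδ1 : δ ^ b.toNat ≤ 1 := pow_le_one₀ h.δpos.le h.δ_le_one
  set η : ℝ := ε * δ ^ b.toNat / 4 with hη
  have hη0 : 0 < η := by positivity
  obtain ⟨K, C, hC, hZC⟩ := exists_depOn_approx μ hZ hη0
  have h0 : μ.real (symmDiff Z C) ≤ η := by
    rw [Measure.real]
    exact ENNReal.toReal_le_of_le_ofReal hη0.le hZC.le
  have hb := hs.le
  filter_upwards [eventually_natAbs_ge (K + b + 1)] with a ha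
  have hsa := hs.shift a
  rw [zero_add, add_comm b a] at hsa
  have hE : MeasurableSet (symmDiff Z C) := hZ.symmDiff hC.measurableSet
  have h1 := h.rep_measure_le hsa hE
  rw [show a + b - a = b by ring] at h1
  have hsub : MarkovSFT.cyl a (a + b) (shiftZ (-a) w) ∩
      (Z ∩ rep a (a + b) (shiftZ (-a) v) ⁻¹' Zᶜ) ⊆ symmDiff Z C ∪
      (MarkovSFT.cyl a (a + b) (shiftZ (-a) w) ∩
        rep a (a + b) (shiftZ (-a) v) ⁻¹' (symmDiff Z C)) := by
    rintro x ⟨hx1, hx2, hx3⟩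
    by_cases hxC : x ∈ C
    · refine Or.inr ⟨hx1, Or.inr ⟨hC x hxC ?_, hx3⟩⟩
      intro i hi1 hi2
      rcases abs_cases a with ⟨e1, e2⟩ | ⟨e1, e2⟩
      · exact rep_of_lt (by omega) _ _
      · exact rep_of_gt (by omega) _ _
    · exact Or.inl (Or.inl ⟨hx2, hxC⟩)
  have h2 := (measureReal_mono (μ := μ) hsub).trans (measureReal_union_le _ _)
  rw [Real.dist_eq, sub_zero, abs_of_nonneg measureReal_nonneg]
  set X := μ.real (MarkovSFT.cyl a (a + b) (shiftZ (-a) w) ∩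
        rep a (a + b) (shiftZ (-a) v) ⁻¹' (symmDiff Z C))
  have h3 : X ≤ ε / 4 := by
    have : δ ^ b.toNat * X ≤ δ ^ b.toNat * (ε / 4) := by rw [hη] at h0; linarith
    exact le_of_mul_le_mul_left this hδ
  have h4 : η ≤ ε / 4 := by rw [hη]; nlinarith
  linarith

/-- A far replacement hardly changes the value of a measurable function. -/
lemma MC.far (h : MC μ A P π δ M) {b : ℤ} {w v : Seq S} (hs : Sw A 0 b w v)
    {φ : Seq S → ℝ} (hφ : Measurable φ) {η : ℝ} (hη : 0 < η) :
    Tendsto (fun a : ℤ => μ.real (MarkovSFT.cyl a (a + b) (shiftZ (-a) w) ∩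
      {x | η < |φ (rep a (a + b) (shiftZ (-a) v) x) - φ x|})) cofinite (𝓝 0) := by
  have := h.prob
  let q : Seq S → ℤ := fun x => ⌊φ x / η⌋
  have hq : Measurable q := (hφ.div_const η).floor
  rw [Metric.tendsto_nhds]
  intro ε hε
  -- the levels outside a large window carry little mass
  have htail : Tendsto (fun N : ℕ => μ {x | (N : ℤ) < |q x|}) atTop (𝓝 0) := by
    have hi : ⋂ N : ℕ, {x | (N : ℤ) < |q x|} = ∅ := by
      ext x
      simp only [Set.mem_iInter, Set.mem_ofPred_eq, Set.mem_empty_iff_false, iff_false, not_forall]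
      exact ⟨(|q x|).toNat, by omega⟩
    rw [← measure_empty (μ := μ), ← hi]
    refine tendsto_measure_iInter_atTop (fun N => ?_) (fun N N' hN x hx => ?_)
      ⟨0, measure_ne_top _ _⟩
    · exact (measurableSet_lt measurable_const (measurable_of_countable (fun z : ℤ => |z|) |>.comp hq)).nullMeasurableSet
    · simp only [Set.mem_ofPred_eq] at hx ⊢; omega
  obtain ⟨N, hN⟩ := ((ENNReal.tendsto_nhds_zero.1 htail) (ENNReal.ofReal (ε / 4))
    (by simpa using hε)).exists
  have hN' : μ.real {x | (N : ℤ) < |q x|} ≤ ε / 4 := ENNReal.toReal_le_of_le_ofReal (by positivity) hN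
  have hsum : Tendsto (fun a : ℤ => ∑ j ∈ Finset.Icc (-(N : ℤ)) N,
      μ.real (MarkovSFT.cyl a (a + b) (shiftZ (-a) w) ∩
      (q ⁻¹' {j} ∩ rep a (a + b) (shiftZ (-a) v) ⁻¹' (q ⁻¹' {j})ᶜ))) cofinite (𝓝 0) := by
    have := tendsto_finset_sum (Finset.Icc (-(N : ℤ)) N) (fun j _ =>
      h.far_set hs (Z := q ⁻¹' {j}) (hq (measurableSet_singleton j)))
    simpa using this
  filter_upwards [(Metric.tendsto_nhds.1 hsum) (ε / 4) (by positivity)] with a ha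
  rw [Real.dist_eq, sub_zero] at ha ⊢
  rw [abs_of_nonneg measureReal_nonneg]
  have hsub : MarkovSFT.cyl a (a + b) (shiftZ (-a) w) ∩
      {x | η < |φ (rep a (a + b) (shiftZ (-a) v) x) - φ x|} ⊆
      {x | (N : ℤ) < |q x|} ∪ ⋃ j ∈ Finset.Icc (-(N : ℤ)) N,
        (MarkovSFT.cyl a (a + b) (shiftZ (-a) w) ∩
      (q ⁻¹' {j} ∩ rep a (a + b) (shiftZ (-a) v) ⁻¹' (q ⁻¹' {j})ᶜ)) := by
    rintro x ⟨hx1, hx2⟩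
    by_cases hx : (N : ℤ) < |q x|
    · exact Or.inl hx
    · right
      simp only [Set.mem_iUnion]
      refine ⟨q x, ?_, hx1, rfl, ?_⟩
      · rw [Finset.mem_Icc]; exact abs_le.1 (not_lt.1 hx)
      · intro hcon
        have hcon' : ⌊φ (rep a (a + b) (shiftZ (-a) v) x) / η⌋ = ⌊φ x / η⌋ := hcon
        have := Int.abs_sub_lt_one_of_floor_eq_floor hcon'
        rw [← sub_div, abs_div, abs_of_pos hη, div_lt_one hη] at this
        exact absurd hx2 (not_lt.2 this.le)
  have h1 := (measureReal_mono (μ := μ) hsub).trans (measureReal_union_le _ _)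
  have h2 := measureReal_biUnion_finset_le (μ := μ) (Finset.Icc (-(N : ℤ)) N) (fun j =>
        (MarkovSFT.cyl a (a + b) (shiftZ (-a) w) ∩
      (q ⁻¹' {j} ∩ rep a (a + b) (shiftZ (-a) v) ⁻¹' (q ⁻¹' {j})ᶜ)))
  have h3 := le_abs_self (∑ j ∈ Finset.Icc (-(N : ℤ)) N,
      μ.real (MarkovSFT.cyl a (a + b) (shiftZ (-a) w) ∩
      (q ⁻¹' {j} ∩ rep a (a + b) (shiftZ (-a) v) ⁻¹' (q ⁻¹' {j})ᶜ)))
  linarith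

/-- The average of `φ` over the centred cylinder of radius `K` around a point
(zero if that cylinder is null). -/
noncomputable def avg (μ : Measure (Seq S)) (K : ℕ) (φ : Seq S → ℝ) (x : Seq S) : ℝ :=
  (μ.real (cyl (-(K : ℤ)) K x))⁻¹ * ∫ y in cyl (-(K : ℤ)) K x, φ y ∂μ

lemma avg_congr (K : ℕ) (φ : Seq S → ℝ) {x y : Seq S} (h : y ∈ cyl (-(K : ℤ)) K x) :
    avg μ K φ y = avg μ K φ x := by
  unfold avg; rw [cyl_eq_of_mem h]

/-- A function factoring through the coordinates in `[-K, K]` is measurable. -/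
lemma measurable_of_local {β : Type*} [MeasurableSpace β] {K : ℕ} {f : Seq S → β}
    (hf : ∀ x y, y ∈ cyl (-(K : ℤ)) K x → f y = f x) : Measurable f := by
  intro B _
  refine DepOn.measurableSet (a := -(K : ℤ)) (b := K) fun x hx y hy => ?_
  rw [Set.mem_preimage, hf x y hy]; exact hx

lemma eq_sum_restrict (ν : Measure (Seq S)) (a b : ℤ) :
    ν = ∑ r : Set.Icc a b → S, ν.restrict (res a b ⁻¹' {r}) := by
  ext Z hZ
  rw [measure_eq_sum_res ν a b Z, Measure.finset_sum_apply]
  refine Finset.sum_congr rfl fun r _ => ?_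
  rw [Measure.restrict_apply hZ]

lemma ae_cyl_pos (μ : Measure (Seq S)) (a b : ℤ) : ∀ᵐ x ∂μ, μ (cyl a b x) ≠ 0 := by
  rw [ae_iff, measure_eq_sum_res μ a b]
  refine Finset.sum_eq_zero fun r _ => ?_
  by_cases hr : μ (res a b ⁻¹' {r}) = 0
  · exact measure_mono_null Set.inter_subset_right hr
  · convert measure_empty (μ := μ)
    ext x
    simp only [Set.mem_inter_iff, Set.mem_ofPred_eq, Set.mem_preimage, Set.mem_singleton_iff,
      Set.mem_empty_iff_false, iff_false, not_and, not_not]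
    rintro h rfl
    exact hr (by rwa [← cyl_eq_res])

lemma integral_abs_avg_le [IsFiniteMeasure μ] (K : ℕ) {ψ : Seq S → ℝ} (hψ : Integrable ψ μ) :
    Integrable (avg μ K ψ) μ ∧ ∫ x, |avg μ K ψ x| ∂μ ≤ ∫ x, |ψ x| ∂μ := by
  set a : ℤ := -(K : ℤ)
  set b : ℤ := (K : ℤ)
  have hInt : Integrable (avg μ K ψ) μ := by
    have hm : Measurable (avg μ K ψ) := measurable_of_local (K := K) fun x y => avg_congr K ψ
    refine Integrable.of_bound hm.aestronglyMeasurable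
      (∑ r : Set.Icc a b → S, |(μ.real (res a b ⁻¹' {r}))⁻¹ * ∫ y in res a b ⁻¹' {r}, ψ y ∂μ|)
      (Eventually.of_forall fun x => ?_)
    have := Finset.single_le_sum (s := Finset.univ)
      (f := fun r : Set.Icc a b → S =>
        |(μ.real (res a b ⁻¹' {r}))⁻¹ * ∫ y in res a b ⁻¹' {r}, ψ y ∂μ|)
      (fun _ _ => abs_nonneg _) (Finset.mem_univ (res a b x))
    simp only [← cyl_eq_res] at this
    exact this
  refine ⟨hInt, ?_⟩
  have e : ∀ f : Seq S → ℝ, Integrable f μ →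
      ∫ x, f x ∂μ = ∑ r : Set.Icc a b → S, ∫ x in res a b ⁻¹' {r}, f x ∂μ := by
    intro f hf
    conv_lhs => rw [eq_sum_restrict μ a b]
    exact integral_finset_sum_measure fun r _ => hf.restrict
  rw [e _ hInt.abs, e _ hψ.abs]
  refine Finset.sum_le_sum fun r _ => ?_
  have h1 : ∫ x in res a b ⁻¹' {r}, |avg μ K ψ x| ∂μ
      = ∫ x in res a b ⁻¹' {r},
        |(μ.real (res a b ⁻¹' {r}))⁻¹ * ∫ y in res a b ⁻¹' {r}, ψ y ∂μ| ∂μ := by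
    refine setIntegral_congr_fun (measurable_res a b (measurableSet_singleton _)) fun x hx => ?_
    have hx' : res a b x = r := hx
    simp only [avg]
    rw [cyl_eq_res, hx']
  rw [h1, setIntegral_const, smul_eq_mul, abs_mul, abs_inv, abs_of_nonneg measureReal_nonneg,
    ← mul_assoc]
  have h2 : μ.real (res a b ⁻¹' {r}) * (μ.real (res a b ⁻¹' {r}))⁻¹ ≤ 1 := mul_inv_le_one
  calc _ ≤ 1 * |∫ y in res a b ⁻¹' {r}, ψ y ∂μ| := mul_le_mul_of_nonneg_right h2 (abs_nonneg _)
    _ ≤ _ := by rw [one_mul]; exact abs_integral_le_integral_abs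

/-- Local averages of an integrable function converge to it in mean. -/
lemma tendsto_avg [IsFiniteMeasure μ] {φ : Seq S → ℝ} (hφ : Integrable φ μ) :
    Tendsto (fun K : ℕ => ∫ x, |avg μ K φ x - φ x| ∂μ) atTop (𝓝 0) := by
  rw [Metric.tendsto_atTop]
  intro ε hε
  have hdense := MemLp.induction_dense (μ := μ) (p := 1) (E := ℝ) ENNReal.one_ne_top
    (fun h : Seq S → ℝ => ∃ K : ℕ, ∀ x y, y ∈ cyl (-(K : ℤ)) K x → h y = h x)
    (by
      intro c s hs _ ε hε
      obtain ⟨η, hη, hη2⟩ := exists_eLpNorm_indicator_le (μ := μ) (p := 1) ENNReal.one_ne_top c hε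
      have hη' : 0 < (min η 1 : NNReal) := by positivity
      obtain ⟨K, C, hC, hZC⟩ := exists_depOn_approx μ hs (η := (min η 1 : NNReal)) hη'
      refine ⟨C.indicator fun _ => c, ?_, K, fun x y hy => ?_⟩
      · rw [eLpNorm_sub_comm, eLpNorm_indicator_sub_indicator]
        refine hη2 _ ?_
        refine hZC.le.trans ?_
        rw [ENNReal.ofReal_coe_nnreal]
        exact_mod_cast min_le_left _ _
      · by_cases hx : x ∈ C
        · rw [Set.indicator_of_mem hx, Set.indicator_of_mem (hC x hx hy)]
        · rw [Set.indicator_of_notMem hx, Set.indicator_of_notMem (hC.compl x hx hy)])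
    (by
      rintro f g ⟨K, hK⟩ ⟨L, hL⟩
      refine ⟨K + L, fun x y hy => ?_⟩
      rw [Pi.add_apply, Pi.add_apply, hK x y (cyl_anti (by omega) (by omega) x hy),
        hL x y (cyl_anti (by omega) (by omega) x hy)])
    (by
      rintro f ⟨K, hK⟩
      exact (measurable_of_local hK).aestronglyMeasurable)
    (f := φ) (memLp_one_iff_integrable.2 hφ) (ε := ENNReal.ofReal (ε / 4))
    (by simpa using hε)
  obtain ⟨h, hφh, K₀, hK₀⟩ := hdense
  have hhm : Measurable h := measurable_of_local hK₀
  have hdiff : MemLp (φ - h) 1 μ :=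
    ⟨hφ.aestronglyMeasurable.sub hhm.aestronglyMeasurable, lt_of_le_of_lt hφh ENNReal.ofReal_lt_top⟩
  have hdi : Integrable (φ - h) μ := memLp_one_iff_integrable.1 hdiff
  have hh : Integrable h μ := by
    have := hφ.sub hdi
    simpa using this
  have hsmall : ∫ x, |(φ - h) x| ∂μ ≤ ε / 4 := by
    rw [eLpNorm_one_eq_lintegral_enorm] at hφh
    have := integral_norm_eq_lintegral_enorm hdi.aestronglyMeasurable
    simp only [Real.norm_eq_abs] at this
    rw [this]
    exact ENNReal.toReal_le_of_le_ofReal (by positivity) hφh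
  refine ⟨K₀, fun K hK => ?_⟩
  rw [Real.dist_eq, sub_zero, abs_of_nonneg (integral_nonneg fun _ => abs_nonneg _)]
  obtain ⟨i1, i2⟩ := integral_abs_avg_le K hdi
  have hae : ∀ᵐ x ∂μ, |avg μ K φ x - φ x| ≤ |avg μ K (φ - h) x| + |(φ - h) x| := by
    filter_upwards [ae_cyl_pos μ (-(K : ℤ)) K] with x hx
    have hx' : μ.real (cyl (-(K : ℤ)) K x) ≠ 0 := by
      rw [Measure.real, ENNReal.toReal_ne_zero]; exact ⟨hx, measure_ne_top _ _⟩
    have e1 : avg μ K (φ - h) x = avg μ K φ x - h x := by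
      unfold avg
      have : ∫ y in cyl (-(K : ℤ)) K x, h y ∂μ = μ.real (cyl (-(K : ℤ)) K x) * h x := by
        rw [setIntegral_congr_fun (g := fun _ => h x) (measurableSet_cyl _ _ _) fun y hy =>
          hK₀ x y (cyl_anti (by omega) (by omega) x hy), setIntegral_const, smul_eq_mul]
      simp only [Pi.sub_apply]
      rw [integral_sub hφ.restrict hh.restrict, this, mul_sub, ← mul_assoc, inv_mul_cancel₀ hx',
        one_mul]
    rw [e1, Pi.sub_apply]
    have : avg μ K φ x - φ x = (avg μ K φ x - h x) - (φ x - h x) := by ring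
    rw [this]; exact abs_sub _ _
  have hφavg := (integral_abs_avg_le K hφ).1
  calc ∫ x, |avg μ K φ x - φ x| ∂μ ≤ ∫ x, (|avg μ K (φ - h) x| + |(φ - h) x|) ∂μ :=
        integral_mono_ae (hφavg.sub hφ).abs (i1.abs.add hdi.abs) hae
    _ = ∫ x, |avg μ K (φ - h) x| ∂μ + ∫ x, |(φ - h) x| ∂μ := integral_add i1.abs hdi.abs
    _ < ε := by linarith

end Far

/-! ### The Radon–Nikodym cocycle -/

section Cocycle

variable {S : Type*}

/-- The skew product over the shift with fibre translation `-w₁`. -/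
def skew (w₁ : Seq S → ℝ) : Equiv.Perm (Seq S × ℝ) where
  toFun z := (shiftZ 1 z.1, z.2 - w₁ z.1)
  invFun z := (shiftZ (-1) z.1, z.2 + w₁ (shiftZ (-1) z.1))
  left_inv z := by
    have : shiftZ (-1) (shiftZ 1 z.1) = z.1 := by funext k; simp [shiftZ]
    ext1 <;> simp [this]
  right_inv z := by
    have : shiftZ 1 (shiftZ (-1) z.1) = z.1 := by funext k; simp [shiftZ]
    ext1 <;> simp [this]

/-- `c n` is a version of the logarithm of the Radon–Nikodym derivative of the `n`-th power of the
shift which satisfies the cocycle identity everywhere. -/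
structure Coc [MeasurableSpace S] (μ : Measure (Seq S)) (c : ℤ → Seq S → ℝ) : Prop where
  meas : ∀ n, Measurable (c n)
  add : ∀ m n x, c (m + n) x = c m x + c n (shiftZ m x)
  lint : ∀ n (f : Seq S → ENNReal), Measurable f →
    ∫⁻ x, f (shiftZ n x) * ENNReal.ofReal (Real.exp (c n x)) ∂μ = ∫⁻ x, f x ∂μ

variable [Fintype S] [MeasurableSpace S] [MeasurableSingletonClass S]
  {μ : Measure (Seq S)} {A : S → S → Bool} {P : ℤ → S → S → ℝ} {π : ℤ → S → ℝ} {δ : ℝ} {M : ℕ}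

/-- The property of `n` from which the cocycle is assembled. -/
def CocAt (μ : Measure (Seq S)) (w₁ : Seq S → ℝ) (n : ℤ) (f : Seq S → ℝ) : Prop :=
  Measurable f ∧ (∀ x t, ((skew w₁) ^ n) (x, t) = (shiftZ n x, t - f x)) ∧
  ∀ g : Seq S → ENNReal, Measurable g →
    ∫⁻ x, g (shiftZ n x) * ENNReal.ofReal (Real.exp (f x)) ∂μ = ∫⁻ x, g x ∂μ

lemma measurable_ofReal_exp {f : Seq S → ℝ} (hf : Measurable f) :
    Measurable fun x => ENNReal.ofReal (Real.exp (f x)) :=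
  (Real.measurable_exp.comp hf).ennreal_ofReal

lemma CocAt.add {w₁ f g : Seq S → ℝ} {m n : ℤ} (hf : CocAt μ w₁ m f) (hg : CocAt μ w₁ n g) :
    CocAt μ w₁ (m + n) (fun x => f x + g (shiftZ m x)) := by
  refine ⟨hf.1.add (hg.1.comp (measurable_shiftZ m)), fun x t => ?_, fun k hk => ?_⟩
  · rw [add_comm m n, zpow_add, Equiv.Perm.mul_apply, hf.2.1, hg.2.1, shiftZ_add, sub_sub]
  · rw [← hg.2.2 k hk, ← hf.2.2 (fun x => k (shiftZ n x) * ENNReal.ofReal (Real.exp (g x)))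
      ((hk.comp (measurable_shiftZ n)).mul (measurable_ofReal_exp hg.1))]
    refine lintegral_congr fun x => ?_
    rw [shiftZ_add, Real.exp_add, ENNReal.ofReal_mul (Real.exp_pos _).le, add_comm n m]
    ring

lemma CocAt.neg {w₁ f : Seq S → ℝ} {n : ℤ} (hf : CocAt μ w₁ n f) :
    CocAt μ w₁ (-n) (fun x => - f (shiftZ (-n) x)) := by
  have hm : Measurable fun x => - f (shiftZ (-n) x) := (hf.1.comp (measurable_shiftZ (-n))).neg
  refine ⟨hm, fun x t => ?_, fun k hk => ?_⟩
  · rw [zpow_neg, Equiv.Perm.inv_eq_iff_eq, hf.2.1, shiftZ_add]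
    simp [shiftZ_zero]
  · rw [← hf.2.2 (fun x => k (shiftZ (-n) x) * ENNReal.ofReal (Real.exp (- f (shiftZ (-n) x))))
      ((hk.comp (measurable_shiftZ (-n))).mul (measurable_ofReal_exp hm))]
    refine lintegral_congr fun x => ?_
    rw [shiftZ_add, neg_add_cancel, shiftZ_zero, mul_assoc, ← ENNReal.ofReal_mul (Real.exp_pos _).le,
      ← Real.exp_add, neg_add_cancel, Real.exp_zero, ENNReal.ofReal_one, mul_one]

lemma exists_cocAt_one [IsProbabilityMeasure μ] (hns : ShiftNonsingular μ) :
    ∃ w₁, CocAt μ w₁ 1 w₁ := by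
  set ν := μ.map (shiftZ (-1)) with hν
  have hν1 : IsProbabilityMeasure ν :=
    Measure.isProbabilityMeasure_map (measurable_shiftZ _).aemeasurable
  have pre : ∀ E : Set (Seq S), shiftMap ⁻¹' (shiftZ (-1) ⁻¹' E) = E := by
    intro E; ext x
    simp only [Set.mem_preimage, shiftMap]
    rw [shiftZ_add]; simp [shiftZ_zero]
  have hsm : Measurable (shiftMap : Seq S → Seq S) := measurable_shiftZ 1
  have ac1 : ν ≪ μ := by
    refine Measure.AbsolutelyContinuous.mk fun E hE h0 => ?_
    rw [hν, Measure.map_apply (measurable_shiftZ _) hE]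
    refine hns.2 ?_
    rw [Measure.map_apply hsm (measurable_shiftZ _ hE), pre, h0]
  have ac2 : μ ≪ ν := by
    refine Measure.AbsolutelyContinuous.mk fun E hE h0 => ?_
    rw [hν, Measure.map_apply (measurable_shiftZ _) hE] at h0
    have := hns.1 h0
    rwa [Measure.map_apply hsm (measurable_shiftZ _ hE), pre] at this
  refine ⟨llr ν μ, measurable_llr ν μ, fun x t => ?_, fun g hg => ?_⟩
  · rw [zpow_one]; rfl
  · have hg1 : Measurable (fun x => g (shiftZ 1 x)) := hg.comp (measurable_shiftZ 1)
    have h1 : ∫⁻ x, g (shiftZ 1 x) ∂ν = ∫⁻ x, g x ∂μ := by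
      rw [hν, lintegral_map hg1 (measurable_shiftZ _)]
      simp only [shiftZ_add]
      simp [shiftZ_zero]
    rw [← h1, ← lintegral_rnDeriv_mul ac1 hg1.aemeasurable]
    refine lintegral_congr_ae ?_
    filter_upwards [exp_llr_of_ac' ν μ ac2, Measure.rnDeriv_ne_top ν μ] with x hx hx2
    rw [hx, ENNReal.ofReal_toReal hx2, mul_comm]

lemma exists_coc [IsProbabilityMeasure μ] (hns : ShiftNonsingular μ) : ∃ c, Coc μ c := by
  obtain ⟨w₁, hw₁⟩ := exists_cocAt_one hns
  have nat : ∀ n : ℕ, ∃ f, CocAt μ w₁ n f := by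
    intro n
    induction n with
    | zero => exact ⟨fun _ => 0, measurable_const, fun x t => by simp [shiftZ_zero],
        fun g hg => by simp [shiftZ_zero]⟩
    | succ n ih =>
      obtain ⟨f, hf⟩ := ih
      exact ⟨_, by push_cast; exact hf.add hw₁⟩
  have all : ∀ n : ℤ, ∃ f, CocAt μ w₁ n f := by
    intro n
    obtain ⟨k, rfl | rfl⟩ := Int.eq_nat_or_neg n
    · exact nat k
    · obtain ⟨f, hf⟩ := nat k
      exact ⟨_, hf.neg⟩
  choose c hc using all
  refine ⟨c, fun n => (hc n).1, fun m n x => ?_, fun n => (hc n).2.2⟩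
  have h1 := (hc (m + n)).2.1 x 0
  rw [((hc m).add (hc n)).2.1 x 0] at h1
  have := congrArg Prod.snd h1
  simp only at this
  linarith

lemma Coc.zero {c : ℤ → Seq S → ℝ} (hc : Coc μ c) (x : Seq S) : c 0 x = 0 := by
  have := hc.add 0 0 x
  rw [shiftZ_zero, add_zero] at this
  linarith

lemma Coc.map_eq {c : ℤ → Seq S → ℝ} (hc : Coc μ c) (n : ℤ) :
    μ.map (shiftZ (-n)) = μ.withDensity fun x => ENNReal.ofReal (Real.exp (c n x)) := by
  ext E hE
  rw [Measure.map_apply (measurable_shiftZ _) hE, withDensity_apply _ hE,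
    ← lintegral_indicator_one (measurable_shiftZ _ hE), ← hc.lint n _
      (measurable_one.indicator (measurable_shiftZ _ hE)), ← lintegral_indicator hE]
  refine lintegral_congr fun x => ?_
  by_cases hx : x ∈ E
  · rw [Set.indicator_of_mem hx, Set.indicator_of_mem, Pi.one_apply, one_mul]
    rw [Set.mem_preimage, shiftZ_add]; simpa [shiftZ_zero] using hx
  · rw [Set.indicator_of_notMem hx, Set.indicator_of_notMem, zero_mul]
    rw [Set.mem_preimage, shiftZ_add]; simpa [shiftZ_zero] using hx

lemma MC.rep_lintegral (h : MC μ A P π δ M) {a b : ℤ} {w v : Seq S} (hs : Sw A a b w v)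
    {f : Seq S → ENNReal} (hf : Measurable f) :
    ENNReal.ofReal (pr P a b v) * ∫⁻ x in MarkovSFT.cyl a b w, f (rep a b v x) ∂μ
      = ENNReal.ofReal (pr P a b w) * ∫⁻ x in MarkovSFT.cyl a b v, f x ∂μ := by
  have main : ENNReal.ofReal (pr P a b v) • (μ.restrict (MarkovSFT.cyl a b w)).map (rep a b v)
      = ENNReal.ofReal (pr P a b w) • μ.restrict (MarkovSFT.cyl a b v) := by
    ext E hE
    rw [Measure.smul_apply, Measure.smul_apply, Measure.map_apply (measurable_rep a b v) hE,
      Measure.restrict_apply (measurable_rep a b v hE), Measure.restrict_apply hE, smul_eq_mul,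
      smul_eq_mul, Set.inter_comm, h.rep_measure hs hE, Set.inter_comm]
  have := congrArg (fun ν => ∫⁻ x, f x ∂ν) main
  simp only [lintegral_smul_measure, smul_eq_mul] at this
  rwa [lintegral_map hf (measurable_rep a b v)] at this

/-- The effect of a block replacement on the cocycle. -/
lemma MC.coc_rep (h : MC μ A P π δ M) {c : ℤ → Seq S → ℝ} (hc : Coc μ c) {a b : ℤ} {w v : Seq S}
    (hs : Sw A a b w v) (n : ℤ) :
    ∀ᵐ x ∂μ, x ∈ MarkovSFT.cyl a b w →
      c n (rep a b v x) = c n x + RR (fun k => P (k - n)) a b w v - RR P a b w v := by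
  have := h.prob
  have h' := h.shift n
  set P' : ℤ → S → S → ℝ := fun k => P (k - n) with hP'
  set ψ : Seq S → ENNReal := fun x => ENNReal.ofReal (Real.exp (c n x)) with hψ
  have hψm : Measurable ψ := measurable_ofReal_exp (hc.meas n)
  have hw := h.pr_pos hs.adm_w
  have hv := h.pr_pos hs.adm_v
  have hw' := h'.pr_pos hs.adm_w
  have hv' := h'.pr_pos hs.adm_v
  have hrm := measurable_rep a b v
  -- equality of set integrals over the cylinder
  have key : ∀ G : Set (Seq S), MeasurableSet G →
      ∫⁻ x in G, ENNReal.ofReal (pr P' a b v * pr P a b w) * ψ x ∂(μ.restrict (MarkovSFT.cyl a b w))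
      = ∫⁻ x in G, ENNReal.ofReal (pr P' a b w * pr P a b v) * ψ (rep a b v x)
          ∂(μ.restrict (MarkovSFT.cyl a b w)) := by
    intro G hG
    have hGm : MeasurableSet (rep a b w ⁻¹' G) := measurable_rep a b w hG
    set f : Seq S → ENNReal := (rep a b w ⁻¹' G).indicator 1 with hf
    have hfm : Measurable f := measurable_one.indicator hGm
    have hfx : ∀ x ∈ MarkovSFT.cyl a b w, f (rep a b v x) = G.indicator 1 x := by
      intro x hx
      have e : rep a b v x ∈ rep a b w ⁻¹' G ↔ x ∈ G := by
        show rep a b w (rep a b v x) ∈ G ↔ _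
        rw [rep_rep v hx]
      by_cases hG : x ∈ G
      · rw [hf, Set.indicator_of_mem (e.2 hG), Set.indicator_of_mem hG]; rfl
      · rw [hf, Set.indicator_of_notMem (fun h => hG (e.1 h)), Set.indicator_of_notMem hG]
    have e1 := h'.rep_lintegral hs hfm
    rw [hc.map_eq n, restrict_withDensity (measurableSet_cyl _ _ _),
      restrict_withDensity (measurableSet_cyl _ _ _),
      lintegral_withDensity_eq_lintegral_mul _ hψm (show Measurable fun x => f (rep a b v x) from hfm.comp hrm),
      lintegral_withDensity_eq_lintegral_mul _ hψm hfm] at e1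
    have e2 := h.rep_lintegral hs (hψm.mul hfm)
    have e1' : ∫⁻ x in MarkovSFT.cyl a b w, (ψ * f ∘ rep a b v) x ∂μ
        = ∫⁻ x in G, ψ x ∂(μ.restrict (MarkovSFT.cyl a b w)) := by
      rw [← lintegral_indicator hG]
      refine setLIntegral_congr_fun (measurableSet_cyl _ _ _) fun x hx => ?_
      simp only [Pi.mul_apply, Function.comp, hfx x hx]
      by_cases hxG : x ∈ G <;> simp [hxG]
    have e2' : ∫⁻ x in MarkovSFT.cyl a b w, (ψ * f) (rep a b v x) ∂μ
        = ∫⁻ x in G, ψ (rep a b v x) ∂(μ.restrict (MarkovSFT.cyl a b w)) := by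
      rw [← lintegral_indicator hG]
      refine setLIntegral_congr_fun (measurableSet_cyl _ _ _) fun x hx => ?_
      simp only [Pi.mul_apply, hfx x hx]
      by_cases hxG : x ∈ G <;> simp [hxG]
    have eC₁ : ∫⁻ x in MarkovSFT.cyl a b w, (ψ * fun x => f (rep a b v x)) x ∂μ
        = ∫⁻ x in G, ψ x ∂(μ.restrict (MarkovSFT.cyl a b w)) := e1'
    have eC₂ : ∫⁻ x in MarkovSFT.cyl a b w, (fun x => ψ x * f x) (rep a b v x) ∂μ
        = ∫⁻ x in G, ψ (rep a b v x) ∂(μ.restrict (MarkovSFT.cyl a b w)) := e2'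
    rw [lintegral_const_mul _ hψm, lintegral_const_mul _ (show Measurable fun x => ψ (rep a b v x) from hψm.comp hrm)]
    have eD₁ : ENNReal.ofReal (pr P' a b v) * ∫⁻ x in G, ψ x ∂(μ.restrict (MarkovSFT.cyl a b w))
      = ENNReal.ofReal (pr P' a b w) * ∫⁻ x in MarkovSFT.cyl a b v, ψ x * f x ∂μ := by
      rw [← eC₁]; exact e1
    have eD₂ : ENNReal.ofReal (pr P a b v) *
        ∫⁻ x in G, ψ (rep a b v x) ∂(μ.restrict (MarkovSFT.cyl a b w))
      = ENNReal.ofReal (pr P a b w) * ∫⁻ x in MarkovSFT.cyl a b v, ψ x * f x ∂μ := by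
      rw [← eC₂]; exact e2
    rw [ENNReal.ofReal_mul hv'.le, ENNReal.ofReal_mul hw'.le,
      mul_comm (ENNReal.ofReal (pr P' a b v)), mul_assoc, eD₁, mul_assoc, eD₂]
    ring
  have hae := ae_eq_of_forall_setLIntegral_eq_of_sigmaFinite
    (μ := μ.restrict (MarkovSFT.cyl a b w)) (hψm.const_mul _) ((hψm.comp hrm).const_mul _)
    (fun G hG _ => key G hG)
  rw [Filter.EventuallyEq, ae_restrict_iff' (measurableSet_cyl _ _ _)] at hae
  filter_upwards [hae] with x hx hxm
  have h1 := hx hxm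
  simp only [hψ, Function.comp] at h1
  rw [← ENNReal.ofReal_mul (by positivity), ← ENNReal.ofReal_mul (by positivity),
    ENNReal.ofReal_eq_ofReal_iff (by positivity) (by positivity)] at h1
  have h2 := congrArg Real.log h1
  rw [Real.log_mul (by positivity) (by positivity), Real.log_mul (by positivity) (by positivity),
    Real.log_mul (by positivity) (by positivity), Real.log_mul (by positivity) (by positivity),
    Real.log_exp, Real.log_exp] at h2
  unfold RR
  linarith

/-- The logarithmic gain when the block `w` placed at site `a` (with window `[a, a + b]`)
is replaced by `v`. -/
noncomputable def Rs (P : ℤ → S → S → ℝ) (b : ℤ) (w v : Seq S) (a : ℤ) : ℝ :=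
  RR P a (a + b) (shiftZ (-a) w) (shiftZ (-a) v)

lemma Sw.site {b : ℤ} {w v : Seq S} (hs : Sw A 0 b w v) (a : ℤ) :
    Sw A a (a + b) (shiftZ (-a) w) (shiftZ (-a) v) := by
  have := hs.shift a
  rwa [zero_add, add_comm b a] at this

lemma RR_shift (P : ℤ → S → S → ℝ) (b : ℤ) (w v : Seq S) (a n : ℤ) :
    RR (fun k => P (k - n)) a (a + b) (shiftZ (-a) w) (shiftZ (-a) v) = Rs P b w v (a - n) := by
  unfold Rs RR
  rw [pr_shift, pr_shift, shiftZ_add, shiftZ_add, show n + -a = -(a - n) by ring,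
    show a + b - n = a - n + b by ring]

lemma MC.coc_rep_site (h : MC μ A P π δ M) {c : ℤ → Seq S → ℝ} (hc : Coc μ c) {b : ℤ}
    {w v : Seq S} (hs : Sw A 0 b w v) (a : ℤ) :
    ∀ᵐ x ∂μ, x ∈ MarkovSFT.cyl a (a + b) (shiftZ (-a) w) → ∀ n,
      c n (rep a (a + b) (shiftZ (-a) v) x) = c n x + Rs P b w v (a - n) - Rs P b w v a := by
  have : ∀ᵐ x ∂μ, ∀ n, x ∈ MarkovSFT.cyl a (a + b) (shiftZ (-a) w) →
      c n (rep a (a + b) (shiftZ (-a) v) x) = c n x + Rs P b w v (a - n) - Rs P b w v a := by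
    rw [ae_all_iff]
    intro n
    have := h.coc_rep hc (hs.site a) n
    rw [RR_shift] at this
    exact this
  filter_upwards [this] with x hx hxm n using hx n hxm

lemma MC.Rs_bdd (h : MC μ A P π δ M) {b : ℤ} {w v : Seq S} (hs : Sw A 0 b w v) (a : ℤ) :
    |Rs P b w v a| ≤ -Real.log (δ ^ b.toNat) := by
  have hsa := hs.site a
  have key : ∀ u, Adm A a (a + b) u → Real.log (δ ^ b.toNat) ≤ Real.log (pr P a (a + b) u) ∧
      Real.log (pr P a (a + b) u) ≤ 0 := by
    intro u hu
    have h1 := h.pr_ge hu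
    rw [show a + b - a = b by ring] at h1
    exact ⟨Real.log_le_log (pow_pos h.δpos _) h1,
      Real.log_nonpos (h.pr_nonneg _ _ _) (h.pr_le_one _ _ _)⟩
  have k1 := key _ hsa.adm_w
  have k2 := key _ hsa.adm_v
  unfold Rs RR
  rw [abs_le]
  constructor <;> linarith [k1.1, k1.2, k2.1, k2.2]

/-- Nonsingularity of the shift forces the logarithmic gains to vary slowly. -/
lemma MC.slow (h : MC μ A P π δ M) {c : ℤ → Seq S → ℝ} (hc : Coc μ c) {b : ℤ}
    {w v : Seq S} (hs : Sw A 0 b w v) :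
    Tendsto (fun a => Rs P b w v (a - 1) - Rs P b w v a) cofinite (𝓝 0) := by
  have := h.prob
  rw [Metric.tendsto_nhds]
  intro ε hε
  obtain ⟨k, hk, hk2⟩ := h.mix_pos hs.le hs.adm_w (Z := Set.univ) MeasurableSet.univ (by simp)
  have hfar := Metric.tendsto_nhds.1 (h.far hs (hc.meas 1) (η := ε / 2) (by positivity)) k hk
  filter_upwards [hk2, hfar] with a ha1 ha2
  rw [Real.dist_eq, sub_zero] at ha2 ⊢
  by_contra hcon
  push Not at hcon
  rw [Set.univ_inter] at ha1
  have : μ.real (MarkovSFT.cyl a (a + b) (shiftZ (-a) w)) ≤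
      μ.real (MarkovSFT.cyl a (a + b) (shiftZ (-a) w) ∩
      {x | ε / 2 < |c 1 (rep a (a + b) (shiftZ (-a) v) x) - c 1 x|}) := by
    refine ENNReal.toReal_mono (measure_ne_top _ _) (measure_mono_ae ?_)
    filter_upwards [h.coc_rep_site hc hs a] with x hx hxm
    refine ⟨hxm, ?_⟩
    show ε / 2 < |c 1 (rep a (a + b) (shiftZ (-a) v) x) - c 1 x|
    rw [hx hxm 1]
    rw [show c 1 x + Rs P b w v (a - 1) - Rs P b w v a - c 1 x
      = Rs P b w v (a - 1) - Rs P b w v a by ring]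
    linarith
  rw [abs_of_nonneg measureReal_nonneg] at ha2
  linarith

end Cocycle

/-! ### The Maharam extension and its conservativity -/

section Maharam

variable {S : Type*} [Fintype S] [MeasurableSpace S] [MeasurableSingletonClass S]
  {μ : Measure (Seq S)} {A : S → S → Bool} {P : ℤ → S → S → ℝ} {π : ℤ → S → ℝ} {δ : ℝ} {M : ℕ}
  {c : ℤ → Seq S → ℝ}

/-- The `n`-th power of the Maharam extension of the shift: `(x, t) ↦ (Tⁿ x, t - cₙ(x))`. -/
def Tz (c : ℤ → Seq S → ℝ) (n : ℤ) (z : Seq S × ℝ) : Seq S × ℝ := (shiftZ n z.1, z.2 - c n z.1)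

/-- The measure `eᵗ dt` on the line. -/
noncomputable def expM : Measure ℝ := volume.withDensity fun t => ENNReal.ofReal (Real.exp t)

instance : SFinite expM := by unfold expM; infer_instance

/-- The measure `dμ(x) eᵗ dt`, invariant under the Maharam extension. -/
noncomputable def mah (μ : Measure (Seq S)) : Measure (Seq S × ℝ) := μ.prod expM

lemma lintegral_expM {f : ℝ → ENNReal} (hf : Measurable f) :
    ∫⁻ t, f t ∂expM = ∫⁻ t, f t * ENNReal.ofReal (Real.exp t) := by
  unfold expM
  rw [lintegral_withDensity_eq_lintegral_mul _ Real.measurable_exp.ennreal_ofReal hf]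
  exact lintegral_congr fun t => mul_comm _ _

lemma lintegral_mah [SFinite μ] {f : Seq S × ℝ → ENNReal} (hf : Measurable f) :
    ∫⁻ z, f z ∂(mah μ) = ∫⁻ x, ∫⁻ t, f (x, t) * ENNReal.ofReal (Real.exp t) ∂volume ∂μ := by
  unfold mah
  rw [lintegral_prod _ hf.aemeasurable]
  exact lintegral_congr fun x => lintegral_expM (hf.comp measurable_prodMk_left)

lemma Coc.measurable_Tz (hc : Coc μ c) (n : ℤ) : Measurable (Tz c n) :=
  ((measurable_shiftZ n).comp measurable_fst).prodMk
    (measurable_snd.sub ((hc.meas n).comp measurable_fst))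

lemma Coc.Tz_add (hc : Coc μ c) (m n : ℤ) (z : Seq S × ℝ) : Tz c n (Tz c m z) = Tz c (m + n) z := by
  unfold Tz
  rw [hc.add m n, shiftZ_add, add_comm n m, sub_sub]

lemma Coc.Tz_zero (hc : Coc μ c) (z : Seq S × ℝ) : Tz c 0 z = z := by
  unfold Tz
  rw [hc.zero, shiftZ_zero, sub_zero]

lemma Coc.Tz_iterate (hc : Coc μ c) (n : ℕ) (z : Seq S × ℝ) : (Tz c 1)^[n] z = Tz c n z := by
  induction n generalizing z with
  | zero => simp [hc.Tz_zero]
  | succ n ih => rw [Function.iterate_succ_apply, ih, hc.Tz_add]; push_cast; rw [add_comm]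

lemma Coc.lintegral_Tz [SFinite μ] (hc : Coc μ c) (n : ℤ) {f : Seq S × ℝ → ENNReal}
    (hf : Measurable f) : ∫⁻ z, f (Tz c n z) ∂(mah μ) = ∫⁻ z, f z ∂(mah μ) := by
  rw [lintegral_mah (show Measurable fun z => f (Tz c n z) from hf.comp (hc.measurable_Tz n)),
    lintegral_mah hf]
  have hfe : Measurable fun z : Seq S × ℝ => f z * ENNReal.ofReal (Real.exp z.2) :=
    hf.mul (Real.measurable_exp.comp measurable_snd).ennreal_ofReal
  have hm : Measurable fun x => ∫⁻ t, f (x, t) * ENNReal.ofReal (Real.exp t) := hfe.lintegral_prod_right'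
  rw [← hc.lint n _ hm]
  refine lintegral_congr fun x => ?_
  have hfx : Measurable fun t => f (shiftZ n x, t) * ENNReal.ofReal (Real.exp t) :=
    hfe.comp measurable_prodMk_left
  rw [← lintegral_mul_const _ hfx, ← lintegral_sub_right_eq_self (fun t =>
    f (shiftZ n x, t) * ENNReal.ofReal (Real.exp t) * ENNReal.ofReal (Real.exp (c n x))) (c n x)]
  refine lintegral_congr fun t => ?_
  show f (shiftZ n x, t - c n x) * _ = _
  rw [mul_assoc, ← ENNReal.ofReal_mul (Real.exp_pos _).le, ← Real.exp_add, sub_add_cancel]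

lemma Coc.measurePreserving [SFinite μ] (hc : Coc μ c) (n : ℤ) :
    MeasurePreserving (Tz c n) (mah μ) (mah μ) := by
  refine ⟨hc.measurable_Tz n, ?_⟩
  ext E hE
  rw [Measure.map_apply (hc.measurable_Tz n) hE, ← lintegral_indicator_one hE,
    ← lintegral_indicator_one (hc.measurable_Tz n hE),
    ← hc.lintegral_Tz n (measurable_one.indicator hE)]
  rfl

/-- Maharam's theorem: conservativity passes to the extension. -/
lemma Coc.conservative [IsProbabilityMeasure μ] (hc : Coc μ c) (hcons : ShiftConservative μ) :
    Conservative (Tz c 1) (mah μ) := by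
  refine ⟨(hc.measurePreserving 1).quasiMeasurePreserving, fun W hW hW0 => ?_⟩
  by_contra hcon
  push Not at hcon
  refine hW0 ?_
  have hwand : ∀ z ∈ W, ∀ n : ℕ, n ≠ 0 → Tz c n z ∉ W := fun z hz n hn => by
    rw [← hc.Tz_iterate]; exact hcon z hz n hn
  have hwand2 : ∀ z (m n : ℤ), Tz c m z ∈ W → Tz c n z ∈ W → m = n := by
    have aux : ∀ z (m n : ℤ), Tz c m z ∈ W → Tz c n z ∈ W → ¬ m < n := by
      intro z m n hm hn hlt
      refine hwand _ hm (n - m).toNat (by omega) ?_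
      rw [hc.Tz_add, Int.toNat_of_nonneg (by omega)]
      simpa using hn
    intro z m n hm hn
    exact le_antisymm (not_lt.1 (aux z n m hn hm)) (not_lt.1 (aux z m n hm hn))
  set Bd : Set (Seq S) := {x | BddAbove (Set.range fun n => c n x)} with hBd
  have hBdm : MeasurableSet Bd := measurableSet_bddAbove_range hc.meas
  set W1 := W ∩ (Prod.fst ⁻¹' Bdᶜ) with hW1
  set W2 := W ∩ (Prod.fst ⁻¹' Bd) with hW2
  have hW1m : MeasurableSet W1 := hW.inter (measurable_fst hBdm.compl)
  have hW2m : MeasurableSet W2 := hW.inter (measurable_fst hBdm)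
  -- where the cocycle is unbounded above, every orbit visits fibre heights of tiny total measure
  have z1 : mah μ W1 = 0 := by
    have key : ∀ s : ℝ, mah μ W1 ≤ ENNReal.ofReal (Real.exp (-s)) := by
      intro s
      set H : Set (Seq S × ℝ) := {z | z.2 ≤ -s} with hH
      have hHm : MeasurableSet H := measurableSet_le measurable_snd measurable_const
      have i1 : Measurable (W1.indicator (1 : Seq S × ℝ → ENNReal)) := measurable_one.indicator hW1m
      have i2 : Measurable (H.indicator (1 : Seq S × ℝ → ENNReal)) := measurable_one.indicator hHm
      calc mah μ W1 = ∫⁻ z, W1.indicator 1 z ∂(mah μ) := (lintegral_indicator_one hW1m).symm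
        _ ≤ ∫⁻ z, ∑' n : ℤ, H.indicator 1 (Tz c n z) * W1.indicator 1 z ∂(mah μ) := by
            refine lintegral_mono fun z => ?_
            by_cases hz : z ∈ W1
            · have hub : ¬ BddAbove (Set.range fun n => c n z.1) := hz.2
              rw [not_bddAbove_iff] at hub
              obtain ⟨_, ⟨n, rfl⟩, hn⟩ := hub (z.2 + s)
              refine le_trans ?_ (ENNReal.le_tsum n)
              have : Tz c n z ∈ H := by
                show z.2 - c n z.1 ≤ -s
                linarith
              rw [Set.indicator_of_mem this]; simp
            · simp [Set.indicator_of_notMem hz]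
        _ = ∑' n : ℤ, ∫⁻ z, H.indicator 1 (Tz c n z) * W1.indicator 1 z ∂(mah μ) :=
            lintegral_tsum fun n => ((i2.comp (hc.measurable_Tz n)).mul i1).aemeasurable
        _ = ∑' n : ℤ, ∫⁻ z, H.indicator 1 z * W1.indicator 1 (Tz c (-n) z) ∂(mah μ) := by
            refine tsum_congr fun n => ?_
            rw [← hc.lintegral_Tz n (f := fun z => H.indicator 1 z * W1.indicator 1 (Tz c (-n) z))
              (i2.mul (i1.comp (hc.measurable_Tz (-n))))]
            refine lintegral_congr fun z => ?_
            rw [hc.Tz_add, add_neg_cancel, hc.Tz_zero]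
        _ = ∫⁻ z, ∑' n : ℤ, H.indicator 1 z * W1.indicator 1 (Tz c (-n) z) ∂(mah μ) :=
            (lintegral_tsum fun n => (i2.mul (i1.comp (hc.measurable_Tz (-n)))).aemeasurable).symm
        _ ≤ ∫⁻ z, H.indicator 1 z ∂(mah μ) := by
            refine lintegral_mono fun z => ?_
            rw [ENNReal.tsum_mul_left]
            refine mul_le_of_le_one_right' ?_
            by_cases hex : ∃ n : ℤ, Tz c (-n) z ∈ W1
            · obtain ⟨n, hn⟩ := hex
              rw [tsum_eq_single n, Set.indicator_of_mem hn]
              · simp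
              · intro m hm
                refine Set.indicator_of_notMem (fun hm2 => hm ?_) _
                have := hwand2 z _ _ hm2.1 hn.1
                omega
            · push Not at hex
              rw [ENNReal.tsum_eq_zero.2 fun n => Set.indicator_of_notMem (hex n) _]
              exact zero_le
        _ = ENNReal.ofReal (Real.exp (-s)) := by
            rw [lintegral_mah i2]
            have : ∀ x : Seq S, ∫⁻ t, H.indicator 1 (x, t) * ENNReal.ofReal (Real.exp t)
                = ENNReal.ofReal (Real.exp (-s)) := by
              intro x
              rw [← integral_exp_Iic, ofReal_integral_eq_lintegral_ofReal
                (integrableOn_exp_Iic _) (Eventually.of_forall fun t => (Real.exp_pos t).le),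
                ← lintegral_indicator measurableSet_Iic]
              refine lintegral_congr fun t => ?_
              by_cases ht : t ≤ -s
              · rw [Set.indicator_of_mem (show (x, t) ∈ H from ht),
                  Set.indicator_of_mem (show t ∈ Set.Iic (-s) from ht)]; simp
              · rw [Set.indicator_of_notMem (show (x, t) ∉ H from ht),
                  Set.indicator_of_notMem (show t ∉ Set.Iic (-s) from ht)]; simp
            simp [this]
    have lim : Tendsto (fun s : ℝ => ENNReal.ofReal (Real.exp (-s))) atTop (𝓝 0) := by
      have := ENNReal.tendsto_ofReal (Real.tendsto_exp_neg_atTop_nhds_zero)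
      rwa [ENNReal.ofReal_zero] at this
    exact le_antisymm (ge_of_tendsto' lim key) zero_le
  -- where it is bounded above, its supremum trivialises it and the base system recurs
  have z2 : mah μ W2 = 0 := by
    set u : Seq S → ℝ := fun x => ⨆ n, c n x with hu
    have hum : Measurable u := Measurable.iSup hc.meas
    have hushift : ∀ x ∈ Bd, ∀ m : ℤ, u (shiftZ m x) = u x - c m x := by
      intro x hx m
      have hx' : BddAbove (Set.range fun n => c n x) := hx
      have h1 : ∀ n, c n (shiftZ m x) = c (m + n) x - c m x := fun n => by rw [hc.add m n]; ring
      simp only [hu, h1]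
      rw [ciSup_sub hx']
      exact (Equiv.addLeft m).iSup_comp (g := fun n => c n x - c m x)
    have i2 : Measurable (W2.indicator (1 : Seq S × ℝ → ENNReal)) := measurable_one.indicator hW2m
    have hmm : Measurable fun p : Seq S × ℝ => (p.1, p.2 + u p.1) :=
      measurable_fst.prodMk (measurable_snd.add (hum.comp measurable_fst))
    have i3 : Measurable fun p : Seq S × ℝ => W2.indicator (1 : Seq S × ℝ → ENNReal)
      (p.1, p.2 + u p.1) * ENNReal.ofReal (Real.exp (p.2 + u p.1)) :=
      (i2.comp hmm).mul (Real.measurable_exp.comp (measurable_snd.comp hmm)).ennreal_ofReal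
    rw [← lintegral_indicator_one hW2m, lintegral_mah i2]
    have e1 : ∀ x, ∫⁻ t, W2.indicator (1 : Seq S × ℝ → ENNReal) (x, t) * ENNReal.ofReal (Real.exp t)
        = ∫⁻ t, W2.indicator (1 : Seq S × ℝ → ENNReal) (x, t + u x)
          * ENNReal.ofReal (Real.exp (t + u x)) := fun x =>
      (lintegral_add_right_eq_self (fun t => W2.indicator (1 : Seq S × ℝ → ENNReal) (x, t)
        * ENNReal.ofReal (Real.exp t)) (u x)).symm
    simp only [e1]
    rw [lintegral_lintegral_swap (f := fun x t => W2.indicator (1 : Seq S × ℝ → ENNReal)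
      (x, t + u x) * ENNReal.ofReal (Real.exp (t + u x))) i3.aemeasurable]
    rw [lintegral_eq_zero_iff i3.lintegral_prod_left']
    refine Eventually.of_forall fun s => ?_
    show ∫⁻ x, W2.indicator (1 : Seq S × ℝ → ENNReal)
      (x, s + u x) * ENNReal.ofReal (Real.exp (s + u x)) ∂μ = 0
    rw [lintegral_eq_zero_iff (show Measurable fun x => W2.indicator (1 : Seq S × ℝ → ENNReal)
      (x, s + u x) * ENNReal.ofReal (Real.exp (s + u x)) from
      i3.comp (measurable_prodMk_right (y := s)))]
    set Ws : Set (Seq S) := {x | (x, s + u x) ∈ W2} with hWs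
    have hWsm : MeasurableSet Ws :=
      (measurable_id.prodMk (measurable_const.add hum)) hW2m
    have hWs0 : μ Ws = 0 := by
      by_contra hpos
      obtain ⟨n, hn, hn2⟩ := hcons Ws hWsm (pos_iff_ne_zero.2 hpos)
      obtain ⟨x, hx, hx2⟩ := nonempty_of_measure_ne_zero hn2.ne'
      have hit : (shiftMap (S := S))^[n] x = shiftZ n x := by
        have := congrArg Prod.fst (hc.Tz_iterate n (x, 0))
        rw [show (Tz c n (x, 0)).1 = shiftZ n x from rfl] at this
        rw [← this]
        clear this hx hx2 hn hn2
        have : ∀ z : Seq S × ℝ, ((Tz c 1)^[n] z).1 = (shiftMap (S := S))^[n] z.1 := by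
          induction n with
          | zero => intro z; rfl
          | succ n ih => intro z; rw [Function.iterate_succ_apply, ih]; rfl
        exact (this (x, 0)).symm
      rw [Set.mem_preimage, hit] at hx2
      have hx3 : (shiftZ n x, s + u (shiftZ n x)) ∈ W2 := hx2
      rw [hushift x hx.2 n] at hx3
      refine hwand _ hx.1 n (by omega) ?_
      have := hx3.1
      rwa [← add_sub_assoc] at this
    have : ∀ᵐ x ∂μ, x ∉ Ws := measure_eq_zero_iff_ae_notMem.1 hWs0
    filter_upwards [this] with x hx
    show W2.indicator (1 : Seq S × ℝ → ENNReal)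
      (x, s + u x) * ENNReal.ofReal (Real.exp (s + u x)) = 0
    rw [Set.indicator_of_notMem (show (x, s + u x) ∉ W2 from hx), zero_mul]
  have hun : W = W1 ∪ W2 := by
    rw [hW1, hW2, ← Set.inter_union_distrib_left, ← Set.preimage_union, Set.compl_union_self,
      Set.preimage_univ, Set.inter_univ]
  rw [hun]
  exact measure_union_null z1 z2

lemma ae_expM_iff {p : ℝ → Prop} (hp : ∀ᵐ t ∂expM, p t) : ∀ᵐ t, p t := by
  unfold expM at hp
  rw [ae_withDensity_iff Real.measurable_exp.ennreal_ofReal] at hp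
  filter_upwards [hp] with t ht
  exact ht (by simpa using Real.exp_pos t)

/-- The Radon–Nikodym cocycle of a conservative shift is recurrent. -/
lemma Coc.recurrent [IsProbabilityMeasure μ] (hc : Coc μ c) (hcons : ShiftConservative μ) :
    ∀ᵐ x ∂μ, ∃ k : ℝ, ∃ᶠ n : ℕ in atTop, |c n x| ≤ k := by
  have h1 := (hc.conservative hcons).ae_mem_imp_frequently_image_mem (s := {z | |z.2| ≤ 1})
    (measurableSet_le (measurable_snd.abs) measurable_const).nullMeasurableSet
  have h2 := Measure.ae_ae_of_ae_prod h1
  filter_upwards [h2] with x hx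
  have hx2 := ae_expM_iff hx
  have : ∃ t ∈ Set.Icc (-1 : ℝ) 1, ∃ᶠ n : ℕ in atTop, (Tz c 1)^[n] (x, t) ∈ {z | |z.2| ≤ 1} := by
    by_contra hno
    push Not at hno
    have h0 : volume (Set.Icc (-1 : ℝ) 1) = 0 := by
      rw [measure_eq_zero_iff_ae_notMem]
      filter_upwards [hx2] with t ht htm
      exact (ht (abs_le.2 htm)) (hno t htm)
    rw [Real.volume_Icc] at h0
    norm_num at h0
  obtain ⟨t, ht, hfreq⟩ := this
  refine ⟨2, hfreq.mono fun n hn => ?_⟩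
  rw [hc.Tz_iterate] at hn
  have hn' : |t - c n x| ≤ 1 := hn
  rw [abs_le] at hn' ⊢
  constructor <;> linarith [ht.1, ht.2, hn'.1, hn'.2]

end Maharam

/-! ### A maximal inequality -/

section Garsia

variable {Z : Type*} [MeasurableSpace Z] {m : Measure Z} {τ : Z → Z}

/-- The maximum of the Birkhoff sums of `h` of length at most `N`, defined recursively. -/
noncomputable def maxSum (τ : Z → Z) (h : Z → ℝ) : ℕ → Z → ℝ
  | 0 => fun _ => 0
  | N + 1 => fun z => max 0 (h z + maxSum τ h N (τ z))

lemma maxSum_nonneg (h : Z → ℝ) (N : ℕ) (z : Z) : 0 ≤ maxSum τ h N z := by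
  cases N with
  | zero => exact le_rfl
  | succ N => exact le_max_left _ _

lemma maxSum_mono (h : Z → ℝ) (N : ℕ) (z : Z) : maxSum τ h N z ≤ maxSum τ h (N + 1) z := by
  induction N generalizing z with
  | zero => exact maxSum_nonneg _ _ _
  | succ N ih => exact max_le_max le_rfl (by linarith [ih (τ z)])

lemma birkhoffSum_le_maxSum (h : Z → ℝ) (N : ℕ) (z : Z) : birkhoffSum τ h N z ≤ maxSum τ h N z := by
  induction N generalizing z with
  | zero => simp [maxSum]
  | succ N ih =>
    rw [birkhoffSum_succ']
    exact le_trans (by linarith [ih (τ z)]) (le_max_right _ _)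

lemma measurable_maxSum (hτ : Measurable τ) {h : Z → ℝ} (hh : Measurable h) (N : ℕ) :
    Measurable (maxSum τ h N) := by
  induction N with
  | zero => exact measurable_const
  | succ N ih => exact measurable_const.max (hh.add (ih.comp hτ))

lemma integrable_maxSum (hτ : MeasurePreserving τ m m) {h : Z → ℝ} (hh : Integrable h m) (N : ℕ) :
    Integrable (maxSum τ h N) m := by
  induction N with
  | zero => exact integrable_zero _ _ _
  | succ N ih =>
    exact (integrable_zero _ _ _).sup (hh.add ((hτ.integrable_comp ih.1).2 ih))

/-- Garsia's inequality. -/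
lemma garsia (hτ : MeasurePreserving τ m m) {h : Z → ℝ} (hhm : Measurable h) (hh : Integrable h m)
    (N : ℕ) : 0 ≤ ∫ z in {z | 0 < maxSum τ h (N + 1) z}, h z ∂m := by
  set E := {z | 0 < maxSum τ h (N + 1) z} with hE
  have hEm : MeasurableSet E :=
    measurableSet_lt measurable_const (measurable_maxSum hτ.measurable hhm _)
  have i1 := integrable_maxSum hτ hh (N + 1)
  have i2 : Integrable (fun z => maxSum τ h (N + 1) (τ z)) m := (hτ.integrable_comp i1.1).2 i1
  have e1 : ∫ z in E, maxSum τ h (N + 1) z ∂m = ∫ z, maxSum τ h (N + 1) z ∂m := by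
    refine setIntegral_eq_integral_of_forall_compl_eq_zero fun z hz => ?_
    exact le_antisymm (not_lt.1 hz) (maxSum_nonneg _ _ _)
  have e2 : ∫ z in E, maxSum τ h (N + 1) (τ z) ∂m ≤ ∫ z, maxSum τ h (N + 1) z ∂m := by
    have e3 : ∫ z, maxSum τ h (N + 1) (τ z) ∂m = ∫ z, maxSum τ h (N + 1) z ∂m := by
      conv_rhs => rw [← hτ.map_eq]
      rw [integral_map hτ.measurable.aemeasurable]
      rw [hτ.map_eq]
      exact i1.1
    rw [← e3]
    exact setIntegral_le_integral i2 (Eventually.of_forall fun z => maxSum_nonneg _ _ _)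
  have e4 : ∫ z in E, (maxSum τ h (N + 1) z - maxSum τ h (N + 1) (τ z)) ∂m ≤ ∫ z in E, h z ∂m := by
    refine setIntegral_mono_on (i1.integrableOn.sub i2.integrableOn) hh.integrableOn hEm
      fun z hz => ?_
    have hz' : 0 < maxSum τ h (N + 1) z := hz
    have h1 : maxSum τ h (N + 1) z = max 0 (h z + maxSum τ h N (τ z)) := rfl
    have h2 : maxSum τ h (N + 1) z = h z + maxSum τ h N (τ z) := by
      rw [h1] at hz' ⊢
      exact max_eq_right (by by_contra hcon; push Not at hcon; rw [max_eq_left hcon.le] at hz'; exact lt_irrefl _ hz')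
    linarith [maxSum_mono (τ := τ) h N (τ z)]
  rw [integral_sub i1.integrableOn i2.integrableOn] at e4
  linarith

/-- The ratio form of the maximal inequality. -/
lemma garsia_ratio (hτ : MeasurePreserving τ m m) {d g : Z → ℝ} (hdm : Measurable d)
    (hd : Integrable d m) (hd0 : ∀ z, 0 ≤ d z) (hgm : Measurable g) (hg : Integrable g m)
    (hg0 : ∀ z, 0 ≤ g z) {l : ℝ} (hl : 0 < l) :
    (m.withDensity fun z => ENNReal.ofReal (g z))
      {z | ∃ N, l * birkhoffSum τ g N z < birkhoffSum τ d N z}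
      ≤ ENNReal.ofReal ((∫ z, d z ∂m) / l) := by
  set h : Z → ℝ := fun z => d z - l * g z with hh
  have hhm : Measurable h := hdm.sub (hgm.const_mul l)
  have hhi : Integrable h m := hd.sub (hg.const_mul l)
  set E : ℕ → Set Z := fun N => {z | 0 < maxSum τ h (N + 1) z} with hE
  have hEm : ∀ N, MeasurableSet (E N) := fun N =>
    measurableSet_lt measurable_const (measurable_maxSum hτ.measurable hhm _)
  have hsub : {z | ∃ N, l * birkhoffSum τ g N z < birkhoffSum τ d N z} ⊆ ⋃ N, E N := by
    rintro z ⟨N, hN⟩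
    refine Set.mem_iUnion.2 ⟨N, ?_⟩
    have h1 : birkhoffSum τ h N z = birkhoffSum τ d N z - l * birkhoffSum τ g N z := by
      simp only [birkhoffSum, hh, Finset.sum_sub_distrib, Finset.mul_sum]
    show 0 < maxSum τ h (N + 1) z
    linarith [birkhoffSum_le_maxSum (τ := τ) h N z, maxSum_mono (τ := τ) h N z]
  have hmono : Monotone E := monotone_nat_of_le_succ fun N z hz =>
    lt_of_lt_of_le (show 0 < maxSum τ h (N + 1) z from hz) (maxSum_mono h (N + 1) z)
  refine (measure_mono hsub).trans ?_
  rw [hmono.measure_iUnion]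
  refine iSup_le fun N => ?_
  rw [withDensity_apply _ (hEm N), ← ofReal_integral_eq_lintegral_ofReal hg.integrableOn
    (Eventually.of_forall hg0)]
  refine ENNReal.ofReal_le_ofReal ?_
  rw [le_div_iff₀ hl]
  have k1 := garsia hτ hhm hhi N
  rw [hh, integral_sub hd.integrableOn (hg.const_mul l).integrableOn, integral_const_mul] at k1
  have k2 : ∫ z in E N, d z ∂m ≤ ∫ z, d z ∂m :=
    setIntegral_le_integral hd (Eventually.of_forall hd0)
  have k3 : {z | 0 < maxSum τ (fun z => d z - l * g z) (N + 1) z} = E N := rfl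
  rw [k3] at k1
  linarith

end Garsia

/-! ### Local approximation of functions invariant under the Maharam extension -/

section Approx

variable {S : Type*} [Fintype S] [MeasurableSpace S] [MeasurableSingletonClass S]
  {μ : Measure (Seq S)} {A : S → S → Bool} {P : ℤ → S → S → ℝ} {π : ℤ → S → ℝ} {δ : ℝ} {M : ℕ}
  {c : ℤ → Seq S → ℝ}

/-- The fibre weight `e^{-2|t|}`. -/
noncomputable def gg (t : ℝ) : ℝ := Real.exp (-(2 * |t|))

lemma gg_pos (t : ℝ) : 0 < gg t := Real.exp_pos _

lemma gg_le_one (t : ℝ) : gg t ≤ 1 := by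
  unfold gg; rw [Real.exp_le_one_iff]; linarith [abs_nonneg t]

lemma measurable_gg : Measurable gg :=
  Real.measurable_exp.comp ((measurable_id.abs.const_mul 2).neg)

lemma gg_neg (t : ℝ) : gg (-t) = gg t := by unfold gg; rw [abs_neg]

lemma gg_comp {s t C : ℝ} (h : |s - t| ≤ C) : gg s ≤ Real.exp (2 * C) * gg t := by
  unfold gg
  rw [← Real.exp_add, Real.exp_le_exp]
  have := abs_sub_abs_le_abs_sub t s
  rw [abs_sub_comm] at this
  linarith

lemma lintegral_gg : ∫⁻ t, ENNReal.ofReal (gg t) ∂expM < ⊤ := by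
  rw [lintegral_expM measurable_gg.ennreal_ofReal]
  have hb : ∀ t : ℝ, ENNReal.ofReal (gg t) * ENNReal.ofReal (Real.exp t) ≤
      ENNReal.ofReal ((Set.Iic (0 : ℝ)).indicator (fun t => Real.exp t) t
        + (Set.Ioi (0 : ℝ)).indicator (fun t => Real.exp (-t)) t) := by
    intro t
    rw [← ENNReal.ofReal_mul (gg_pos t).le]
    refine ENNReal.ofReal_le_ofReal ?_
    unfold gg
    rw [← Real.exp_add]
    rcases le_or_gt t 0 with ht | ht
    · rw [Set.indicator_of_mem (show t ∈ Set.Iic (0 : ℝ) from ht),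
        Set.indicator_of_notMem (by simpa using ht), add_zero, Real.exp_le_exp]
      linarith [abs_nonneg t]
    · rw [Set.indicator_of_notMem (by simpa using ht),
        Set.indicator_of_mem (show t ∈ Set.Ioi (0 : ℝ) from ht), zero_add, Real.exp_le_exp,
        abs_of_pos ht]
      linarith
  refine (lintegral_mono hb).trans_lt ?_
  have i1 : Integrable ((Set.Iic (0 : ℝ)).indicator fun t => Real.exp t) :=
    (integrable_indicator_iff measurableSet_Iic).2 (integrableOn_exp_Iic 0)
  have i2 : Integrable ((Set.Ioi (0 : ℝ)).indicator fun t => Real.exp (-t)) := by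
    rw [integrable_indicator_iff measurableSet_Ioi]
    simpa using exp_neg_integrableOn_Ioi 0 (zero_lt_one)
  exact (i1.add i2).lintegral_lt_top

lemma integrable_gg : Integrable gg expM :=
  ⟨measurable_gg.aestronglyMeasurable, by
    rw [hasFiniteIntegral_iff_ofReal (Eventually.of_forall fun t => (gg_pos t).le)]
    exact lintegral_gg⟩

/-- The class of observables on the Maharam extension used below: measurable, with values in
`[0, 1]` and `L`-Lipschitz along the fibres. -/
structure Obs (L : ℝ) (F : Seq S × ℝ → ℝ) : Prop where
  meas : Measurable F
  nonneg : ∀ z, 0 ≤ F z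
  le_one : ∀ z, F z ≤ 1
  lip : ∀ x s t, |F (x, s) - F (x, t)| ≤ L * |s - t|

variable {L : ℝ} {F : Seq S × ℝ → ℝ}

lemma Obs.slice (hF : Obs L F) (t : ℝ) : Measurable fun y => F (y, t) :=
  hF.meas.comp measurable_prodMk_right

lemma Obs.integrable [IsFiniteMeasure μ] (hF : Obs L F) (t : ℝ) : Integrable (fun y => F (y, t)) μ :=
  Integrable.of_bound (hF.slice t).aestronglyMeasurable 1 (Eventually.of_forall fun y => by
    rw [Real.norm_eq_abs, abs_of_nonneg (hF.nonneg _)]; exact hF.le_one _)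

lemma avg_abs_le [IsFiniteMeasure μ] (K : ℕ) {φ : Seq S → ℝ} {C : ℝ} (hC : ∀ y, |φ y| ≤ C)
    (hC0 : 0 ≤ C) (x : Seq S) : |avg μ K φ x| ≤ C := by
  unfold avg
  rw [abs_mul, abs_inv, abs_of_nonneg measureReal_nonneg]
  have := norm_setIntegral_le_of_norm_le_const (μ := μ) (s := cyl (-(K : ℤ)) K x) (f := φ) (C := C)
    (measure_lt_top _ _) (fun y _ => hC y)
  rw [Real.norm_eq_abs] at this
  calc _ ≤ (μ.real (cyl (-(K : ℤ)) K x))⁻¹ * (C * μ.real (cyl (-(K : ℤ)) K x)) :=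
        mul_le_mul_of_nonneg_left this (by positivity)
    _ = C * (μ.real (cyl (-(K : ℤ)) K x) * (μ.real (cyl (-(K : ℤ)) K x))⁻¹) := by ring
    _ ≤ C * 1 := mul_le_mul_of_nonneg_left mul_inv_le_one hC0
    _ = C := mul_one C

lemma Obs.avg_lip [IsFiniteMeasure μ] (hF : Obs L F) (K : ℕ) (x : Seq S) (s t : ℝ) :
    |avg μ K (fun y => F (y, s)) x - avg μ K (fun y => F (y, t)) x| ≤ L * |s - t| := by
  have e : avg μ K (fun y => F (y, s)) x - avg μ K (fun y => F (y, t)) x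
      = avg μ K (fun y => F (y, s) - F (y, t)) x := by
    unfold avg
    rw [integral_sub (hF.integrable s).restrict (hF.integrable t).restrict, mul_sub]
  rw [e]
  exact avg_abs_le K (fun y => hF.lip y s t) ((abs_nonneg _).trans (hF.lip x s t)) x

/-- The local average of an observable at fixed height. -/
noncomputable def fav (μ : Measure (Seq S)) (F : Seq S × ℝ → ℝ) (K : ℕ) (z : Seq S × ℝ) : ℝ :=
  avg μ K (fun y => F (y, z.2)) z.1

lemma Obs.measurable_fav [IsFiniteMeasure μ] (hF : Obs L F) (K : ℕ) : Measurable (fav μ F K) := by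
  set a : ℤ := -(K : ℤ)
  set b : ℤ := (K : ℤ)
  set H : (Set.Icc a b → S) × ℝ → ℝ := fun p =>
    (μ.real (res a b ⁻¹' {p.1}))⁻¹ * ∫ y in res a b ⁻¹' {p.1}, F (y, p.2) ∂μ with hH
  have hHm : Measurable H := by
    refine measurable_from_prod_countable_right fun r => ?_
    have : StronglyMeasurable fun t : ℝ => ∫ y in res a b ⁻¹' {r}, F (y, t) ∂μ :=
      StronglyMeasurable.integral_prod_left' hF.meas.stronglyMeasurable
    exact this.measurable.const_mul ((μ.real (res a b ⁻¹' {r}))⁻¹)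
  have e : fav μ F K = fun z => H (res a b z.1, z.2) := by
    funext z
    simp only [fav, avg, hH]
    rw [cyl_eq_res]
  rw [e]
  exact hHm.comp (((measurable_res a b).comp measurable_fst).prodMk measurable_snd)

lemma Obs.abs_fav_sub_le [IsFiniteMeasure μ] (hF : Obs L F) (K : ℕ) (z : Seq S × ℝ) :
    |fav μ F K z - F z| ≤ 2 := by
  have h1 : |fav μ F K z| ≤ 1 := avg_abs_le K (fun y => by
    rw [abs_of_nonneg (hF.nonneg _)]; exact hF.le_one _) zero_le_one _
  have h2 : |F z| ≤ 1 := by rw [abs_of_nonneg (hF.nonneg _)]; exact hF.le_one _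
  calc _ ≤ |fav μ F K z| + |F z| := abs_sub _ _
    _ ≤ 2 := by linarith

lemma integrable_gg_mah [IsProbabilityMeasure μ] : Integrable (fun z => gg z.2) (mah μ) :=
  integrable_gg.comp_snd μ

lemma Obs.integrable_diff [IsProbabilityMeasure μ] (hF : Obs L F) (K : ℕ) :
    Measurable (fun z => |fav μ F K z - F z| * gg z.2) ∧
    Integrable (fun z => |fav μ F K z - F z| * gg z.2) (mah μ) := by
  have hm : Measurable (fun z => |fav μ F K z - F z| * gg z.2) :=
    ((hF.measurable_fav K).sub hF.meas).abs.mul (measurable_gg.comp measurable_snd)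
  refine ⟨hm, (integrable_gg_mah.const_mul 2).mono' hm.aestronglyMeasurable
    (Eventually.of_forall fun z => ?_)⟩
  rw [Real.norm_eq_abs, abs_mul, abs_abs, abs_of_pos (gg_pos _)]
  exact mul_le_mul_of_nonneg_right (hF.abs_fav_sub_le K z) (gg_pos _).le

lemma Obs.tendsto_diff [IsProbabilityMeasure μ] (hF : Obs L F) :
    Tendsto (fun K => ∫ z, |fav μ F K z - F z| * gg z.2 ∂(mah μ)) atTop (𝓝 0) := by
  have e : ∀ K, ∫ z, |fav μ F K z - F z| * gg z.2 ∂(mah μ)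
      = ∫ t, (∫ x, |avg μ K (fun y => F (y, t)) x - F (x, t)| ∂μ) * gg t ∂expM := by
    intro K
    have hi := (hF.integrable_diff (μ := μ) K).2
    unfold mah at hi ⊢
    rw [integral_prod_symm _ hi]
    refine integral_congr_ae (Eventually.of_forall fun t => ?_)
    exact integral_mul_const (gg t) (fun x => |fav μ F K (x, t) - F (x, t)|)
  simp only [e]
  rw [show (0 : ℝ) = ∫ t, (0 : ℝ) ∂expM by simp]
  refine tendsto_integral_of_dominated_convergence (fun t => 2 * gg t) (fun K => ?_)
    (integrable_gg.const_mul 2) (fun K => Eventually.of_forall fun t => ?_)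
    (Eventually.of_forall fun t => ?_)
  · have hsm : StronglyMeasurable fun t : ℝ => ∫ x, |fav μ F K (x, t) - F (x, t)| ∂μ :=
      StronglyMeasurable.integral_prod_left' (f := fun z => |fav μ F K z - F z|)
        ((hF.measurable_fav K).sub hF.meas).abs.stronglyMeasurable
    exact (hsm.measurable.mul measurable_gg).aestronglyMeasurable
  · rw [Real.norm_eq_abs, abs_mul, abs_of_pos (gg_pos t),
      abs_of_nonneg (integral_nonneg fun _ => abs_nonneg _)]
    refine mul_le_mul_of_nonneg_right ?_ (gg_pos t).le
    have := norm_integral_le_of_norm_le_const (μ := μ) (C := 2)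
      (f := fun x => |avg μ K (fun y => F (y, t)) x - F (x, t)|)
      (Eventually.of_forall fun x => by
        rw [Real.norm_eq_abs, abs_abs]; exact hF.abs_fav_sub_le K (x, t))
    rw [Real.norm_eq_abs, probReal_univ, mul_one] at this
    exact (le_abs_self _).trans this
  · have := (tendsto_avg (hF.integrable (μ := μ) t)).mul_const (gg t)
    rwa [zero_mul] at this

/-- Along almost every orbit of the Maharam extension an invariant observable is close, in weighted
average, to functions of finitely many coordinates. -/
lemma Obs.approx [IsProbabilityMeasure μ] (hc : Coc μ c) (hF : Obs L F)
    (hinv : ∀ z, F (Tz c 1 z) = F z) :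
    ∃ K : ℕ → ℕ, ∀ᵐ x ∂μ, ∀ᵐ t : ℝ, ∀ᶠ k : ℕ in atTop, ∀ N : ℕ,
      ∑ n ∈ Finset.range N, |fav μ F (K k) (Tz c n (x, t)) - F (x, t)| * gg (t - c n x)
        ≤ (1 / 2) ^ k * ∑ n ∈ Finset.range N, gg (t - c n x) := by
  have hinvn : ∀ n : ℕ, ∀ z, F (Tz c n z) = F z := by
    intro n z
    rw [← hc.Tz_iterate]
    induction n with
    | zero => rfl
    | succ n ih => rw [Function.iterate_succ_apply', hinv, ih]
  have hex : ∀ k : ℕ, ∃ K, ∫ z, |fav μ F K z - F z| * gg z.2 ∂(mah μ) ≤ (1 / 4) ^ k := by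
    intro k
    have := (hF.tendsto_diff (μ := μ)).eventually (ge_mem_nhds (show (0 : ℝ) < (1 / 4) ^ k by positivity))
    exact this.exists
  choose K hK using hex
  refine ⟨K, ?_⟩
  set d : ℕ → Seq S × ℝ → ℝ := fun k z => |fav μ F (K k) z - F z| * gg z.2 with hd
  set E : ℕ → Set (Seq S × ℝ) := fun k => {z | ∃ N, (1 / 2 : ℝ) ^ k *
    birkhoffSum (Tz c 1) (fun z => gg z.2) N z < birkhoffSum (Tz c 1) (d k) N z} with hE
  set m' := (mah μ).withDensity fun z => ENNReal.ofReal (gg z.2) with hm'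
  have hggm : Measurable fun z : Seq S × ℝ => gg z.2 := measurable_gg.comp measurable_snd
  have hEk : ∀ k, m' (E k) ≤ ENNReal.ofReal ((1 / 2) ^ k) := by
    intro k
    refine (garsia_ratio (hc.measurePreserving 1) (hF.integrable_diff (K k)).1
      (hF.integrable_diff (K k)).2 (fun z => mul_nonneg (abs_nonneg _) (gg_pos _).le)
      hggm integrable_gg_mah (fun z => (gg_pos _).le)
      (show (0 : ℝ) < (1 / 2) ^ k by positivity)).trans ?_
    refine ENNReal.ofReal_le_ofReal ?_
    rw [div_le_iff₀ (by positivity), ← mul_pow]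
    norm_num
    have := hK k
    norm_num at this
    exact this
  have hsum : ∑' k, m' (E k) ≠ ⊤ := by
    refine ne_top_of_le_ne_top ?_ (ENNReal.tsum_le_tsum hEk)
    rw [← ENNReal.ofReal_tsum_of_nonneg (fun k => by positivity)
      (summable_geometric_of_lt_one (by norm_num) (by norm_num))]
    exact ENNReal.ofReal_ne_top
  have hae : ∀ᵐ z ∂m', ∀ᶠ k in atTop, z ∉ E k := ae_eventually_notMem hsum
  have hae2 : ∀ᵐ z ∂(mah μ), ∀ᶠ k in atTop, z ∉ E k := by
    rw [hm', ae_withDensity_iff hggm.ennreal_ofReal] at hae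
    filter_upwards [hae] with z hz
    exact hz (by simpa using gg_pos z.2)
  have hae3 := Measure.ae_ae_of_ae_prod hae2
  filter_upwards [hae3] with x hx
  filter_upwards [ae_expM_iff hx] with t ht
  filter_upwards [ht] with k hk N
  have hk' : ¬ ∃ N, (1 / 2 : ℝ) ^ k * birkhoffSum (Tz c 1) (fun z => gg z.2) N (x, t)
    < birkhoffSum (Tz c 1) (d k) N (x, t) := hk
  push Not at hk'
  have := hk' N
  simp only [birkhoffSum, hc.Tz_iterate, hd, hinvn] at this
  exact this

end Approx

/-! ### Block replacements act on invariant observables by fibre translations -/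

section Star

variable {S : Type*} [Fintype S] [MeasurableSpace S] [MeasurableSingletonClass S]
  {μ : Measure (Seq S)} {A : S → S → Bool} {P : ℤ → S → S → ℝ} {π : ℤ → S → ℝ} {δ : ℝ} {M : ℕ}
  {c : ℤ → Seq S → ℝ}

/-- The cylinder of the block `w|[0, b]` placed at site `a`. -/
abbrev cyS (b a : ℤ) (w : Seq S) : Set (Seq S) := cyl a (a + b) (shiftZ (-a) w)

/-- Writing the block `v|[0, b]` at site `a` into `x`. -/
noncomputable abbrev repS (b a : ℤ) (v x : Seq S) : Seq S := rep a (a + b) (shiftZ (-a) v) x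

lemma MC.trivial_of_site_inv (h : MC μ A P π δ M) {Z : Set (Seq S)} (hZ : MeasurableSet Z)
    (hinv : ∀ (b : ℤ) (w v : Seq S), Sw A 0 b w v → ∀ a : ℤ,
      ∀ᵐ x ∂μ, x ∈ cyS b a w → x ∈ Z → repS b a v x ∈ Z) :
    μ Z = 0 ∨ μ Zᶜ = 0 := by
  refine h.trivial_of_rep_inv hZ fun a b w v hs => ?_
  have hs' := hs.shift (-a)
  rw [add_neg_cancel, neg_neg] at hs'
  have := hinv _ _ _ hs' a
  have e : ∀ u : Seq S, shiftZ (-a) (shiftZ a u) = u := fun u => by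
    rw [shiftZ_add, neg_add_cancel, shiftZ_zero]
  simp only [cyS, repS, e, show a + (b + -a) = b by ring] at this
  exact this

/-- The partial sums over `W` of the weights along the orbit of `x`. -/
noncomputable def SG (c : ℤ → Seq S → ℝ) (W : Set ℕ) (x : Seq S) (N : ℕ) : ℝ :=
  ∑ n ∈ Finset.range N, W.indicator (fun n : ℕ => gg (c n x)) n

/-- The points for which the times in `W` carry, infinitely often, a definite proportion of the
total weight. -/
def Dom (c : ℤ → Seq S → ℝ) (W : Set ℕ) : Set (Seq S) :=
  {x | ∃ q : ℕ, ∃ᶠ N : ℕ in atTop, SG c Set.univ x N ≤ q * SG c W x N}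

lemma Coc.measurable_SG (hc : Coc μ c) (W : Set ℕ) (N : ℕ) : Measurable fun x => SG c W x N := by
  unfold SG
  refine Finset.measurable_sum _ fun n _ => ?_
  by_cases hn : n ∈ W
  · simp only [Set.indicator_of_mem hn]; exact measurable_gg.comp (hc.meas n)
  · simp only [Set.indicator_of_notMem hn]; exact measurable_const

lemma Coc.measurableSet_Dom (hc : Coc μ c) (W : Set ℕ) : MeasurableSet (Dom c W) := by
  have : Dom c W = ⋃ q : ℕ, limsup (fun N => {x | SG c Set.univ x N ≤ q * SG c W x N}) atTop := by
    ext x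
    simp only [Dom, Set.mem_iUnion, mem_limsup_iff_frequently_mem]
    rfl
  rw [this]
  refine MeasurableSet.iUnion fun q => MeasurableSet.measurableSet_limsup fun N => ?_
  exact measurableSet_le (hc.measurable_SG _ _) ((hc.measurable_SG _ _).const_mul _)

lemma SG_le {x y : Seq S} {C : ℝ} (h : ∀ n : ℕ, |c n x - c n y| ≤ C) (W : Set ℕ) (N : ℕ) :
    SG c W x N ≤ Real.exp (2 * C) * SG c W y N := by
  unfold SG
  rw [Finset.mul_sum]
  refine Finset.sum_le_sum fun n _ => ?_
  by_cases hn : n ∈ W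
  · simp only [Set.indicator_of_mem hn]; exact gg_comp (h n)
  · simp only [Set.indicator_of_notMem hn, mul_zero, le_refl]

lemma SG_nonneg (W : Set ℕ) (x : Seq S) (N : ℕ) : 0 ≤ SG c W x N :=
  Finset.sum_nonneg fun n _ => Set.indicator_nonneg (fun _ _ => (gg_pos _).le) _

lemma Dom_of_close {x y : Seq S} {C : ℝ} (h : ∀ n : ℕ, |c n x - c n y| ≤ C) {W : Set ℕ}
    (hy : y ∈ Dom c W) : x ∈ Dom c W := by
  obtain ⟨q, hq⟩ := hy
  refine ⟨⌈Real.exp (2 * C) * (q * Real.exp (2 * C))⌉₊, hq.mono fun N hN => ?_⟩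
  have h1 := SG_le h Set.univ N
  have h2 := SG_le (fun n => by rw [abs_sub_comm]; exact h n) W N (c := c) (x := y) (y := x)
  calc SG c Set.univ x N ≤ Real.exp (2 * C) * SG c Set.univ y N := h1
    _ ≤ Real.exp (2 * C) * (q * SG c W y N) := by gcongr
    _ ≤ Real.exp (2 * C) * (q * (Real.exp (2 * C) * SG c W x N)) := by gcongr
    _ = Real.exp (2 * C) * (q * Real.exp (2 * C)) * SG c W x N := by ring
    _ ≤ _ := mul_le_mul_of_nonneg_right (Nat.le_ceil _) (SG_nonneg _ _ _)

lemma MC.Dom_trivial (h : MC μ A P π δ M) (hc : Coc μ c) (W : Set ℕ) :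
    μ (Dom c W) = 0 ∨ μ (Dom c W)ᶜ = 0 := by
  refine h.trivial_of_site_inv (hc.measurableSet_Dom W) fun b w v hs a => ?_
  filter_upwards [h.coc_rep_site hc hs a] with x hx hxm hxD
  refine Dom_of_close (C := 2 * -Real.log (δ ^ b.toNat)) (fun n => ?_) hxD
  rw [hx hxm n]
  have h1 := abs_le.1 (h.Rs_bdd hs (a - n))
  have h2 := abs_le.1 (h.Rs_bdd hs a)
  rw [abs_le]
  constructor <;> linarith [h1.1, h1.2, h2.1, h2.2]

/-- For a bounded function `R` of the site, such as the gain of a swap, there is a value `c₀` such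
that the times `n` at which `R (-n)` is `ε`-close to `c₀` carry a definite proportion of the weight, for almost every point. -/
lemma MC.exists_level (h : MC μ A P π δ M) (hc : Coc μ c) {R : ℤ → ℝ} {Q : ℝ}
    (hR : ∀ a, |R a| ≤ Q) {ε : ℝ} (hε : 0 < ε) :
    ∃ c₀ ∈ Set.Icc (-Q) Q, ∀ᵐ x ∂μ, x ∈ Dom c {n : ℕ | |R (-n) - c₀| ≤ ε} := by
  have := h.prob
  obtain ⟨t, ht, htf, hcov⟩ := (isCompact_Icc (a := -Q) (b := Q)).finite_cover_balls hε
  have hne : ∃ c₀ ∈ t, μ (Dom c {n : ℕ | |R (-n) - c₀| ≤ ε}) ≠ 0 := by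
    by_contra hno
    push Not at hno
    have huniv : (Set.univ : Set (Seq S)) ⊆ ⋃ c₀ ∈ t, Dom c {n : ℕ | |R (-n) - c₀| ≤ ε} := by
      intro x _
      have hN : ∀ N : ℕ, ∃ c₀ ∈ t, SG c Set.univ x N ≤
          htf.toFinset.card * SG c {n : ℕ | |R (-n) - c₀| ≤ ε} x N := by
        intro N
        have hsum : SG c Set.univ x N ≤
            ∑ c₀ ∈ htf.toFinset, SG c {n : ℕ | |R (-n) - c₀| ≤ ε} x N := by
          unfold SG
          rw [Finset.sum_comm]
          refine Finset.sum_le_sum fun n _ => ?_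
          obtain ⟨c₀, hc₀, hn⟩ := Set.mem_iUnion₂.1 (hcov (abs_le.1 (hR (-n))))
          have hn' : n ∈ {n : ℕ | |R (-n) - c₀| ≤ ε} := by
            rw [Metric.mem_ball, Real.dist_eq] at hn
            exact hn.le
          have := Finset.single_le_sum (f := fun c₀ : ℝ =>
            {n : ℕ | |R (-n) - c₀| ≤ ε}.indicator (fun n : ℕ => gg (c n x)) n)
            (fun c₀ _ => Set.indicator_nonneg (fun _ _ => (gg_pos _).le) _)
            (htf.mem_toFinset.2 hc₀)
          refine le_trans (le_of_eq ?_) this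
          rw [Set.indicator_of_mem hn', Set.indicator_of_mem (Set.mem_univ n)]
        have htne : htf.toFinset.Nonempty := by
          obtain ⟨c₀, hc₀, -⟩ := Set.mem_iUnion₂.1 (hcov (abs_le.1 (hR 0)))
          exact ⟨c₀, htf.mem_toFinset.2 hc₀⟩
        by_contra hlt
        push Not at hlt
        have hcard : (0 : ℝ) < htf.toFinset.card := by exact_mod_cast htne.card_pos
        have : ∑ c₀ ∈ htf.toFinset, SG c {n : ℕ | |R (-n) - c₀| ≤ ε} x N
            < ∑ c₀ ∈ htf.toFinset, SG c Set.univ x N / htf.toFinset.card :=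
          Finset.sum_lt_sum_of_nonempty htne fun c₀ hc₀ => by
            rw [lt_div_iff₀ hcard, mul_comm]; exact hlt c₀ (htf.mem_toFinset.1 hc₀)
        rw [Finset.sum_const, nsmul_eq_mul, mul_div_cancel₀ _ hcard.ne'] at this
        linarith
      -- some element of the finite net works for infinitely many `N`
      by_contra hx
      simp only [Set.mem_iUnion, not_exists] at hx
      have hall : ∀ᶠ N : ℕ in atTop, ∀ c₀ ∈ t, ¬ (SG c Set.univ x N ≤
          htf.toFinset.card * SG c {n : ℕ | |R (-n) - c₀| ≤ ε} x N) := by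
        rw [htf.eventually_all]
        intro c₀ hc₀
        have := hx c₀ hc₀
        rw [← not_frequently]
        exact fun hf => this ⟨_, hf⟩
      obtain ⟨N, hN'⟩ := hall.exists
      obtain ⟨c₀, hc₀, hle⟩ := hN N
      exact hN' c₀ hc₀ hle
    have h0 : μ (⋃ c₀ ∈ t, Dom c {n : ℕ | |R (-n) - c₀| ≤ ε}) = 0 :=
      (measure_biUnion_null_iff htf.countable).2 hno
    have := measure_mono_null huniv h0
    simp at this
  obtain ⟨c₀, hc₀, hpos⟩ := hne
  refine ⟨c₀, ht hc₀, ?_⟩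
  have := (h.Dom_trivial hc {n : ℕ | |R (-n) - c₀| ≤ ε}).resolve_left hpos
  exact this

lemma Coc.SG_tendsto {x : Seq S} (hrec : ∃ k : ℝ, ∃ᶠ n : ℕ in atTop, |c n x| ≤ k) (t : ℝ) :
    Tendsto (fun N => ∑ n ∈ Finset.range N, gg (t - c n x)) atTop atTop := by
  rw [← not_summable_iff_tendsto_nat_atTop_of_nonneg fun n => (gg_pos _).le]
  intro hsum
  obtain ⟨k, hk⟩ := hrec
  have h0 := hsum.tendsto_atTop_zero
  have := h0.eventually (gt_mem_nhds (Real.exp_pos (-(2 * (|t| + k)))))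
  obtain ⟨n, hn1, hn2⟩ := (hk.and_eventually this).exists
  refine absurd hn2 (not_lt.2 ?_)
  unfold gg
  rw [Real.exp_le_exp]
  linarith [abs_sub t (c n x)]

/-- The comparison of weighted averages along two orbits staying at bounded distance. -/
lemma compare {s s' : ℕ → ℝ} {p p' : ℕ → ℕ → ℝ} {D e C : ℝ} {W : Set ℕ}
    (hp : ∀ k n, 0 ≤ p k n) (hp' : ∀ k n, 0 ≤ p' k n)
    (h1 : ∀ᶠ k : ℕ in atTop, ∀ N : ℕ, ∑ n ∈ Finset.range N, p k n * gg (s n)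
      ≤ (1 / 2) ^ k * ∑ n ∈ Finset.range N, gg (s n))
    (h2 : ∀ᶠ k : ℕ in atTop, ∀ N : ℕ, ∑ n ∈ Finset.range N, p' k n * gg (s' n)
      ≤ (1 / 2) ^ k * ∑ n ∈ Finset.range N, gg (s' n))
    (h3 : ∀ n, |s n - s' n| ≤ C)
    (h4 : ∀ k, ∀ᶠ n in atTop, n ∈ W → D ≤ p k n + p' k n + e)
    {q : ℝ} (hq : 0 ≤ q) (h5 : ∃ᶠ N : ℕ in atTop, ∑ n ∈ Finset.range N, gg (s n)
      ≤ q * ∑ n ∈ Finset.range N, W.indicator (fun n => gg (s n)) n)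
    (h6 : Tendsto (fun N => ∑ n ∈ Finset.range N, gg (s n)) atTop atTop) : D ≤ e := by
  by_contra hcon
  push Not at hcon
  set η := D - e with hη
  have hη0 : 0 < η := by linarith
  set C2 := Real.exp (2 * C) with hC2
  have hC20 : 0 < C2 := Real.exp_pos _
  have key : ∀ᶠ k : ℕ in atTop, η ≤ q * (2 + C2 * C2) * (1 / 2) ^ k := by
    filter_upwards [h1, h2] with k hk1 hk2
    set l : ℝ := (1 / 2) ^ k with hl
    have hl0 : 0 < l := by positivity
    obtain ⟨n₀, hn₀⟩ := eventually_atTop.1 (h4 k)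
    have hlarge := h6.eventually_ge_atTop (max 1 (η * n₀ / l))
    obtain ⟨N, hN1, hN2, hN3⟩ := (h5.and_eventually (hlarge.and (eventually_ge_atTop n₀))).exists
    set SN := ∑ n ∈ Finset.range N, gg (s n) with hSN
    have hSN1 : 1 ≤ SN := le_trans (le_max_left _ _) hN2
    have hSN2 : η * n₀ ≤ l * SN := by
      have := le_trans (le_max_right _ _) hN2
      rw [div_le_iff₀ hl0] at this
      linarith
    have hS' : ∑ n ∈ Finset.range N, gg (s' n) ≤ C2 * SN := by
      rw [hSN, Finset.mul_sum]
      exact Finset.sum_le_sum fun n _ => gg_comp (by rw [abs_sub_comm]; exact h3 n)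
    have hpt : ∀ n ∈ Finset.range N, η * W.indicator (fun n => gg (s n)) n ≤
        p k n * gg (s n) + C2 * (p' k n * gg (s' n)) + (if n < n₀ then η else 0) := by
      intro n _
      have a1 : 0 ≤ p k n * gg (s n) := mul_nonneg (hp _ _) (gg_pos _).le
      have a2 : 0 ≤ C2 * (p' k n * gg (s' n)) :=
        mul_nonneg hC20.le (mul_nonneg (hp' _ _) (gg_pos _).le)
      by_cases hnW : n ∈ W
      · rw [Set.indicator_of_mem hnW]
        split_ifs with hn
        · have : η * gg (s n) ≤ η * 1 := mul_le_mul_of_nonneg_left (gg_le_one _) hη0.le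
          linarith
        · have b1 := hn₀ n (not_lt.1 hn) hnW
          have b2 : η ≤ p k n + p' k n := by linarith
          have b3 : p' k n * gg (s n) ≤ p' k n * (C2 * gg (s' n)) :=
            mul_le_mul_of_nonneg_left (gg_comp (h3 n)) (hp' _ _)
          have b4 := mul_le_mul_of_nonneg_right b2 (gg_pos (s n)).le
          nlinarith
      · rw [Set.indicator_of_notMem hnW, mul_zero]
        split_ifs <;> linarith
    have hsum := Finset.sum_le_sum hpt
    rw [Finset.sum_add_distrib, Finset.sum_add_distrib, ← Finset.mul_sum, ← Finset.mul_sum] at hsum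
    have hcount : ∑ n ∈ Finset.range N, (if n < n₀ then η else 0) ≤ η * n₀ := by
      rw [← Finset.sum_filter, Finset.sum_const, nsmul_eq_mul, mul_comm]
      refine mul_le_mul_of_nonneg_left ?_ hη0.le
      have : (Finset.filter (fun n => n < n₀) (Finset.range N)).card ≤ (Finset.range n₀).card :=
        Finset.card_le_card fun n hn => Finset.mem_range.2 (Finset.mem_filter.1 hn).2
      rw [Finset.card_range] at this
      exact_mod_cast this
    have d1 := hk1 N
    have d2 : C2 * ∑ n ∈ Finset.range N, p' k n * gg (s' n) ≤ C2 * (l * (C2 * SN)) := by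
      refine mul_le_mul_of_nonneg_left ((hk2 N).trans ?_) hC20.le
      exact mul_le_mul_of_nonneg_left hS' hl0.le
    have d3 : η * ∑ n ∈ Finset.range N, W.indicator (fun n => gg (s n)) n
        ≤ (2 + C2 * C2) * l * SN := by
      have : ∑ n ∈ Finset.range N, p k n * gg (s n) ≤ l * SN := d1
      linarith
    have d4 : η * SN ≤ q * ((2 + C2 * C2) * l * SN) := by
      calc η * SN ≤ η * (q * ∑ n ∈ Finset.range N, W.indicator (fun n => gg (s n)) n) :=
            mul_le_mul_of_nonneg_left hN1 hη0.le
        _ = q * (η * ∑ n ∈ Finset.range N, W.indicator (fun n => gg (s n)) n) := by ring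
        _ ≤ _ := mul_le_mul_of_nonneg_left d3 hq
    have d5 : η * SN ≤ (q * (2 + C2 * C2) * l) * SN := by linarith
    exact le_of_mul_le_mul_right d5 (by linarith)
  have hlim : Tendsto (fun k : ℕ => q * (2 + C2 * C2) * (1 / 2 : ℝ) ^ k) atTop (𝓝 0) := by
    have := (tendsto_pow_atTop_nhds_zero_of_lt_one (r := (1 / 2 : ℝ)) (by norm_num)
      (by norm_num)).const_mul (q * (2 + C2 * C2))
    rwa [mul_zero] at this
  have := ge_of_tendsto hlim key
  linarith

variable {L : ℝ} {F : Seq S × ℝ → ℝ}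

lemma MC.slow_shift (h : MC μ A P π δ M) (hc : Coc μ c) {b : ℤ} {w v : Seq S}
    (hs : Sw A 0 b w v) (a : ℤ) :
    Tendsto (fun n : ℤ => Rs P b w v (n + a) - Rs P b w v n) cofinite (𝓝 0) := by
  have h1 := h.slow hc hs
  have hinj : ∀ j : ℤ, Tendsto (fun n : ℤ => n + j) cofinite cofinite := fun j =>
    (add_left_injective j).tendsto_cofinite
  have nat : ∀ k : ℕ, Tendsto (fun n : ℤ => Rs P b w v (n + k) - Rs P b w v n) cofinite (𝓝 0) := by
    intro k
    induction k with
    | zero => simp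
    | succ k ih =>
      have h2 := h1.comp (hinj (k + 1))
      have := ih.sub h2
      rw [sub_zero] at this
      refine this.congr fun n => ?_
      simp only [Function.comp]
      push_cast
      rw [show n + ((k : ℤ) + 1) - 1 = n + k by ring]
      ring
  obtain ⟨k, rfl | rfl⟩ := Int.eq_nat_or_neg a
  · exact nat k
  · have := ((nat k).comp (hinj (-k))).neg
    rw [neg_zero] at this
    refine this.congr fun n => ?_
    simp only [Function.comp, neg_add_cancel_right]
    ring

lemma MC.star_eps (h : MC μ A P π δ M) (hc : Coc μ c)
    (hrec : ∀ᵐ x ∂μ, ∃ k : ℝ, ∃ᶠ n : ℕ in atTop, |c n x| ≤ k) (hL : 0 ≤ L) (hF : Obs L F)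
    (hinv : ∀ z, F (Tz c 1 z) = F z) {b : ℤ} {w v : Seq S} (hs : Sw A 0 b w v)
    {ε c₀ : ℝ} (hε : 0 < ε)
    (hdom : ∀ᵐ x ∂μ, x ∈ Dom c {n : ℕ | |Rs P b w v (-n) - c₀| ≤ ε}) (a : ℤ) :
    ∀ᵐ x ∂μ, x ∈ cyS b a w → ∀ t : ℝ,
      |F (repS b a v x, t + c₀ - Rs P b w v a) - F (x, t)| ≤ L * (2 * ε) := by
  have := h.prob
  obtain ⟨K, hK⟩ := hF.approx hc hinv
  set R := Rs P b w v with hR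
  filter_upwards [hK, h.ae_rep (hs.site a) hK, hdom, hrec, h.coc_rep_site hc hs a] with
    x hx1 hx2 hx3 hx4 hx5 hxm
  set x' := repS b a v x with hx'
  have hx2' := hx2 hxm
  have hcoc := hx5 hxm
  have hae : ∀ᵐ t : ℝ, |F (x', t + c₀ - R a) - F (x, t)| ≤ L * (2 * ε) := by
    have hx2'' : ∀ᵐ t : ℝ, ∀ᶠ k : ℕ in atTop, ∀ N : ℕ,
        ∑ n ∈ Finset.range N, |fav μ F (K k) (Tz c n (x', t + (c₀ - R a)))
          - F (x', t + (c₀ - R a))| * gg (t + (c₀ - R a) - c n x')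
        ≤ (1 / 2) ^ k * ∑ n ∈ Finset.range N, gg (t + (c₀ - R a) - c n x') :=
      (measurePreserving_add_right volume (c₀ - R a)).quasiMeasurePreserving.ae hx2'
    filter_upwards [hx1, hx2''] with t ht1 ht2
    obtain ⟨q, hq⟩ := hx3
    have hs' : ∀ n : ℕ, t + (c₀ - R a) - c n x' = t - c n x + (c₀ - R (a - n)) := by
      intro n
      rw [hcoc n]; ring
    simp only [hs'] at ht2
    refine compare (s := fun n => t - c n x) (s' := fun n => t - c n x + (c₀ - R (a - n)))
      (C := |c₀| + -Real.log (δ ^ b.toNat)) (W := {n : ℕ | |R (-n) - c₀| ≤ ε})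
      (p := fun k n => |fav μ F (K k) (Tz c n (x, t)) - F (x, t)|)
      (p' := fun k n => |fav μ F (K k) (Tz c n (x', t + (c₀ - R a))) - F (x', t + (c₀ - R a))|)
      (q := Real.exp (2 * |t|) * (q * Real.exp (2 * |t|)))
      (fun _ _ => abs_nonneg _) (fun _ _ => abs_nonneg _) ht1 ht2 ?_ ?_ (by positivity) ?_
      (Coc.SG_tendsto hx4 t)
    · intro n
      have h1 := h.Rs_bdd hs (a - n)
      rw [← hR] at h1
      rw [show t - c n x - (t - c n x + (c₀ - R (a - n))) = R (a - n) - c₀ by ring]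
      calc _ ≤ |R (a - n)| + |c₀| := abs_sub _ _
        _ ≤ _ := by linarith
    · intro k
      have hslow : ∀ᶠ n : ℕ in atTop, |R (a - n) - R (-n)| ≤ ε := by
        have h1 := h.slow_shift hc hs a
        have h2 : Tendsto (fun n : ℕ => -(n : ℤ)) atTop cofinite := by
          rw [← Nat.cofinite_eq_atTop]
          exact (neg_injective.comp Nat.cast_injective).tendsto_cofinite
        have h3 := (Metric.tendsto_nhds.1 (h1.comp h2)) ε hε
        filter_upwards [h3] with n hn
        rw [Real.dist_eq, sub_zero] at hn
        simp only [Function.comp] at hn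
        rw [show a - (n : ℤ) = -n + a by ring]
        exact hn.le
      filter_upwards [hslow, eventually_ge_atTop (K k + (a + b)).toNat] with n hn1 hn2 hnW
      have hnW' : |R (-n) - c₀| ≤ ε := hnW
      -- far along the orbit the two points agree on the window of the local average
      have hagree : shiftZ n x' ∈ MarkovSFT.cyl (-(K k : ℤ)) (K k) (shiftZ n x) := by
        intro i h1 h2
        simp only [shiftZ]
        exact rep_of_ge (hs.site a) hxm (by omega)
      have e1 : fav μ F (K k) (Tz c n (x', t + (c₀ - R a)))
          = avg μ (K k) (fun y => F (y, t - c n x + (c₀ - R (a - n)))) (shiftZ n x) := by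
        unfold fav Tz
        simp only [hs']
        exact avg_congr _ _ hagree
      have e2 : fav μ F (K k) (Tz c n (x, t))
          = avg μ (K k) (fun y => F (y, t - c n x)) (shiftZ n x) := rfl
      have h1 := hF.avg_lip (μ := μ) (K k) (shiftZ n x) (t - c n x + (c₀ - R (a - n))) (t - c n x)
      rw [← e1, ← e2, show t - c n x + (c₀ - R (a - n)) - (t - c n x) = c₀ - R (a - n) by ring] at h1
      have h2 : |c₀ - R (a - n)| ≤ 2 * ε := by
        rw [abs_le] at hn1 hnW' ⊢
        constructor <;> linarith [hn1.1, hn1.2, hnW'.1, hnW'.2]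
      have h3 : L * |c₀ - R (a - n)| ≤ L * (2 * ε) := mul_le_mul_of_nonneg_left h2 hL
      rw [← add_sub_assoc] at h1 ⊢
      have h4 := abs_le.1 h1
      set α := fav μ F (K k) (Tz c n (x', t + c₀ - R a))
      set β := fav μ F (K k) (Tz c n (x, t))
      have h5 := neg_abs_le (β - F (x, t))
      have h6 := le_abs_self (β - F (x, t))
      have h7 := neg_abs_le (α - F (x', t + c₀ - R a))
      have h8 := le_abs_self (α - F (x', t + c₀ - R a))
      show |F (x', t + c₀ - R a) - F (x, t)| ≤ |β - F (x, t)| + |α - F (x', t + c₀ - R a)| + L * (2 * ε)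
      rw [abs_le]
      constructor <;> linarith [h4.1, h4.2]
    · refine hq.mono fun N hN => ?_
      have cl1 : ∀ n : ℕ, gg (t - c n x) ≤ Real.exp (2 * |t|) * gg (c n x) := fun n => by
        rw [← gg_neg (c n x)]
        exact gg_comp (by rw [sub_neg_eq_add, sub_add_cancel])
      have cl2 : ∀ n : ℕ, gg (c n x) ≤ Real.exp (2 * |t|) * gg (t - c n x) := fun n => by
        rw [← gg_neg (c n x)]
        exact gg_comp (by rw [show -c n x - (t - c n x) = -t by ring, abs_neg])
      have f1 : ∑ n ∈ Finset.range N, gg (t - c n x) ≤ Real.exp (2 * |t|) * SG c Set.univ x N := by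
        unfold SG
        rw [Finset.mul_sum]
        refine Finset.sum_le_sum fun n _ => ?_
        rw [Set.indicator_of_mem (Set.mem_univ n)]
        exact cl1 n
      have f2 : SG c {n : ℕ | |R (-n) - c₀| ≤ ε} x N ≤ Real.exp (2 * |t|) *
          ∑ n ∈ Finset.range N, {n : ℕ | |R (-n) - c₀| ≤ ε}.indicator
            (fun n : ℕ => gg (t - c n x)) n := by
        unfold SG
        rw [Finset.mul_sum]
        refine Finset.sum_le_sum fun n _ => ?_
        by_cases hn : n ∈ {n : ℕ | |R (-n) - c₀| ≤ ε}
        · simp only [Set.indicator_of_mem hn]; exact cl2 n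
        · simp only [Set.indicator_of_notMem hn, mul_zero, le_refl]
      calc ∑ n ∈ Finset.range N, gg (t - c n x) ≤ Real.exp (2 * |t|) * SG c Set.univ x N := f1
        _ ≤ Real.exp (2 * |t|) * (q * SG c {n : ℕ | |R (-n) - c₀| ≤ ε} x N) := by gcongr
        _ ≤ Real.exp (2 * |t|) * (q * (Real.exp (2 * |t|) * ∑ n ∈ Finset.range N,
            {n : ℕ | |R (-n) - c₀| ≤ ε}.indicator (fun n : ℕ => gg (t - c n x)) n)) := by gcongr
        _ = _ := by ring
  -- both sides are continuous in `t`
  have hcont : ∀ y : Seq S, Continuous fun t => F (y, t) := fun y =>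
    (LipschitzWith.of_dist_le_mul (K := ⟨L, hL⟩) fun s t => by
      rw [Real.dist_eq, Real.dist_eq]; exact hF.lip y s t).continuous
  have hdense := Measure.dense_of_ae hae
  intro t
  have hclosed : IsClosed {t : ℝ | |F (x', t + c₀ - R a) - F (x, t)| ≤ L * (2 * ε)} := by
    refine isClosed_le ?_ continuous_const
    exact (((hcont x').comp (by fun_prop)).sub (hcont x)).abs
  have := hclosed.closure_eq ▸ hdense t
  exact this

/-- Along each swap, an invariant observable is transported by block
replacement at site `a` to a fibre translate by `c₀ - Rs a`, with `c₀` independent of the site. -/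
lemma MC.star (h : MC μ A P π δ M) (hc : Coc μ c)
    (hrec : ∀ᵐ x ∂μ, ∃ k : ℝ, ∃ᶠ n : ℕ in atTop, |c n x| ≤ k) (hL : 0 ≤ L) (hF : Obs L F)
    (hinv : ∀ z, F (Tz c 1 z) = F z) {b : ℤ} {w v : Seq S} (hs : Sw A 0 b w v) :
    ∃ c₀ : ℝ, ∀ a : ℤ, ∀ᵐ x ∂μ, x ∈ cyS b a w → ∀ t : ℝ,
      F (repS b a v x, t + c₀ - Rs P b w v a) = F (x, t) := by
  have hlev := fun k : ℕ => h.exists_level hc (h.Rs_bdd hs) (ε := 1 / ((k : ℝ) + 1)) (by positivity)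
  choose cs hcs hdom using hlev
  obtain ⟨c₀, -, φ, hφ, hlim⟩ := isCompact_Icc.tendsto_subseq hcs
  refine ⟨c₀, fun a => ?_⟩
  have hall : ∀ᵐ x ∂μ, ∀ k, x ∈ cyS b a w → ∀ t : ℝ,
      |F (repS b a v x, t + cs k - Rs P b w v a) - F (x, t)| ≤ L * (2 * (1 / ((k : ℝ) + 1))) :=
    ae_all_iff.2 fun k => h.star_eps hc hrec hL hF hinv hs (by positivity) (hdom k) a
  filter_upwards [hall] with x hx hxm t
  have hb : ∀ k, |F (repS b a v x, t + c₀ - Rs P b w v a) - F (x, t)|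
      ≤ L * (2 * (1 / ((φ k : ℝ) + 1))) + L * |c₀ - cs (φ k)| := by
    intro k
    have h1 := hx (φ k) hxm t
    have h2 := hF.lip (repS b a v x) (t + c₀ - Rs P b w v a) (t + cs (φ k) - Rs P b w v a)
    rw [show t + c₀ - Rs P b w v a - (t + cs (φ k) - Rs P b w v a) = c₀ - cs (φ k) by ring] at h2
    calc _ ≤ _ := abs_sub_le _ (F (repS b a v x, t + cs (φ k) - Rs P b w v a)) _
      _ ≤ _ := by linarith
  have hlim2 : Tendsto (fun k => L * (2 * (1 / ((φ k : ℝ) + 1))) + L * |c₀ - cs (φ k)|) atTop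
      (𝓝 (L * (2 * 0) + L * |c₀ - c₀|)) := by
    refine Tendsto.add ?_ ?_
    · exact (((tendsto_one_div_add_atTop_nhds_zero_nat (𝕜 := ℝ)).comp hφ.tendsto_atTop).const_mul
        2).const_mul L
    · exact ((tendsto_const_nhds.sub hlim).abs).const_mul L
  simp only [mul_zero, sub_self, abs_zero, add_zero] at hlim2
  have h0 := ge_of_tendsto' hlim2 hb
  have := abs_nonpos_iff.1 h0
  linarith

end Star

/-! ### Oscillating gains force invariant observables to be constant on fibres -/

section Oscillation

/-- A bounded slowly varying sequence without a limit has a nondegenerate interval of cluster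
points. -/
lemma exists_cluster_interval {u : ℕ → ℝ} {C : ℝ} (hb : ∀ n, |u n| ≤ C)
    (hslow : Tendsto (fun n => u (n + 1) - u n) atTop (𝓝 0))
    (hnot : ¬ ∃ l, Tendsto u atTop (𝓝 l)) :
    ∃ α β : ℝ, α < β ∧ ∀ r ∈ Set.Icc α β, ∀ ε > 0, ∃ᶠ n in atTop, |u n - r| < ε := by
  have hcross : ∃ α β : ℝ, α < β ∧ (∃ᶠ n in atTop, u n < α) ∧ ∃ᶠ n in atTop, β < u n := by
    by_contra hcon
    push Not at hcon
    refine hnot (tendsto_of_no_upcrossings (s := Set.univ) dense_univ ?_ ?_ ?_)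
    · rintro a - b - hab ⟨h1, h2⟩
      have := hcon a b hab h1
      exact h2 (by filter_upwards [this] with n hn using not_lt.2 hn)
    · exact isBoundedUnder_of ⟨C, fun n => (abs_le.1 (hb n)).2⟩
    · exact isBoundedUnder_of ⟨-C, fun n => (abs_le.1 (hb n)).1⟩
  obtain ⟨α, β, hαβ, hlo, hhi⟩ := hcross
  refine ⟨α, β, hαβ, fun r hr ε hε => ?_⟩
  rw [frequently_atTop]
  intro N
  obtain ⟨N₁, hN₁⟩ := eventually_atTop.1 (Metric.tendsto_nhds.1 hslow ε hε)
  obtain ⟨n, hn, hnlo⟩ := frequently_atTop.1 hlo (max N N₁)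
  obtain ⟨m, hm, hmhi⟩ := frequently_atTop.1 hhi n
  by_contra hcon
  push Not at hcon
  -- without a passage close to `r` the sequence stays below `r` from time `n` on
  have hbelow : ∀ k, u (n + k) < r := by
    intro k
    induction k with
    | zero => exact lt_of_lt_of_le hnlo hr.1
    | succ k ih =>
      by_contra hge
      push Not at hge
      have h1 := hN₁ (n + k) (by omega)
      rw [Real.dist_eq, sub_zero] at h1
      have h2 := hcon (n + (k + 1)) (by omega)
      rw [← add_assoc] at h2 hge
      have h3 := (abs_lt.1 h1).2
      rw [abs_of_nonneg (by linarith)] at h2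
      linarith
  have := hbelow (m - n)
  rw [Nat.add_sub_cancel' hm] at this
  linarith [hr.2]

variable {S : Type*} [Fintype S] [MeasurableSpace S] [MeasurableSingletonClass S]
  {μ : Measure (Seq S)} {A : S → S → Bool} {P : ℤ → S → S → ℝ} {π : ℤ → S → ℝ} {δ : ℝ} {M : ℕ}
  {c : ℤ → Seq S → ℝ} {L : ℝ} {F : Seq S × ℝ → ℝ}

/-- If the gain at far sites clusters at `r`, then the fibre translation by `c₀ - r` preserves the
observable. -/
lemma MC.translate (h : MC μ A P π δ M) (hL : 0 ≤ L) (hF : Obs L F)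
    {b : ℤ} {w v : Seq S} (hs : Sw A 0 b w v) {c₀ : ℝ}
    (hstar : ∀ a : ℤ, ∀ᵐ x ∂μ, x ∈ cyS b a w → ∀ t : ℝ,
      F (repS b a v x, t + c₀ - Rs P b w v a) = F (x, t))
    {r : ℝ} (hr : ∀ ε > 0, ∃ᶠ a : ℤ in cofinite, |Rs P b w v a - r| < ε) (t : ℝ) :
    ∀ᵐ x ∂μ, F (x, t + c₀ - r) = F (x, t) := by
  have := h.prob
  have hms : ∀ s : ℝ, Measurable fun x => F (x, s) := fun s =>
    (show Measurable fun x => F (x, s) from hF.meas.comp (measurable_id.prodMk measurable_const))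
  suffices hη : ∀ k : ℕ, ∀ᵐ x ∂μ, |F (x, t + c₀ - r) - F (x, t)| ≤ 1 / ((k : ℝ) + 1) by
    filter_upwards [ae_all_iff.2 hη] with x hx
    have h0 := ge_of_tendsto' (tendsto_one_div_add_atTop_nhds_zero_nat (𝕜 := ℝ)) hx
    linarith [abs_nonpos_iff.1 h0]
  intro k
  set η : ℝ := 1 / ((k : ℝ) + 1) with hηd
  have hη : 0 < η := by positivity
  set Z : Set (Seq S) := {x | η < |F (x, t + c₀ - r) - F (x, t)|} with hZd
  have hZ : MeasurableSet Z := measurableSet_lt measurable_const ((hms _).sub (hms _)).abs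
  have hZ0 : μ Z = 0 := by
    by_contra hne
    obtain ⟨d, hd, hd2⟩ := h.mix_pos hs.le hs.adm_w hZ (pos_iff_ne_zero.2 hne)
    have hfar := Metric.tendsto_nhds.1 (h.far hs (hms (t + c₀ - r)) (η := η / 2) (by positivity))
      d hd
    obtain ⟨a, ha1, ha2, ha3⟩ := ((hr (η / (2 * (L + 1))) (by positivity)).and_eventually
      (hd2.and hfar)).exists
    rw [Real.dist_eq, sub_zero, abs_of_nonneg measureReal_nonneg] at ha3
    refine absurd (ha2.trans ?_) (not_le.2 ha3)
    refine ENNReal.toReal_mono (measure_ne_top _ _) (measure_mono_ae ?_)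
    filter_upwards [hstar a] with x hx hxZ
    refine ⟨hxZ.2, ?_⟩
    have h1 := hx hxZ.2 t
    have h2 := hF.lip (repS b a v x) (t + c₀ - r) (t + c₀ - Rs P b w v a)
    rw [h1, show t + c₀ - r - (t + c₀ - Rs P b w v a) = Rs P b w v a - r by ring] at h2
    have h3 : L * |Rs P b w v a - r| ≤ η / 2 := by
      calc L * |Rs P b w v a - r| ≤ (L + 1) * (η / (2 * (L + 1))) := by
            apply mul_le_mul (by linarith) ha1.le (abs_nonneg _) (by linarith)
        _ = η / 2 := by field_simp
    have h4 : η < |F (x, t + c₀ - r) - F (x, t)| := hxZ.1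
    have h5 := abs_sub_le (F (x, t + c₀ - r)) (F (repS b a v x, t + c₀ - r)) (F (x, t))
    rw [abs_sub_comm (F (x, t + c₀ - r)) (F (repS b a v x, t + c₀ - r))] at h5
    show η / 2 < |F (repS b a v x, t + c₀ - r) - F (x, t + c₀ - r)|
    linarith
  filter_upwards [measure_eq_zero_iff_ae_notMem.1 hZ0] with x hx
  exact not_lt.1 hx

/-- If the gains of some swap cluster along an interval, then every invariant observable is
constant on almost every fibre. -/
lemma MC.const_of_interval (h : MC μ A P π δ M) (hc : Coc μ c)
    (hrec : ∀ᵐ x ∂μ, ∃ k : ℝ, ∃ᶠ n : ℕ in atTop, |c n x| ≤ k) (hL : 0 ≤ L) (hF : Obs L F)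
    (hinv : ∀ z, F (Tz c 1 z) = F z) {b : ℤ} {w v : Seq S} (hs : Sw A 0 b w v)
    {α β : ℝ} (hαβ : α < β)
    (hcl : ∀ r ∈ Set.Icc α β, ∀ ε > 0, ∃ᶠ a : ℤ in cofinite, |Rs P b w v a - r| < ε) :
    ∀ᵐ x ∂μ, ∀ t, F (x, t) = F (x, 0) := by
  obtain ⟨c₀, hstar⟩ := h.star hc hrec hL hF hinv hs
  have hall : ∀ᵐ x ∂μ, ∀ q : ℚ, ((q : ℝ) ∈ Set.Icc α β) → ∀ t : ℚ,
      F (x, t + c₀ - q) = F (x, t) := by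
    rw [ae_all_iff]
    intro q
    by_cases hq : (q : ℝ) ∈ Set.Icc α β
    · filter_upwards [ae_all_iff.2 fun t : ℚ => h.translate hL hF hs hstar (hcl q hq) t]
        with x hx _ using hx
    · exact ae_of_all _ fun x hx => absurd hx hq
  filter_upwards [hall] with x hx
  have hcont : Continuous fun t => F (x, t) := by
    have : LipschitzWith L.toNNReal fun t => F (x, t) :=
      LipschitzWith.of_dist_le_mul fun s t => by
        rw [Real.dist_eq, Real.dist_eq, Real.coe_toNNReal _ hL]
        exact hF.lip x s t
    exact this.continuous
  have hreal : ∀ q : ℚ, ((q : ℝ) ∈ Set.Icc α β) → ∀ t : ℝ, F (x, t + c₀ - q) = F (x, t) := by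
    intro q hq
    have h1 : Continuous fun t : ℝ => F (x, t + c₀ - q) :=
      hcont.comp ((continuous_id.add continuous_const).sub continuous_const)
    exact fun t => congrFun (Rat.denseRange_cast.equalizer h1 hcont (funext (hx q hq))) t
  -- the periods of the fibre function form a subgroup with arbitrarily small elements
  let G : AddSubgroup ℝ :=
    { carrier := {g | ∀ t, F (x, t + g) = F (x, t)}
      zero_mem' := fun t => by simp
      add_mem' := fun {g g'} hg hg' t => by rw [← add_assoc, hg', hg]
      neg_mem' := fun {g} hg t => by rw [← hg (t + -g)]; simp }
  have hG : Dense (G : Set ℝ) := by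
    refine AddSubgroup.dense_of_not_isolated_zero G fun ε hε => ?_
    obtain ⟨q, hq1, hq2⟩ := exists_rat_btwn hαβ
    obtain ⟨q', hq1', hq2'⟩ := exists_rat_btwn (show (q : ℝ) < min β (q + ε) from
      lt_min hq2 (by linarith))
    have h1 := lt_min_iff.1 hq2'
    refine ⟨(q' : ℝ) - q, fun t => ?_, by linarith, by linarith⟩
    have e1 := hreal q ⟨hq1.le, hq2.le⟩ (t + q' - c₀)
    have e2 := hreal q' ⟨by linarith, h1.1.le⟩ (t + q' - c₀)
    rw [show t + q' - c₀ + c₀ - q = t + ((q' : ℝ) - q) by ring] at e1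
    rw [show t + q' - c₀ + c₀ - q' = t by ring] at e2
    rw [e1, e2]
  have hfin := Continuous.ext_on hG hcont (continuous_const (y := F (x, 0))) (fun g hg => by
    have := hg 0
    simpa using this)
  exact fun t => congrFun hfin t

end Oscillation

/-! ### Convergence of all gains forces convergence of the transition matrices -/

section Converge

variable {S : Type*}

/-- The transition weight of the block `w|[0, m]` placed at site `n`. -/
noncomputable def wt (P : ℤ → S → S → ℝ) (n : ℤ) (m : ℕ) (w : Seq S) : ℝ :=
  ∏ i ∈ Finset.range m, P (n + i) (w i) (w (i + 1))

lemma wt_eq_pr (P : ℤ → S → S → ℝ) (n : ℤ) (m : ℕ) (w : Seq S) :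
    wt P n m w = pr P n (n + m) (shiftZ (-n) w) := by
  unfold wt pr shiftZ
  refine Finset.prod_bij (fun i _ => n + (i : ℤ)) ?_ ?_ ?_ ?_
  · intro i hi; rw [Finset.mem_range] at hi; rw [Finset.mem_Ico]; omega
  · intro i _ j _ hij
    simpa using hij
  · intro j hj
    rw [Finset.mem_Ico] at hj
    exact ⟨(j - n).toNat, by rw [Finset.mem_range]; omega, by rw [Int.toNat_of_nonneg] <;> omega⟩
  · intro i _
    rw [show n + (i : ℤ) + -n = i by ring, show n + (i : ℤ) + 1 + -n = i + 1 by ring]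

/-- The sequence `v` moved one step to the right, with `s` written on the coordinates up to `0`. -/
def cons (s : S) (v : Seq S) : Seq S := fun i => if i ≤ 0 then s else v (i - 1)

lemma cons_zero (s : S) (v : Seq S) : cons s v 0 = s := by simp [cons]

lemma cons_succ (s : S) (v : Seq S) (i : ℕ) : cons s v ((i : ℤ) + 1) = v i := by
  unfold cons
  rw [if_neg (by omega)]
  congr 1; ring

lemma wt_cons (P : ℤ → S → S → ℝ) (n : ℤ) (m : ℕ) (s : S) (v : Seq S) :
    wt P n (m + 1) (cons s v) = P n s (v 0) * wt P (n + 1) m v := by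
  unfold wt
  rw [Finset.prod_range_succ', mul_comm]
  congr 1
  · have h1 := cons_succ s v 0
    simp only [Nat.cast_zero, zero_add, add_zero] at h1 ⊢
    rw [cons_zero, h1]
  · refine Finset.prod_congr rfl fun i _ => ?_
    have h1 := cons_succ s v i
    have h2 := cons_succ s v (i + 1)
    push_cast at h1 h2 ⊢
    rw [h1, h2, show n + ((i : ℤ) + 1) = n + 1 + i by ring]

lemma adm_cons {A : S → S → Bool} {m : ℕ} {s : S} {v : Seq S} (hsv : A s (v 0) = true)
    (hv : Adm A 0 m v) : Adm A 0 (m + 1 : ℕ) (cons s v) := by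
  intro i h1 h2
  obtain ⟨j, rfl⟩ := Int.eq_ofNat_of_zero_le h1
  rw [cons_succ]
  rcases j with _ | j
  · simpa [cons_zero] using hsv
  · push_cast
    rw [cons_succ]
    have := hv j (by omega) (by push_cast at h2; omega)
    simpa using this

variable [Fintype S]

open Classical in
/-- The `m`-step transition probability from `s` at time `n` to `u` at time `n + m`. -/
noncomputable def trn (P : ℤ → S → S → ℝ) : ℕ → ℤ → S → S → ℝ
  | 0, _, s, u => if s = u then 1 else 0
  | m + 1, n, s, u => ∑ t, P n s t * trn P m (n + 1) t u

lemma trn_add (P : ℤ → S → S → ℝ) (m k : ℕ) (n : ℤ) (s u : S) :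
    trn P (m + k) n s u = ∑ t, trn P m n s t * trn P k (n + m) t u := by
  induction m generalizing n s with
  | zero => classical simp [trn]
  | succ m ih =>
    rw [show m + 1 + k = (m + k) + 1 by ring]
    simp only [trn]
    simp_rw [ih, Finset.mul_sum, Finset.sum_mul]
    rw [Finset.sum_comm]
    refine Finset.sum_congr rfl fun t _ => Finset.sum_congr rfl fun t' _ => ?_
    rw [show n + 1 + (m : ℤ) = n + ((m + 1 : ℕ) : ℤ) by push_cast; ring]
    ring

lemma trn_nonneg {K : ℤ → S → S → ℝ} (hK : ∀ n s t, 0 ≤ K n s t) (m : ℕ) (n : ℤ) (s u : S) :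
    0 ≤ trn K m n s u := by
  induction m generalizing n s with
  | zero => simp only [trn]; split_ifs <;> norm_num
  | succ m ih => exact Finset.sum_nonneg fun t _ => mul_nonneg (hK _ _ _) (ih _ _)

lemma trn_path {A : S → S → Bool} {δ : ℝ} {K : ℤ → S → S → ℝ} (hK : ∀ n s t, 0 ≤ K n s t)
    (hge : ∀ n s t, A s t = true → δ ≤ K n s t) (hδ : 0 ≤ δ) (m : ℕ) (n : ℤ) (u : ℕ → S)
    (hu : ∀ i < m, A (u i) (u (i + 1)) = true) : δ ^ m ≤ trn K m n (u 0) (u m) := by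
  induction m generalizing n u with
  | zero => simp [trn]
  | succ m ih =>
    have h1 := ih (n + 1) (fun i => u (i + 1)) (fun i hi => hu (i + 1) (by omega))
    simp only [zero_add] at h1
    have h2 := hge n _ _ (hu 0 (by omega))
    calc δ ^ (m + 1) = δ * δ ^ m := by ring
      _ ≤ K n (u 0) (u 1) * trn K m (n + 1) (u 1) (u (m + 1)) :=
        mul_le_mul h2 h1 (pow_nonneg hδ _) (hK _ _ _)
      _ ≤ _ := Finset.single_le_sum (f := fun t => K n (u 0) t * trn K m (n + 1) t (u (m + 1)))
        (fun t _ => mul_nonneg (hK _ _ _) (trn_nonneg hK _ _ _ _)) (Finset.mem_univ (u 1))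

variable [MeasurableSpace S] [MeasurableSingletonClass S]
  {μ : Measure (Seq S)} {A : S → S → Bool} {P : ℤ → S → S → ℝ} {π : ℤ → S → ℝ} {δ : ℝ} {M : ℕ}
  {c : ℤ → Seq S → ℝ}

lemma MC.trn_nonneg (h : MC μ A P π δ M) (m : ℕ) (n : ℤ) (s u : S) : 0 ≤ trn P m n s u :=
  MarkovSFT.trn_nonneg h.nonneg m n s u

lemma MC.trn_sum (h : MC μ A P π δ M) (m : ℕ) (n : ℤ) (s : S) : ∑ u, trn P m n s u = 1 := by
  induction m generalizing n s with
  | zero => classical simp [trn]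
  | succ m ih =>
    simp only [trn]
    rw [Finset.sum_comm]
    simp_rw [← Finset.mul_sum, ih, mul_one]
    exact h.sum_one n s

lemma MC.trn_le_one (h : MC μ A P π δ M) (m : ℕ) (n : ℤ) (s u : S) : trn P m n s u ≤ 1 := by
  rw [← h.trn_sum m n s]
  exact Finset.single_le_sum (fun t _ => h.trn_nonneg m n s t) (Finset.mem_univ u)

lemma MC.trn_path (h : MC μ A P π δ M) (m : ℕ) (n : ℤ) (u : ℕ → S)
    (hu : ∀ i < m, A (u i) (u (i + 1)) = true) : δ ^ m ≤ trn P m n (u 0) (u m) :=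
  MarkovSFT.trn_path h.nonneg h.ge h.δpos.le m n u hu

lemma MC.trn_ge (h : MC μ A P π δ M) (n : ℤ) (s u : S) : δ ^ M ≤ trn P M n s u := by
  obtain ⟨p, rfl, rfl, hp⟩ := h.path s u
  exact h.trn_path M n p hp

/-- Either some admissible block of length `m` leads from `s` to `u`, or the `m`-step transition
probability vanishes at every time. -/
lemma MC.word_or_zero (h : MC μ A P π δ M) (m : ℕ) (s u : S) :
    (∃ w : Seq S, Adm A 0 m w ∧ w 0 = s ∧ w m = u) ∨ ∀ n, trn P m n s u = 0 := by
  induction m generalizing s with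
  | zero =>
    by_cases hsu : s = u
    · exact Or.inl ⟨fun _ => s, fun i h1 h2 => by simp at h2; omega, rfl, hsu⟩
    · exact Or.inr fun n => by simp [trn, hsu]
  | succ m ih =>
    by_cases hex : ∃ t, A s t = true ∧ ∃ w : Seq S, Adm A 0 m w ∧ w 0 = t ∧ w m = u
    · obtain ⟨t, hst, w, hw, rfl, rfl⟩ := hex
      refine Or.inl ⟨cons s w, adm_cons hst hw, cons_zero _ _, ?_⟩
      push_cast
      exact cons_succ _ _ _
    · refine Or.inr fun n => Finset.sum_eq_zero fun t _ => ?_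
      by_cases hst : A s t = true
      · rcases ih t with h1 | h1
        · exact absurd ⟨t, hst, h1⟩ hex
        · rw [h1, mul_zero]
      · rw [h.zero n s t (by simpa using hst), zero_mul]

lemma MC.wt_pos (h : MC μ A P π δ M) (n : ℤ) {m : ℕ} {w : Seq S} (hw : Adm A 0 m w) :
    0 < wt P n m w := by
  refine Finset.prod_pos fun i hi => lt_of_lt_of_le h.δpos (h.ge _ _ _ ?_)
  exact hw i (by omega) (by rw [Finset.mem_range] at hi; omega)

lemma MC.exp_Rs (h : MC μ A P π δ M) {m : ℕ} {w v : Seq S} (hs : Sw A 0 m w v) (n : ℤ) :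
    Real.exp (Rs P m w v n) = wt P n m v / wt P n m w := by
  unfold Rs RR
  rw [← wt_eq_pr, ← wt_eq_pr, Real.exp_sub, Real.exp_log (h.wt_pos n hs.adm_v),
    Real.exp_log (h.wt_pos n hs.adm_w)]

lemma MC.trn_div_wt (h : MC μ A P π δ M)
    (hconv : ∀ (m : ℕ) (w v : Seq S), Sw A 0 m w v →
      ∃ l, Tendsto (Rs P m w v) cofinite (𝓝 l)) (m : ℕ) :
    ∀ w : Seq S, Adm A 0 m w →
    ∃ l > 0, Tendsto (fun n : ℤ => trn P m n (w 0) (w m) / wt P n m w) cofinite (𝓝 l) := by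
  induction m with
  | zero =>
    intro w _
    exact ⟨1, one_pos, by simp [trn, wt]⟩
  | succ m ih =>
    intro w hw
    have hterm : ∀ t, ∃ l : ℝ, 0 ≤ l ∧ (t = w 1 → 0 < l) ∧
        Tendsto (fun n : ℤ => P n (w 0) t * trn P m (n + 1) t (w (m + 1 : ℕ)) / wt P n (m + 1) w)
          cofinite (𝓝 l) := by
      intro t
      have hgood : A (w 0) t = true → (∃ v : Seq S, Adm A 0 m v ∧ v 0 = t ∧ v m = w (m + 1 : ℕ)) →
          ∃ l : ℝ, 0 < l ∧ Tendsto (fun n : ℤ =>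
            P n (w 0) t * trn P m (n + 1) t (w (m + 1 : ℕ)) / wt P n (m + 1) w)
          cofinite (𝓝 l) := by
        rintro hst ⟨v, hv, rfl, hvm⟩
        obtain ⟨l, hl, hlt⟩ := ih v hv
        have hs : Sw A 0 (m + 1 : ℕ) w (cons (w 0) v) :=
          ⟨by omega, hw, adm_cons hst hv, (cons_zero _ _).symm, by
            rw [← hvm]; push_cast; exact (cons_succ _ _ _).symm⟩
        obtain ⟨r, hr⟩ := hconv _ _ _ hs
        have hinj : Tendsto (fun n : ℤ => n + 1) cofinite cofinite :=
          (add_left_injective (1 : ℤ)).tendsto_cofinite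
        refine ⟨Real.exp r * l, by positivity, ?_⟩
        have := ((Real.continuous_exp.tendsto r).comp hr).mul (hlt.comp hinj)
        refine this.congr fun n => ?_
        simp only [Function.comp]
        rw [h.exp_Rs hs, wt_cons, hvm]
        have := (h.wt_pos (n + 1) hv).ne'
        have := (h.wt_pos n hw).ne'
        field_simp
      by_cases hst : A (w 0) t = true
      · rcases h.word_or_zero m t (w (m + 1 : ℕ)) with h1 | h1
        · obtain ⟨l, hl, hlt⟩ := hgood hst h1
          exact ⟨l, hl.le, fun _ => hl, hlt⟩
        · refine ⟨0, le_rfl, fun ht => ?_, by simp only [h1, mul_zero, zero_div]; exact tendsto_const_nhds⟩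
          exfalso
          subst ht
          have h2 := h.trn_path m 0 (fun i => w ((i : ℤ) + 1)) (fun i hi => by
            have := hw (i + 1) (by omega) (by push_cast; omega)
            push_cast
            exact this)
          have h3 := h1 0
          simp only [Nat.cast_zero, zero_add] at h2
          push_cast at h3
          rw [h3] at h2
          exact absurd h2 (not_le.2 (pow_pos h.δpos m))
      · refine ⟨0, le_rfl, fun ht => ?_, ?_⟩
        · exfalso
          subst ht
          exact hst (by simpa using hw 0 le_rfl (by push_cast; omega))
        · have : ∀ n, P n (w 0) t = 0 := fun n => h.zero n _ _ (by simpa using hst)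
          simp [this]
    choose l hl0 hlpos hlt using hterm
    refine ⟨∑ t, l t, ?_, ?_⟩
    · exact Finset.sum_pos' (fun t _ => hl0 t) ⟨w 1, Finset.mem_univ _, hlpos _ rfl⟩
    · have := tendsto_finsetSum (Finset.univ : Finset S) fun t _ => hlt t
      refine this.congr fun n => ?_
      simp only [trn]
      rw [Finset.sum_div]

/-- The law of the first step of the bridge from `s` to `u` of length `m + 1` converges. -/
lemma MC.bridge_tendsto (h : MC μ A P π δ M)
    (hconv : ∀ (m : ℕ) (w v : Seq S), Sw A 0 m w v →
      ∃ l, Tendsto (Rs P m w v) cofinite (𝓝 l)) (m : ℕ) (s t u : S) :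
    ∃ l, Tendsto (fun n : ℤ => P n s t * trn P m (n + 1) t u / trn P (m + 1) n s u)
      cofinite (𝓝 l) := by
  by_cases hst : A s t = true
  · rcases h.word_or_zero m t u with ⟨v, hv, rfl, rfl⟩ | h1
    · have hw := adm_cons hst hv
      obtain ⟨l, hl, hlt⟩ := h.trn_div_wt hconv m v hv
      obtain ⟨l', hl', hlt'⟩ := h.trn_div_wt hconv (m + 1) _ hw
      have hinj : Tendsto (fun n : ℤ => n + 1) cofinite cofinite :=
          (add_left_injective (1 : ℤ)).tendsto_cofinite
      refine ⟨l / l', ((hlt.comp hinj).div hlt' hl'.ne').congr fun n => ?_⟩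
      simp only [Function.comp, Pi.div_apply]
      rw [wt_cons, cons_zero]
      have e1 : cons s v ((m + 1 : ℕ) : ℤ) = v m := by push_cast; exact cons_succ _ _ _
      rw [e1]
      have h1 := (h.wt_pos (n + 1) hv).ne'
      have h2 := (lt_of_lt_of_le h.δpos (h.ge n _ _ hst)).ne'
      rcases eq_or_ne (trn P (m + 1) n s (v m)) 0 with h3 | h3
      · rw [h3]; simp
      · field_simp
    · exact ⟨0, by simp [h1]⟩
  · have : ∀ n, P n s t = 0 := fun n => h.zero n _ _ (by simpa using hst)
    exact ⟨0, by simp [this]⟩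

/-- A stochastic matrix with entries at least `κ` contracts oscillations. -/
lemma osc_contract {K : S → S → ℝ} {κ d : ℝ} {g : S → ℝ} (hκ : ∀ s t, κ ≤ K s t) (hκ0 : 0 ≤ κ)
    (hK : ∀ s, ∑ t, K s t = 1) (hd : 0 ≤ d) (hg : ∀ s t, g s - g t ≤ d) (s s' : S) :
    ∑ t, K s t * g t - ∑ t, K s' t * g t ≤ (1 - κ) * d := by
  obtain ⟨r, -, hr⟩ := Finset.exists_min_image Finset.univ g ⟨s, Finset.mem_univ s⟩
  have e1 : ∑ t, K s t * g t - ∑ t, K s' t * g t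
      = ∑ t, (K s t - K s' t) * (g t - g r) := by
    simp_rw [sub_mul, mul_sub, Finset.sum_sub_distrib, ← Finset.sum_mul, hK]
    ring
  rw [e1]
  calc ∑ t, (K s t - K s' t) * (g t - g r) ≤ ∑ t, (K s t - κ) * d := by
        refine Finset.sum_le_sum fun t _ => ?_
        have h1 := hr t (Finset.mem_univ t)
        calc (K s t - K s' t) * (g t - g r) ≤ (K s t - κ) * (g t - g r) :=
              mul_le_mul_of_nonneg_right (by linarith [hκ s' t]) (by linarith)
          _ ≤ (K s t - κ) * d := mul_le_mul_of_nonneg_left (hg t r) (by linarith [hκ s t])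
    _ = (1 - ∑ _t : S, κ) * d := by
        rw [← Finset.sum_mul, Finset.sum_sub_distrib, hK]
    _ ≤ (1 - κ) * d := by
        refine mul_le_mul_of_nonneg_right ?_ hd
        have := Finset.single_le_sum (f := fun _ : S => κ) (fun _ _ => hκ0) (Finset.mem_univ s)
        linarith

lemma MC.trn_osc (h : MC μ A P π δ M) (j : ℕ) (n : ℤ) (u s s' : S) :
    trn P (M * j + M) n s u - trn P (M * j + M) n s' u ≤ (1 - δ ^ M) ^ j := by
  have hκ : 0 ≤ δ ^ M := pow_nonneg h.δpos.le _
  have hκ1 : δ ^ M ≤ 1 := (h.trn_ge n s u).trans (h.trn_le_one _ _ _ _)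
  induction j generalizing n s s' with
  | zero =>
    rw [pow_zero]
    linarith [h.trn_le_one (M * 0 + M) n s u, h.trn_nonneg (M * 0 + M) n s' u]
  | succ j ih =>
    rw [show M * (j + 1) + M = M + (M * j + M) by ring, trn_add, trn_add, pow_succ']
    exact osc_contract (fun s t => h.trn_ge n s t) hκ (fun s => h.trn_sum M n s)
      (pow_nonneg (by linarith) _) (fun s t => ih _ s t) s s'

lemma MC.trn_lower (h : MC μ A P π δ M) (k : ℕ) (n : ℤ) (s u : S) :
    δ ^ M ≤ trn P (k + M) n s u := by
  rw [trn_add]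
  calc δ ^ M = ∑ t, trn P k n s t * δ ^ M := by rw [← Finset.sum_mul, h.trn_sum, one_mul]
    _ ≤ _ := Finset.sum_le_sum fun t _ =>
      mul_le_mul_of_nonneg_left (h.trn_ge _ _ _) (h.trn_nonneg _ _ _ _)

/-- Conditioning on a far endpoint hardly changes the law of the first step. -/
lemma MC.bridge_close (h : MC μ A P π δ M) (j : ℕ) (n : ℤ) (s t u : S) :
    |P n s t * trn P (M * j + M) (n + 1) t u / trn P (M * j + M + 1) n s u - P n s t|
      ≤ (1 - δ ^ M) ^ j / δ ^ M := by
  have hκ : 0 < δ ^ M := pow_pos h.δpos _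
  set g : S → ℝ := fun t => trn P (M * j + M) (n + 1) t u with hg
  have hW : trn P (M * j + M + 1) n s u = ∑ t, P n s t * g t := rfl
  have hlow : δ ^ M ≤ ∑ t, P n s t * g t := by
    calc δ ^ M = ∑ t, P n s t * δ ^ M := by rw [← Finset.sum_mul, h.sum_one, one_mul]
      _ ≤ _ := Finset.sum_le_sum fun t _ =>
        mul_le_mul_of_nonneg_left (h.trn_lower _ _ _ _) (h.nonneg _ _ _)
  have hosc : |g t - ∑ t', P n s t' * g t'| ≤ (1 - δ ^ M) ^ j := by
    have e : g t - ∑ t', P n s t' * g t' = ∑ t', P n s t' * (g t - g t') := by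
      simp_rw [mul_sub, Finset.sum_sub_distrib, ← Finset.sum_mul, h.sum_one, one_mul]
    have e2 : ∑ t', P n s t' * (1 - δ ^ M) ^ j = (1 - δ ^ M) ^ j := by
      rw [← Finset.sum_mul, h.sum_one, one_mul]
    rw [e, ← e2]
    refine (Finset.abs_sum_le_sum_abs _ _).trans (Finset.sum_le_sum fun t' _ => ?_)
    rw [abs_mul, abs_of_nonneg (h.nonneg _ _ _)]
    refine mul_le_mul_of_nonneg_left (abs_sub_le_iff.2 ⟨h.trn_osc _ _ _ _ _, h.trn_osc _ _ _ _ _⟩)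
      (h.nonneg _ _ _)
  rw [hW]
  set D := ∑ t', P n s t' * g t' with hD
  have hDpos : 0 < D := hκ.trans_le hlow
  have e3 : P n s t * g t / D - P n s t = P n s t * ((g t - D) / D) := by
    field_simp
  rw [e3, abs_mul, abs_of_nonneg (h.nonneg _ _ _), abs_div, abs_of_pos hDpos]
  calc P n s t * (|g t - D| / D) ≤ 1 * (|g t - D| / D) :=
        mul_le_mul_of_nonneg_right (h.le_one _ _ _) (by positivity)
    _ ≤ (1 - δ ^ M) ^ j / δ ^ M := by
        rw [one_mul]
        exact div_le_div₀ ((abs_nonneg _).trans hosc) hosc hκ hlow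

lemma MC.tendsto_of_gains (h : MC μ A P π δ M)
    (hconv : ∀ (m : ℕ) (w v : Seq S), Sw A 0 m w v →
      ∃ l, Tendsto (Rs P m w v) cofinite (𝓝 l)) :
    ∃ Q : S → S → ℝ, Tendsto P cofinite (𝓝 Q) := by
  obtain ⟨u⟩ := h.nonempty
  have hκ : 0 < δ ^ M := pow_pos h.δpos _
  have hκ1 : δ ^ M ≤ 1 := (h.trn_ge 0 u u).trans (h.trn_le_one _ _ _ _)
  have hθ : Tendsto (fun j : ℕ => (1 - δ ^ M) ^ j / δ ^ M) atTop (𝓝 0) := by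
    have := (tendsto_pow_atTop_nhds_zero_of_lt_one (r := 1 - δ ^ M) (by linarith)
      (by linarith)).div_const (δ ^ M)
    simpa using this
  have hpt : ∀ s t, ∃ q, Tendsto (fun n => P n s t) cofinite (𝓝 q) := by
    intro s t
    refine cauchy_map_iff_exists_tendsto.1 (Metric.cauchy_iff.2 ⟨inferInstance, fun ε hε => ?_⟩)
    obtain ⟨j, hj⟩ := ((Metric.tendsto_nhds.1 hθ) (ε / 4) (by positivity)).exists
    rw [Real.dist_eq, sub_zero] at hj
    have hj' := (abs_lt.1 hj).2
    obtain ⟨l, hl⟩ := h.bridge_tendsto hconv (M * j + M) s t u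
    have hl' := Metric.tendsto_nhds.1 hl (ε / 4) (by positivity)
    refine ⟨Metric.ball l (ε / 2), ?_, fun x hx y hy => ?_⟩
    · rw [mem_map]
      filter_upwards [hl'] with n hn
      rw [Set.mem_preimage, Metric.mem_ball, Real.dist_eq]
      rw [Real.dist_eq] at hn
      have h1 := h.bridge_close j n s t u
      rw [abs_sub_comm] at h1
      have h2 := abs_sub_le (P n s t)
        (P n s t * trn P (M * j + M) (n + 1) t u / trn P (M * j + M + 1) n s u) l
      linarith
    · have h1 := Metric.mem_ball.1 hx
      have h2 := Metric.mem_ball.1 hy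
      have h3 := dist_triangle_right x y l
      linarith
  choose Q hQ using hpt
  exact ⟨Q, tendsto_pi_nhds.2 fun s => tendsto_pi_nhds.2 fun t => hQ s t⟩

end Converge

/-! ### Distinct limits at the two ends contradict recurrence -/

section TwoEnds

lemma abs_log_sub_le {δ p q : ℝ} (hδ : 0 < δ) (hp : δ ≤ p) (hq : δ ≤ q) :
    |Real.log p - Real.log q| ≤ |p - q| / δ := by
  have key : ∀ p q : ℝ, δ ≤ p → δ ≤ q → Real.log p - Real.log q ≤ |p - q| / δ := by
    intro p q hp hq
    have hp0 := hδ.trans_le hp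
    have hq0 := hδ.trans_le hq
    rw [← Real.log_div hp0.ne' hq0.ne']
    calc Real.log (p / q) ≤ p / q - 1 := Real.log_le_sub_one_of_pos (by positivity)
      _ = (p - q) / q := by field_simp
      _ ≤ |p - q| / q := div_le_div_of_nonneg_right (le_abs_self _) hq0.le
      _ ≤ |p - q| / δ := div_le_div_of_nonneg_left (abs_nonneg _) hδ hq
  refine abs_sub_le_iff.2 ⟨key p q hp hq, ?_⟩
  rw [abs_sub_comm]
  exact key q p hq hp

variable {S : Type*} [Fintype S]

lemma sqrt_mul_eq {p q : ℝ} (hp : 0 ≤ p) (hq : 0 ≤ q) :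
    √(p * q) = (p + q) / 2 - (√p - √q) ^ 2 / 2 := by
  rw [Real.sqrt_mul hp, sub_sq, Real.sq_sqrt hp, Real.sq_sqrt hq]
  ring

lemma row_le_one {p q : S → ℝ} (hp : ∀ t, 0 ≤ p t) (hq : ∀ t, 0 ≤ q t)
    (hp1 : ∑ t, p t = 1) (hq1 : ∑ t, q t = 1) : ∑ t, √(p t * q t) ≤ 1 := by
  calc ∑ t, √(p t * q t) ≤ ∑ t, (p t + q t) / 2 := Finset.sum_le_sum fun t _ => by
        rw [sqrt_mul_eq (hp t) (hq t)]; linarith [sq_nonneg (√(p t) - √(q t))]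
    _ = 1 := by rw [← Finset.sum_div, Finset.sum_add_distrib, hp1, hq1]; norm_num

/-- The Hellinger affinity of two probability vectors differing by at least `d` in one entry is
bounded away from `1`. -/
lemma row_deficient {p q : S → ℝ} (hp : ∀ t, 0 ≤ p t) (hq : ∀ t, 0 ≤ q t)
    (hp1 : ∑ t, p t = 1) (hq1 : ∑ t, q t = 1) {d : ℝ} (hd : 0 ≤ d) {t₀ : S}
    (ht₀ : d ≤ |p t₀ - q t₀|) : ∑ t, √(p t * q t) ≤ 1 - d ^ 2 / 8 := by
  have hle : ∀ r : S → ℝ, (∀ t, 0 ≤ r t) → ∑ t, r t = 1 → √(r t₀) ≤ 1 := by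
    intro r hr hr1
    rw [Real.sqrt_le_one, ← hr1]
    exact Finset.single_le_sum (fun t _ => hr t) (Finset.mem_univ t₀)
  have h1 : d ^ 2 / 4 ≤ (√(p t₀) - √(q t₀)) ^ 2 := by
    have e : p t₀ - q t₀ = (√(p t₀) - √(q t₀)) * (√(p t₀) + √(q t₀)) := by
      linear_combination -Real.sq_sqrt (hp t₀) + Real.sq_sqrt (hq t₀)
    have e2 : d ^ 2 ≤ (p t₀ - q t₀) ^ 2 := by
      rw [← sq_abs (p t₀ - q t₀)]
      exact pow_le_pow_left₀ hd ht₀ 2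
    rw [e, mul_pow] at e2
    have e3 : (√(p t₀) + √(q t₀)) ^ 2 ≤ 4 := by
      have := hle p hp hp1
      have := hle q hq hq1
      have := Real.sqrt_nonneg (p t₀)
      have := Real.sqrt_nonneg (q t₀)
      nlinarith
    have := mul_le_mul_of_nonneg_left e3 (sq_nonneg (√(p t₀) - √(q t₀)))
    linarith
  have h2 : ∑ t, √(p t * q t) = 1 - ∑ t, (√(p t) - √(q t)) ^ 2 / 2 := by
    simp_rw [sqrt_mul_eq (hp _) (hq _)]
    rw [Finset.sum_sub_distrib, ← Finset.sum_div, Finset.sum_add_distrib, hp1, hq1]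
    norm_num
  have h3 := Finset.single_le_sum (f := fun t => (√(p t) - √(q t)) ^ 2 / 2)
    (fun t _ => by positivity) (Finset.mem_univ t₀)
  rw [h2]
  linarith

/-- The affinity kernel of two families of transition matrices. -/
noncomputable def aff (P Q : ℤ → S → S → ℝ) : ℤ → S → S → ℝ := fun k s t => √(P k s t * Q k s t)

/-- The total affinity of the two Markov chains over `m` steps when started in `s` at time `k`. -/
noncomputable def tot (G : ℤ → S → S → ℝ) (m : ℕ) (k : ℤ) (s : S) : ℝ := ∑ u, trn G m k s u

lemma tot_zero (G : ℤ → S → S → ℝ) (k : ℤ) (s : S) : tot G 0 k s = 1 := by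
  classical simp [tot, trn]

lemma tot_succ (G : ℤ → S → S → ℝ) (m : ℕ) (k : ℤ) (s : S) :
    tot G (m + 1) k s = ∑ t, G k s t * tot G m (k + 1) t := by
  simp only [tot, trn]
  rw [Finset.sum_comm]
  simp_rw [Finset.mul_sum]

lemma tot_add (G : ℤ → S → S → ℝ) (m j : ℕ) (k : ℤ) (s : S) :
    tot G (m + j) k s = ∑ t, trn G m k s t * tot G j (k + m) t := by
  unfold tot
  simp_rw [trn_add, Finset.mul_sum]
  rw [Finset.sum_comm]

variable {G : ℤ → S → S → ℝ}

lemma tot_nonneg (hG : ∀ k s t, 0 ≤ G k s t) (m : ℕ) (k : ℤ) (s : S) : 0 ≤ tot G m k s :=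
  Finset.sum_nonneg fun t _ => trn_nonneg hG _ _ _ _

lemma tot_le_one (hG : ∀ k s t, 0 ≤ G k s t) (hG1 : ∀ k s, ∑ t, G k s t ≤ 1) (m : ℕ) (k : ℤ)
    (s : S) : tot G m k s ≤ 1 := by
  induction m generalizing k s with
  | zero => rw [tot_zero]
  | succ m ih =>
    rw [tot_succ]
    exact (Finset.sum_le_sum fun t _ => mul_le_of_le_one_right (hG _ _ _) (ih _ _)).trans (hG1 k s)

lemma tot_add_le (hG : ∀ k s t, 0 ≤ G k s t) (m j : ℕ) (k : ℤ) (s : S) {C : ℝ}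
    (hC : ∀ t, tot G j (k + m) t ≤ C) : tot G (m + j) k s ≤ tot G m k s * C := by
  rw [tot_add, tot, Finset.sum_mul]
  exact Finset.sum_le_sum fun t _ => mul_le_mul_of_nonneg_left (hC t) (trn_nonneg hG _ _ _ _)

/-- A deficient row reachable from `s` lowers the total affinity. -/
lemma tot_deficient (hG : ∀ k s t, 0 ≤ G k s t) (hG1 : ∀ k s, ∑ t, G k s t ≤ 1) (m j : ℕ) (k : ℤ)
    (s r : S) {κ τ : ℝ} (hκ : 0 ≤ κ) (hr : ∑ t, G (k + m) r t ≤ 1 - κ) (hτ : τ ≤ trn G m k s r) :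
    tot G (m + (1 + j)) k s ≤ 1 - τ * κ := by
  have h1 : ∀ t, tot G (1 + j) (k + m) t ≤ 1 := fun t => tot_le_one hG hG1 _ _ _
  have h2 : tot G (1 + j) (k + m) r ≤ 1 - κ := by
    rw [add_comm, tot_succ]
    exact (Finset.sum_le_sum fun t _ =>
      mul_le_of_le_one_right (hG _ _ _) (tot_le_one hG hG1 _ _ _)).trans hr
  rw [tot_add]
  have h3 : ∑ t, trn G m k s t * (1 - tot G (1 + j) (k + m) t) ≥ τ * κ := by
    calc τ * κ ≤ trn G m k s r * κ := mul_le_mul_of_nonneg_right hτ hκ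
      _ ≤ trn G m k s r * (1 - tot G (1 + j) (k + m) r) :=
        mul_le_mul_of_nonneg_left (by linarith) (trn_nonneg hG _ _ _ _)
      _ ≤ _ := Finset.single_le_sum
        (f := fun t => trn G m k s t * (1 - tot G (1 + j) (k + m) t))
        (fun t _ => mul_nonneg (trn_nonneg hG _ _ _ _) (by linarith [h1 t])) (Finset.mem_univ r)
  have h4 : tot G m k s ≤ 1 := tot_le_one hG hG1 m k s
  simp_rw [mul_sub, mul_one, Finset.sum_sub_distrib] at h3
  unfold tot at h3 h4 ⊢
  linarith

lemma tot_pow (hG : ∀ k s t, 0 ≤ G k s t) {ρ : ℝ} (hρ : 0 ≤ ρ) (ℓ N : ℕ) (k : ℤ)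
    (hw : ∀ i < N, ∀ s, tot G ℓ (k + ℓ * i) s ≤ ρ) (s : S) : tot G (ℓ * N) k s ≤ ρ ^ N := by
  induction N generalizing k s with
  | zero => simp [tot_zero]
  | succ N ih =>
    rw [show ℓ * (N + 1) = ℓ + ℓ * N by ring, pow_succ']
    refine (tot_add_le hG ℓ (ℓ * N) k s (C := ρ ^ N) fun t => ih _ (fun i hi s => ?_) t).trans ?_
    · have := hw (i + 1) (by omega) s
      push_cast at this
      rw [show k + ℓ + (ℓ : ℤ) * i = k + ℓ * (i + 1) by ring]
      exact this
    · refine mul_le_mul_of_nonneg_right ?_ (pow_nonneg hρ _)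
      simpa using hw 0 (by omega) s

variable [MeasurableSpace S] [MeasurableSingletonClass S]
  {μ : Measure (Seq S)} {A : S → S → Bool} {P : ℤ → S → S → ℝ} {π : ℤ → S → ℝ} {δ : ℝ} {M : ℕ}
  {c : ℤ → Seq S → ℝ}

lemma MC.Rs_eq_sum (h : MC μ A P π δ M) {m : ℕ} {w v : Seq S} (hs : Sw A 0 m w v) (k : ℤ) :
    Rs P m w v k = ∑ i ∈ Finset.range m, (Real.log (P (k + i) (v i) (v (i + 1)))
      - Real.log (P (k + i) (w i) (w (i + 1)))) := by
  have key : ∀ u : Seq S, Adm A 0 m u → Real.log (pr P k (k + m) (shiftZ (-k) u))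
      = ∑ i ∈ Finset.range m, Real.log (P (k + i) (u i) (u (i + 1))) := by
    intro u hu
    rw [← wt_eq_pr]
    refine Real.log_prod fun i hi => (lt_of_lt_of_le h.δpos (h.ge _ _ _ ?_)).ne'
    exact hu i (by omega) (by rw [Finset.mem_range] at hi; omega)
  unfold Rs RR
  rw [key v hs.adm_v, key w hs.adm_w, Finset.sum_sub_distrib]

/-- A difference between the gains at two sites is witnessed by a difference between transition
probabilities along one of the two blocks. -/
lemma MC.edge (h : MC μ A P π δ M) {m : ℕ} {w v : Seq S} (hs : Sw A 0 m w v) {η : ℝ} (hη : 0 < η)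
    {k k' : ℤ} (hR : η ≤ |Rs P m w v k - Rs P m w v k'|) :
    ∃ x : Seq S, Adm A 0 m x ∧ ∃ i < m,
      δ * η / (4 * (m + 1)) ≤ |P (k + i) (x i) (x (i + 1)) - P (k' + i) (x i) (x (i + 1))| := by
  by_contra hcon
  push Not at hcon
  have hδ := h.δpos
  have hlog : ∀ x : Seq S, Adm A 0 m x → ∀ i < m,
      |Real.log (P (k + i) (x i) (x (i + 1))) - Real.log (P (k' + i) (x i) (x (i + 1)))|
        ≤ η / (4 * (m + 1)) := by
    intro x hx i hi
    have hA := hx i (by omega) (by omega)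
    refine (abs_log_sub_le hδ (h.ge _ _ _ hA) (h.ge _ _ _ hA)).trans ?_
    rw [div_le_iff₀ hδ]
    exact (hcon x hx i hi).le.trans (le_of_eq (by ring))
  rw [h.Rs_eq_sum hs, h.Rs_eq_sum hs, ← Finset.sum_sub_distrib] at hR
  have h1 : |∑ i ∈ Finset.range m, ((Real.log (P (k + i) (v i) (v (i + 1)))
      - Real.log (P (k + i) (w i) (w (i + 1)))) - (Real.log (P (k' + i) (v i) (v (i + 1)))
      - Real.log (P (k' + i) (w i) (w (i + 1)))))| ≤ ∑ i ∈ Finset.range m, η / (2 * (m + 1)) := by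
    refine (Finset.abs_sum_le_sum_abs _ _).trans (Finset.sum_le_sum fun i hi => ?_)
    rw [Finset.mem_range] at hi
    have a1 := hlog v hs.adm_v i hi
    have a2 := hlog w hs.adm_w i hi
    have e : η / (2 * (m + 1)) = η / (4 * (m + 1)) + η / (4 * ((m : ℝ) + 1)) := by
      field_simp; norm_num
    rw [e]
    rw [abs_le] at a1 a2 ⊢
    constructor <;> linarith [a1.1, a1.2, a2.1, a2.2]
  rw [Finset.sum_const, Finset.card_range, nsmul_eq_mul] at h1
  have h2 : (m : ℝ) * (η / (2 * (m + 1))) < η := by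
    rw [mul_div_assoc', div_lt_iff₀ (by positivity)]
    nlinarith [Nat.cast_nonneg (α := ℝ) m]
  linarith

/-- Over a window containing a block with distinct gains the two chains lose affinity. -/
lemma MC.window (h : MC μ A P π δ M) {m : ℕ} {w v : Seq S} (hs : Sw A 0 m w v) {η : ℝ}
    (hη : 0 < η) {n k : ℤ}
    (hR : η ≤ |Rs P m w v (k + M) - Rs P m w v (k + M - n)|) (s : S) :
    tot (aff P fun i => P (i - n)) (M + m) k s
      ≤ 1 - δ ^ (M + m) * ((δ * η / (4 * (m + 1))) ^ 2 / 8) := by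
  have hδ := h.δpos
  obtain ⟨x, hx, i, hi, hd⟩ := h.edge hs hη hR
  set d := δ * η / (4 * ((m : ℝ) + 1)) with hdd
  have hd0 : 0 < d := by positivity
  set G := aff P fun i => P (i - n) with hGd
  have hG : ∀ k s t, 0 ≤ G k s t := fun k s t => Real.sqrt_nonneg _
  have hG1 : ∀ k s, ∑ t, G k s t ≤ 1 := fun k s =>
    row_le_one (fun t => h.nonneg _ _ _) (fun t => h.nonneg _ _ _) (h.sum_one _ _) (h.sum_one _ _)
  have hGge : ∀ k s t, A s t = true → δ ≤ G k s t := fun k s t hA => by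
    refine Real.le_sqrt_of_sq_le ?_
    rw [sq]
    exact mul_le_mul (h.ge _ _ _ hA) (h.ge _ _ _ hA) hδ.le (h.nonneg _ _ _)
  have hrow : ∑ t, G (k + (M + i : ℕ)) (x i) t ≤ 1 - d ^ 2 / 8 := by
    refine row_deficient (fun t => h.nonneg _ _ _) (fun t => h.nonneg _ _ _) (h.sum_one _ _)
      (h.sum_one _ _) hd0.le (t₀ := x (i + 1)) ?_
    push_cast
    rw [show k + ((M : ℤ) + i) = k + M + i by ring, show k + (M : ℤ) + i - n = k + M - n + i by ring]
    exact hd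
  -- a path of length `M` from `s` to the start of the block, followed by the block up to `i`
  have hτ : δ ^ (M + i) ≤ trn G (M + i) k s (x i) := by
    obtain ⟨p, hp0, hpM, hp⟩ := h.path s (x 0)
    have a1 := MarkovSFT.trn_path hG hGge hδ.le M k p hp
    have a2 := MarkovSFT.trn_path hG hGge hδ.le i (k + M) (fun j => x j) (fun j hj => by
      have := hx j (by omega) (by omega)
      push_cast
      exact this)
    rw [hp0, hpM] at a1
    simp only [Nat.cast_zero] at a2
    rw [trn_add, pow_add]
    calc δ ^ M * δ ^ i ≤ trn G M k s (x 0) * trn G i (k + M) (x 0) (x i) :=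
          mul_le_mul a1 a2 (by positivity) (MarkovSFT.trn_nonneg hG _ _ _ _)
      _ ≤ _ := Finset.single_le_sum (f := fun t => trn G M k s t * trn G i (k + M) t (x i))
        (fun t _ => mul_nonneg (MarkovSFT.trn_nonneg hG _ _ _ _) (MarkovSFT.trn_nonneg hG _ _ _ _))
        (Finset.mem_univ (x 0))
  have hτ' : δ ^ (M + m) ≤ trn G (M + i) k s (x i) :=
    (pow_le_pow_of_le_one hδ.le h.δ_le_one (by omega)).trans hτ
  have := tot_deficient hG hG1 (M + i) (m - i - 1) k s (x i) (by positivity) hrow hτ'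
  rwa [show M + i + (1 + (m - i - 1)) = M + m by omega] at this

lemma cyl_subset_iUnion (a b : ℤ) (y : Seq S) :
    cyl a b y ⊆ ⋃ t : S, cyl a (b + 1) (Function.update y (b + 1) t) := by
  intro x hx
  refine Set.mem_iUnion.2 ⟨x (b + 1), fun i h1 h2 => ?_⟩
  rcases eq_or_ne i (b + 1) with rfl | hne
  · rw [Function.update_self]
  · rw [Function.update_of_ne hne]
    exact hx i h1 (by omega)

lemma pr_update (P : ℤ → S → S → ℝ) {a b : ℤ} (hab : a ≤ b) (y : Seq S) (t : S) :
    pr P a (b + 1) (Function.update y (b + 1) t) = pr P a b y * P b (y b) t := by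
  rw [pr_split P hab (by omega : b ≤ b + 1)]
  congr 1
  · refine pr_congr P fun i h1 h2 => ?_
    rw [Function.update_of_ne (by omega)]
  · unfold pr
    rw [show Finset.Ico b (b + 1) = {b} by ext i; simp; omega, Finset.prod_singleton,
      Function.update_self, Function.update_of_ne (by omega)]

/-- The half-density of the `n`-th image of `μ` over a cylinder is bounded by the affinity of the
two chains after the cylinder. -/
lemma MC.half_density (h : MC μ A P π δ M) (hc : Coc μ c) (n : ℤ) {a : ℤ} (m : ℕ) (b : ℤ)
    (hab : a ≤ b) (y : Seq S) :
    ∫⁻ x in MarkovSFT.cyl a b y, ENNReal.ofReal (Real.exp (c n x / 2)) ∂μ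
      ≤ ENNReal.ofReal (√((π a (y a) * pr P a b y) *
          (π (a - n) (y a) * pr (fun i => P (i - n)) a b y)) *
          tot (aff P fun i => P (i - n)) m b (y b)) := by
  have hn := h.shift n
  induction m generalizing b y with
  | zero =>
    rw [tot_zero, mul_one]
    have hq := h.cyl a b y hab
    have hq' := hn.cyl a b y hab
    set q := π a (y a) * pr P a b y with hqd
    set q' := π (a - n) (y a) * pr (fun i => P (i - n)) a b y with hqd'
    have hq0 : 0 ≤ q := mul_nonneg (h.π_nonneg _ _) (h.pr_nonneg _ _ _)
    have hq0' : 0 ≤ q' := mul_nonneg (h.π_nonneg _ _) (hn.pr_nonneg _ _ _)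
    set C := MarkovSFT.cyl a b y with hC
    have hmexp : Measurable fun x => ENNReal.ofReal (Real.exp (c n x / 2)) :=
      ENNReal.measurable_ofReal.comp (Real.measurable_exp.comp ((hc.meas n).div_const 2))
    have hCS := ENNReal.lintegral_mul_le_Lp_mul_Lq (μ.restrict C)
      (Real.HolderConjugate.two_two) (f := fun x => ENNReal.ofReal (Real.exp (c n x / 2)))
      (g := fun _ => 1) hmexp.aemeasurable aemeasurable_const
    simp only [Pi.mul_apply, mul_one, ENNReal.one_rpow, lintegral_const, one_mul,
      Measure.restrict_apply MeasurableSet.univ, Set.univ_inter] at hCS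
    have e1 : ∫⁻ x in C, ENNReal.ofReal (Real.exp (c n x / 2)) ^ (2 : ℝ) ∂μ = ENNReal.ofReal q' := by
      rw [← hq', hc.map_eq n, withDensity_apply _ (measurableSet_cyl _ _ _)]
      refine lintegral_congr fun x => ?_
      rw [ENNReal.ofReal_rpow_of_pos (Real.exp_pos _), ← Real.exp_mul]
      congr 2; ring
    rw [e1, hq] at hCS
    refine hCS.trans (le_of_eq ?_)
    rw [mul_comm q q', Real.sqrt_mul hq0', ENNReal.ofReal_mul (Real.sqrt_nonneg _),
      ENNReal.ofReal_rpow_of_nonneg hq0' (by norm_num),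
      ENNReal.ofReal_rpow_of_nonneg hq0 (by norm_num), Real.sqrt_eq_rpow, Real.sqrt_eq_rpow]
  | succ m ih =>
    calc ∫⁻ x in MarkovSFT.cyl a b y, ENNReal.ofReal (Real.exp (c n x / 2)) ∂μ
        ≤ ∫⁻ x in ⋃ t : S, MarkovSFT.cyl a (b + 1) (Function.update y (b + 1) t),
            ENNReal.ofReal (Real.exp (c n x / 2)) ∂μ := lintegral_mono_set (cyl_subset_iUnion a b y)
      _ ≤ ∑ t : S, ∫⁻ x in MarkovSFT.cyl a (b + 1) (Function.update y (b + 1) t),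
            ENNReal.ofReal (Real.exp (c n x / 2)) ∂μ := by
          rw [← tsum_fintype (L := .unconditional S)]
          exact lintegral_iUnion_le _ _
      _ ≤ ∑ t : S, ENNReal.ofReal (√((π a (y a) * pr P a b y) *
          (π (a - n) (y a) * pr (fun i => P (i - n)) a b y)) *
          (aff P (fun i => P (i - n)) b (y b) t * tot (aff P fun i => P (i - n)) m (b + 1) t)) := by
          refine Finset.sum_le_sum fun t _ => (ih (b + 1) (by omega) _).trans (le_of_eq ?_)
          rw [pr_update P hab, pr_update (fun i => P (i - n)) hab, Function.update_self,
            Function.update_of_ne (by omega : a ≠ b + 1)]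
          congr 1
          unfold aff
          rw [← mul_assoc (√_) (√_) _, ← Real.sqrt_mul (mul_nonneg (mul_nonneg (h.π_nonneg _ _) (h.pr_nonneg _ _ _))
            (mul_nonneg (h.π_nonneg _ _) (hn.pr_nonneg _ _ _)))]
          congr 2
          ring
      _ = _ := by
          rw [← ENNReal.ofReal_sum_of_nonneg, ← Finset.mul_sum, tot_succ]
          intro t _
          exact mul_nonneg (Real.sqrt_nonneg _) (mul_nonneg (Real.sqrt_nonneg _)
            (tot_nonneg (fun _ _ _ => Real.sqrt_nonneg _) _ _ _))

lemma MC.half_density_univ (h : MC μ A P π δ M) (hc : Coc μ c) (n a : ℤ) (m : ℕ) {C : ℝ}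
    (hC : ∀ s, tot (aff P fun i => P (i - n)) m a s ≤ C) :
    ∫⁻ x, ENNReal.ofReal (Real.exp (c n x / 2)) ∂μ ≤ Fintype.card S * ENNReal.ofReal C := by
  have hn := h.shift n
  have hu : (Set.univ : Set (Seq S)) = ⋃ s : S, MarkovSFT.cyl a a (fun _ => s) := by
    symm
    refine Set.eq_univ_of_forall fun x => Set.mem_iUnion.2 ⟨x a, fun i h1 h2 => ?_⟩
    rw [show i = a by omega]
  rw [← setLIntegral_univ, hu]
  refine (lintegral_iUnion_le _ _).trans ?_
  rw [tsum_fintype]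
  refine (Finset.sum_le_card_nsmul Finset.univ _ (ENNReal.ofReal C) fun s _ => ?_).trans
    (le_of_eq (by rw [nsmul_eq_mul, Finset.card_univ]))
  refine (h.half_density hc n m a le_rfl _).trans (ENNReal.ofReal_le_ofReal ?_)
  rw [pr_self, pr_self, mul_one, mul_one]
  refine (mul_le_of_le_one_left (tot_nonneg (fun _ _ _ => Real.sqrt_nonneg _) _ _ _) ?_).trans (hC s)
  rw [Real.sqrt_le_one]
  exact mul_le_one₀ (h.π_le_one _ _) (h.π_nonneg _ _) (h.π_le_one _ _)

/-- If the gains have limits at both ends, then the limits agree: otherwise the total affinity of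
`μ` and its `n`-th image decays exponentially and the cocycle tends to `-∞`. -/
lemma MC.limits_eq (h : MC μ A P π δ M) (hc : Coc μ c)
    (hrec : ∀ᵐ x ∂μ, ∃ k : ℝ, ∃ᶠ n : ℕ in atTop, |c n x| ≤ k) {m : ℕ} {w v : Seq S}
    (hs : Sw A 0 m w v) {γ γ' : ℝ} (hp : Tendsto (fun n : ℕ => Rs P m w v n) atTop (𝓝 γ))
    (hm : Tendsto (fun n : ℕ => Rs P m w v (-n)) atTop (𝓝 γ')) : γ = γ' := by
  have := h.prob
  by_contra hne
  have hδ := h.δpos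
  set η := |γ - γ'| / 2 with hηd
  have hη : 0 < η := by
    have := abs_pos.2 (sub_ne_zero.2 hne)
    positivity
  obtain ⟨K, hK⟩ : ∃ K : ℕ, ∀ i ≥ K, |Rs P m w v i - γ| < η / 2 ∧ |Rs P m w v (-i) - γ'| < η / 2 := by
    have h1 := Metric.tendsto_nhds.1 hp (η / 2) (by positivity)
    have h2 := Metric.tendsto_nhds.1 hm (η / 2) (by positivity)
    obtain ⟨K, hK⟩ := eventually_atTop.1 (h1.and h2)
    refine ⟨K, fun i hi => ?_⟩
    have := hK i hi
    rwa [Real.dist_eq, Real.dist_eq] at this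
  have hgap : ∀ i j : ℤ, (K : ℤ) ≤ i → j ≤ -K → η ≤ |Rs P m w v i - Rs P m w v j| := by
    intro i j hi hj
    have h1 := (hK i.toNat (by omega)).1
    have h2 := (hK (-j).toNat (by omega)).2
    rw [Int.toNat_of_nonneg (by omega)] at h1
    rw [Int.toNat_of_nonneg (by omega), neg_neg] at h2
    have h3 := abs_sub_le γ (Rs P m w v i) γ'
    have h4 := abs_sub_le (Rs P m w v i) (Rs P m w v j) γ'
    rw [abs_sub_comm] at h1
    have : |γ - γ'| = 2 * η := by rw [hηd]; ring
    linarith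
  set ℓ := M + m with hℓ
  have hℓ0 : ℓ ≠ 0 := by have := h.Mpos; omega
  set ρ := 1 - δ ^ ℓ * ((δ * η / (4 * ((m : ℝ) + 1))) ^ 2 / 8) with hρd
  have hρ1 : ρ < 1 := by
    have : 0 < δ ^ ℓ * ((δ * η / (4 * ((m : ℝ) + 1))) ^ 2 / 8) := by positivity
    linarith
  have hwin : ∀ n k : ℤ, (K : ℤ) ≤ k → k + ℓ ≤ n - K → ∀ s,
      tot (aff P fun i => P (i - n)) ℓ k s ≤ ρ := fun n k h1 h2 s =>
    h.window hs hη (hgap _ _ (by omega) (by omega)) s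
  have hρ0 : 0 ≤ ρ := by
    obtain ⟨s⟩ := h.nonempty
    exact (tot_nonneg (fun _ _ _ => Real.sqrt_nonneg _) _ _ s).trans
      (hwin (2 * K + ℓ) K le_rfl (by omega) s)
  -- a geometric rate per unit of time
  obtain ⟨σ, hσ0, hσ1, hσρ⟩ : ∃ σ : ℝ, 0 ≤ σ ∧ σ < 1 ∧ σ ^ ℓ = ρ :=
    ⟨ρ ^ ((ℓ : ℝ)⁻¹), Real.rpow_nonneg hρ0 _, Real.rpow_lt_one hρ0 hρ1 (by positivity),
      Real.rpow_inv_natCast_pow hρ0 hℓ0⟩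
  have hbound : ∀ n : ℕ, ∫⁻ x, ENNReal.ofReal (Real.exp (c ((n + (2 * K + ℓ) : ℕ) : ℤ) x / 2)) ∂μ
      ≤ Fintype.card S * ENNReal.ofReal (σ ^ n) := by
    intro n
    set N := (n + ℓ) / ℓ with hN
    have hN1 : ℓ * N ≤ n + ℓ := Nat.mul_div_le _ _
    have hN2 : n ≤ ℓ * N := by
      have := Nat.lt_mul_div_succ (n + ℓ) (Nat.pos_of_ne_zero hℓ0)
      rw [← hN, mul_add, mul_one] at this
      omega
    refine h.half_density_univ hc _ K (ℓ * N) fun s => ?_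
    refine (tot_pow (fun _ _ _ => Real.sqrt_nonneg _) hρ0 ℓ N K (fun i hi s => ?_) s).trans ?_
    · have h1 : ℓ * (i + 1) ≤ ℓ * N := Nat.mul_le_mul_left ℓ hi
      have h2 : (ℓ : ℤ) * i + ℓ ≤ n + ℓ := by exact_mod_cast (by linarith : ℓ * i + ℓ ≤ n + ℓ)
      have h3 : (0 : ℤ) ≤ (ℓ : ℤ) * i := by positivity
      refine hwin _ _ (by omega) ?_ s
      push_cast
      omega
    · rw [← hσρ, ← pow_mul]
      exact pow_le_pow_of_le_one hσ0 hσ1.le hN2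
  have hmeas : ∀ n : ℤ, Measurable fun x => ENNReal.ofReal (Real.exp (c n x / 2)) := fun n =>
    ENNReal.measurable_ofReal.comp (Real.measurable_exp.comp ((hc.meas n).div_const 2))
  have hsum : ∫⁻ x, ∑' n : ℕ, ENNReal.ofReal (Real.exp (c ((n + (2 * K + ℓ) : ℕ) : ℤ) x / 2)) ∂μ
      ≠ ⊤ := by
    rw [lintegral_tsum fun n => (hmeas _).aemeasurable]
    refine ne_top_of_le_ne_top ?_ (ENNReal.tsum_le_tsum hbound)
    rw [ENNReal.tsum_mul_left]
    refine ENNReal.mul_ne_top (ENNReal.natCast_ne_top _) ?_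
    exact (summable_geometric_of_lt_one hσ0 hσ1).tsum_ofReal_ne_top
  have hfin := ae_lt_top (Measurable.ennreal_tsum fun n => hmeas _) hsum
  obtain ⟨x, hx1, k, hk⟩ := (hfin.and hrec).exists
  have h0 := ENNReal.tendsto_atTop_zero_of_tsum_ne_top hx1.ne
  have h1 := h0.eventually (gt_mem_nhds (show (0 : ENNReal) < ENNReal.ofReal (Real.exp (-k / 2)) from
    ENNReal.ofReal_pos.2 (Real.exp_pos _)))
  obtain ⟨N₀, hN₀⟩ := eventually_atTop.1 h1
  obtain ⟨n, hn, hnk⟩ := frequently_atTop.1 hk (N₀ + (2 * K + ℓ))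
  have h2 := hN₀ (n - (2 * K + ℓ)) (by omega)
  rw [Nat.sub_add_cancel (by omega)] at h2
  have h3 := (ENNReal.ofReal_lt_ofReal_iff (Real.exp_pos _)).1 h2
  have h4 := Real.exp_lt_exp.1 h3
  linarith [(abs_le.1 hnk).1]

end TwoEnds

/-! ### Ergodicity and the ratio set -/

section Conclusion

variable {S : Type*} [Fintype S] [MeasurableSpace S] [MeasurableSingletonClass S]
  {μ : Measure (Seq S)} {A : S → S → Bool} {P : ℤ → S → S → ℝ} {π : ℤ → S → ℝ} {δ : ℝ} {M : ℕ}
  {c : ℤ → Seq S → ℝ}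

lemma tendsto_natCast_cofinite : Tendsto (fun n : ℕ => (n : ℤ)) atTop cofinite := by
  rw [← Nat.cofinite_eq_atTop]
  exact Nat.cast_injective.tendsto_cofinite

lemma tendsto_neg_natCast_cofinite : Tendsto (fun n : ℕ => -(n : ℤ)) atTop cofinite := by
  rw [← Nat.cofinite_eq_atTop]
  exact (neg_injective.comp Nat.cast_injective).tendsto_cofinite

/-- If the transition matrices have no common limit, then the gains of some swap oscillate. -/
lemma MC.exists_interval (h : MC μ A P π δ M) (hc : Coc μ c)
    (hrec : ∀ᵐ x ∂μ, ∃ k : ℝ, ∃ᶠ n : ℕ in atTop, |c n x| ≤ k)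
    (hdiv : ¬ ∃ Q : S → S → ℝ,
        Tendsto (fun n : ℕ => P (n : ℤ)) atTop (𝓝 Q) ∧
        Tendsto (fun n : ℕ => P (-(n : ℤ))) atTop (𝓝 Q)) :
    ∃ (m : ℕ) (w v : Seq S), Sw A 0 m w v ∧ ∃ α β : ℝ, α < β ∧
      ∀ r ∈ Set.Icc α β, ∀ ε > 0, ∃ᶠ a : ℤ in cofinite, |Rs P m w v a - r| < ε := by
  have hex : ∃ (m : ℕ) (w v : Seq S), Sw A 0 m w v ∧
      ¬ ∃ l, Tendsto (Rs P m w v) cofinite (𝓝 l) := by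
    by_contra hcon
    push Not at hcon
    obtain ⟨Q, hQ⟩ := h.tendsto_of_gains hcon
    exact hdiv ⟨Q, hQ.comp tendsto_natCast_cofinite, hQ.comp tendsto_neg_natCast_cofinite⟩
  obtain ⟨m, w, v, hs, hnot⟩ := hex
  refine ⟨m, w, v, hs, ?_⟩
  have hslow := h.slow hc hs
  by_cases hp : ∃ l, Tendsto (fun n : ℕ => Rs P m w v n) atTop (𝓝 l)
  · by_cases hm : ∃ l, Tendsto (fun n : ℕ => Rs P m w v (-n)) atTop (𝓝 l)
    · obtain ⟨γ, hγ⟩ := hp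
      obtain ⟨γ', hγ'⟩ := hm
      obtain rfl := h.limits_eq hc hrec hs hγ hγ'
      refine absurd ⟨γ, ?_⟩ hnot
      rw [Int.cofinite_eq, tendsto_sup]
      constructor
      · have h1 : Tendsto (fun z : ℤ => Rs P m w v (-z)) atTop (𝓝 γ) := by
          rw [← Nat.map_cast_int_atTop, tendsto_map'_iff]
          exact hγ'
        have h2 := h1.comp tendsto_neg_atBot_atTop
        refine h2.congr fun z => ?_
        simp
      · rw [← Nat.map_cast_int_atTop, tendsto_map'_iff]
        exact hγ
    · obtain ⟨α, β, hαβ, hcl⟩ := exists_cluster_interval (fun n => h.Rs_bdd hs _) (by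
        refine (hslow.comp tendsto_neg_natCast_cofinite).congr fun n => ?_
        simp only [Function.comp]
        push_cast
        rw [show -(n : ℤ) - 1 = -(n + 1) by ring]) hm
      exact ⟨α, β, hαβ, fun r hr ε hε => tendsto_neg_natCast_cofinite.frequently (hcl r hr ε hε)⟩
  · obtain ⟨α, β, hαβ, hcl⟩ := exists_cluster_interval (fun n => h.Rs_bdd hs _) (by
      have h1 := ((hslow.comp tendsto_natCast_cofinite).comp (tendsto_add_atTop_nat 1)).neg
      rw [neg_zero] at h1
      refine h1.congr fun n => ?_
      simp only [Function.comp]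
      push_cast
      rw [show (n : ℤ) + 1 - 1 = n by ring]
      ring) hp
    exact ⟨α, β, hαβ, fun r hr ε hε => tendsto_natCast_cofinite.frequently (hcl r hr ε hε)⟩

lemma MC.preErgodic (h : MC μ A P π δ M) (hc : Coc μ c)
    (hrec : ∀ᵐ x ∂μ, ∃ k : ℝ, ∃ᶠ n : ℕ in atTop, |c n x| ≤ k) :
    PreErgodic (shiftMap (S := S)) μ := by
  refine ⟨fun B hB hinvB => ?_⟩
  set F : Seq S × ℝ → ℝ := fun z => B.indicator (fun _ => (1 : ℝ)) z.1 with hFd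
  have hF : Obs 0 F :=
    { meas := (measurable_const.indicator hB).comp measurable_fst
      nonneg := fun z => Set.indicator_nonneg (fun _ _ => zero_le_one) _
      le_one := fun z => Set.indicator_le_self' (fun _ _ => zero_le_one) _
      lip := fun x s t => by simp [hFd] }
  have hinv : ∀ z, F (Tz c 1 z) = F z := by
    intro z
    have hm : shiftZ 1 z.1 ∈ B ↔ z.1 ∈ B := by
      constructor
      · intro hz; rw [← hinvB]; exact hz
      · intro hz; rw [← hinvB] at hz; exact hz
    change B.indicator (fun _ => (1 : ℝ)) (shiftZ 1 z.1) = B.indicator (fun _ => (1 : ℝ)) z.1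
    by_cases hz : z.1 ∈ B
    · rw [Set.indicator_of_mem hz, Set.indicator_of_mem (hm.2 hz)]
    · rw [Set.indicator_of_notMem hz, Set.indicator_of_notMem (mt hm.1 hz)]
  have htriv := h.trivial_of_site_inv hB fun b w v hs a => by
    obtain ⟨c₀, hstar⟩ := h.star hc hrec le_rfl hF hinv hs
    filter_upwards [hstar a] with x hx hxm hxB
    have h1 := hx hxm 0
    simp only [hFd] at h1
    rw [Set.indicator_of_mem hxB] at h1
    by_contra hn
    rw [Set.indicator_of_notMem hn] at h1
    exact zero_ne_one h1
  rw [eventuallyConst_set']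
  rcases htriv with h0 | h0
  · exact Or.inl (ae_eq_empty.2 h0)
  · exact Or.inr (ae_eq_univ.2 h0)

/-- A tent function of height `1`, supported in `[-1/k, 1/k]` for `k > 0`. -/
noncomputable def tent (k u : ℝ) : ℝ := max 0 (1 - k * |u|)

lemma tent_nonneg (k u : ℝ) : 0 ≤ tent k u := le_max_left _ _

lemma tent_le_one {k : ℝ} (hk : 0 ≤ k) (u : ℝ) : tent k u ≤ 1 :=
  max_le zero_le_one (by have := mul_nonneg hk (abs_nonneg u); linarith)

lemma tent_lip {k : ℝ} (hk : 0 ≤ k) (u u' : ℝ) : |tent k u - tent k u'| ≤ k * |u - u'| := by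
  unfold tent
  rw [max_comm 0, max_comm 0]
  refine (abs_max_sub_max_le_abs (1 - k * |u|) (1 - k * |u'|) 0).trans ?_
  rw [show 1 - k * |u| - (1 - k * |u'|) = k * (|u'| - |u|) by ring, abs_mul, abs_of_nonneg hk]
  refine mul_le_mul_of_nonneg_left ?_ hk
  rw [abs_sub_comm u u']
  exact abs_abs_sub_abs_le _ _

lemma measurable_tent (k : ℝ) : Measurable (tent k) := by
  unfold tent
  exact measurable_const.max (measurable_const.sub (measurable_const.mul measurable_id.abs))

/-- The best match at `(x, t)`, over the orbit of `x`, of a visit to `E` with cocycle value close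
to `t`: it is positive exactly when `Tⁿ x ∈ E` and `k * |t - cₙ(x)| < 1` for some `n`. -/
noncomputable def bestMatch (c : ℤ → Seq S → ℝ) (E : Set (Seq S)) (k : ℝ) (z : Seq S × ℝ) : ℝ :=
  ⨆ n : ℤ, E.indicator (fun _ => (1 : ℝ)) (shiftZ n z.1) * tent k (z.2 - c n z.1)

lemma bestMatch_term_nonneg (E : Set (Seq S)) (k : ℝ) (z : Seq S × ℝ) (n : ℤ) :
    0 ≤ E.indicator (fun _ => (1 : ℝ)) (shiftZ n z.1) * tent k (z.2 - c n z.1) :=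
  mul_nonneg (Set.indicator_nonneg (fun _ _ => zero_le_one) _) (tent_nonneg _ _)

lemma bestMatch_term_le {k : ℝ} (hk : 0 ≤ k) (E : Set (Seq S)) (z : Seq S × ℝ) (n : ℤ) :
    E.indicator (fun _ => (1 : ℝ)) (shiftZ n z.1) * tent k (z.2 - c n z.1) ≤ 1 :=
  mul_le_one₀ (Set.indicator_le_self' (fun _ _ => zero_le_one) _) (tent_nonneg _ _)
    (tent_le_one hk _)

lemma bestMatch_bdd {k : ℝ} (hk : 0 ≤ k) (E : Set (Seq S)) (z : Seq S × ℝ) :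
    BddAbove (Set.range fun n : ℤ =>
      E.indicator (fun _ => (1 : ℝ)) (shiftZ n z.1) * tent k (z.2 - c n z.1)) :=
  ⟨1, by rintro _ ⟨n, rfl⟩; exact bestMatch_term_le hk E z n⟩

lemma bestMatch_obs (hc : Coc μ c) {k : ℝ} (hk : 0 ≤ k) {E : Set (Seq S)} (hE : MeasurableSet E) :
    Obs k (bestMatch c E k) where
  meas := by
    refine Measurable.iSup fun n => Measurable.mul ?_ ?_
    · exact (show Measurable fun z : Seq S × ℝ => E.indicator (fun _ => (1 : ℝ)) (shiftZ n z.1) from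
        (measurable_const.indicator hE).comp ((measurable_shiftZ n).comp measurable_fst))
    · exact (measurable_tent k).comp
        (measurable_snd.sub ((hc.meas n).comp measurable_fst))
  nonneg := fun z => Real.iSup_nonneg (bestMatch_term_nonneg E k z)
  le_one := fun z => ciSup_le (bestMatch_term_le hk E z)
  lip := by
    have key : ∀ x s t, bestMatch c E k (x, s) ≤ bestMatch c E k (x, t) + k * |s - t| := by
      intro x s t
      refine ciSup_le fun n => ?_
      have h1 := le_ciSup (bestMatch_bdd (c := c) hk E (x, t)) n
      have h2 := (abs_le.1 (tent_lip hk (s - c n x) (t - c n x))).2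
      rw [show s - c n x - (t - c n x) = s - t by ring] at h2
      unfold bestMatch
      refine le_trans ?_ (add_le_add_left h1 _)
      simp only
      by_cases hx : shiftZ n x ∈ E
      · simp only [Set.indicator_of_mem hx, one_mul]; linarith
      · simp only [Set.indicator_of_notMem hx, zero_mul, zero_add]; positivity
    intro x s t
    refine abs_sub_le_iff.2 ⟨by linarith [key x s t], ?_⟩
    have := key x t s
    rw [abs_sub_comm] at this
    linarith

lemma bestMatch_inv (hc : Coc μ c) (E : Set (Seq S)) (k : ℝ) (z : Seq S × ℝ) :
    bestMatch c E k (Tz c 1 z) = bestMatch c E k z := by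
  unfold bestMatch
  refine Eq.trans ?_ ((Equiv.addLeft (1 : ℤ)).iSup_comp (g := fun n =>
    E.indicator (fun _ => (1 : ℝ)) (shiftZ n z.1) * tent k (z.2 - c n z.1)))
  refine iSup_congr fun n => ?_
  simp only [Tz, Equiv.coe_addLeft]
  rw [shiftZ_add, hc.add 1 n, add_comm n 1, sub_sub]

/-- Powers of the shift as elements of the pseudo full-group. -/
noncomputable def Coc.pfg (hc : Coc μ c) (n : ℤ) : PFG μ where
  dom := Set.univ
  toFun := shiftZ n
  logDeriv := c n
  meas_dom := MeasurableSet.univ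
  meas_toFun := measurable_shiftZ n
  meas_logDeriv := hc.meas n
  injOn := fun x _ y _ hxy => by
    have := congrArg (shiftZ (-n)) hxy
    rwa [shiftZ_add, shiftZ_add, neg_add_cancel, shiftZ_zero, shiftZ_zero] at this
  orbit := ae_of_all _ fun x => ⟨n, rfl⟩
  deriv_spec := fun E _ hE => by
    have himg : shiftZ n '' E = shiftZ (-n) ⁻¹' E := by
      ext y
      constructor
      · rintro ⟨x, hx, rfl⟩
        rwa [Set.mem_preimage, shiftZ_add, neg_add_cancel, shiftZ_zero]
      · intro hy
        exact ⟨shiftZ (-n) y, hy, by rw [shiftZ_add, add_neg_cancel, shiftZ_zero]⟩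
    rw [himg, ← Measure.map_apply (measurable_shiftZ (-n)) hE, hc.map_eq n, withDensity_apply _ hE]

lemma MC.essential (h : MC μ A P π δ M) (hc : Coc μ c)
    (hrec : ∀ᵐ x ∂μ, ∃ k : ℝ, ∃ᶠ n : ℕ in atTop, |c n x| ≤ k)
    (hdiv : ¬ ∃ Q : S → S → ℝ,
        Tendsto (fun n : ℕ => P (n : ℤ)) atTop (𝓝 Q) ∧
        Tendsto (fun n : ℕ => P (-(n : ℤ))) atTop (𝓝 Q)) (r : ℝ) : IsEssentialValue μ r := by
  intro E hE hEpos ε hε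
  obtain ⟨m, w, v, hs, α, β, hαβ, hcl⟩ := h.exists_interval hc hrec hdiv
  have hk : 0 ≤ 1 / ε := by positivity
  have hconst := h.const_of_interval hc hrec hk (bestMatch_obs hc hk hE) (bestMatch_inv hc E _) hs hαβ hcl
  suffices hn : ∃ n : ℤ, μ (E ∩ (shiftZ n ⁻¹' E ∩ {x | |c n x - r| < ε})) ≠ 0 by
    obtain ⟨n, hn⟩ := hn
    refine ⟨hc.pfg n, ?_⟩
    have : E ∩ (hc.pfg n).dom ∩ (hc.pfg n).toFun ⁻¹' E ∩ {x | |(hc.pfg n).logDeriv x - r| < ε}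
        = E ∩ (shiftZ n ⁻¹' E ∩ {x | |c n x - r| < ε}) := by
      simp only [Coc.pfg, Set.inter_univ, Set.inter_assoc]
    rw [this]
    exact pos_iff_ne_zero.2 hn
  by_contra hcon
  push Not at hcon
  have h0 := measure_iUnion_null hcon
  refine hEpos.ne' (le_antisymm ((measure_mono_ae ?_).trans h0.le) zero_le)
  filter_upwards [hconst] with x hx hxE
  -- the identity return shows that the constant fibre value is `1`
  have h1 : 1 ≤ bestMatch c E (1 / ε) (x, 0) := by
    refine le_trans (le_of_eq ?_) (le_ciSup (bestMatch_bdd (c := c) hk E (x, 0)) 0)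
    simp only [shiftZ_zero, hc.zero]
    rw [Set.indicator_of_mem hxE]
    simp [tent]
  rw [← hx r] at h1
  obtain ⟨n, hn⟩ := exists_lt_of_lt_ciSup (lt_of_lt_of_le zero_lt_one h1)
  simp only at hn
  have hnE : shiftZ n x ∈ E := by
    by_contra hne
    rw [Set.indicator_of_notMem hne, zero_mul] at hn
    exact lt_irrefl _ hn
  rw [Set.indicator_of_mem hnE, one_mul, tent, lt_max_iff] at hn
  have hn' := hn.resolve_left (lt_irrefl _)
  refine Set.mem_iUnion.2 ⟨n, hxE, hnE, ?_⟩
  show |c n x - r| < ε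
  rw [abs_sub_comm]
  rw [sub_pos, one_div, inv_mul_lt_iff₀ hε, mul_one] at hn'
  exact hn'

end Conclusion

/-- **Theorem B (divergent scenario).**
For a topologically mixing Markov SFT with the Doeblin condition, if the shift is
nonsingular and conservative with respect to `μ` and the limit `lim_{|n|→∞} P_n`
does not exist, then the shift is of Krieger type III₁: it is ergodic and its
ratio set is all of `ℝ`. -/
theorem typeIII_one_of_divergent
    {S : Type*} [Fintype S] [MeasurableSpace S] [MeasurableSingletonClass S]
    (A : S → S → Bool) (hA : IsPrimitive A)
    (P : ℤ → S → S → ℝ) (π : ℤ → S → ℝ) (μ : Measure (Seq S))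
    (hμ : IsMarkovMeasure μ A P π) (hD : Doeblin A P)
    (hns : ShiftNonsingular μ) (hcons : ShiftConservative μ)
    (hdiv : ¬ ∃ Q : S → S → ℝ,
        Tendsto (fun n : ℕ => P (n : ℤ)) atTop (𝓝 Q) ∧
        Tendsto (fun n : ℕ => P (-(n : ℤ))) atTop (𝓝 Q)) :
    PreErgodic (shiftMap (S := S)) μ ∧ ∀ r : ℝ, IsEssentialValue μ r := by
  obtain ⟨δ, M, h⟩ := MC.of_isMarkov hA hμ hD
  have := h.prob
  obtain ⟨c, hc⟩ := exists_coc hns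
  have hrec := hc.recurrent hcons
  exact ⟨h.preErgodic hc hrec, h.essential hc hrec hdiv⟩

end MarkovSFT
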